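/- arXiv:2506.05194 — 3 statements merged into one kernel-verified Lean document; each statement's English description precedes it below -/
import Mathlib

section
/- Let d and k be integers with 2 ≤ k and 2k + 2 < d (i.e. k < d/2 − 1). Set s = ⌊d/(2k)⌋ and β = d/(2k) − s. Then for every δ > 0 there exists N₀ such that for every integer N ≥ N₀ with 2k ∣ N·d and every set A ⊆ {1,…,N} with |A| = β·N, the number of d-regular simple graphs on the vertex set {1,…,N} that admit a k-star decomposition with exactly s+1 stars centered at every vertex in A and exactly s stars centered at every vertex not in A is at least (1−δ) times the total number of d-regular simple graphs on {1,…,N}. -/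
/-- A graph is `d`-regular: every vertex has exactly `d` neighbors. -/
def IsRegularGraph {V : Type*} (G : SimpleGraph V) (d : ℕ) : Prop :=
  ∀ v, (G.neighborSet v).ncard = d

/-- `G` has a decomposition of its edge set into `k`-stars with exactly `m v`
stars centered at each vertex `v`.  A star is recorded as a pair `(center, edges)`. -/
def HasStarDecomp {V : Type*} [DecidableEq V] (G : SimpleGraph V) (k : ℕ)
    (m : V → ℕ) : Prop :=
  ∃ S : Finset (V × Finset (Sym2 V)),
    (∀ p ∈ S, p.2.card = k ∧ (↑p.2 : Set (Sym2 V)) ⊆ G.edgeSet ∧ ∀ e ∈ p.2, p.1 ∈ e) ∧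
    (∀ e ∈ G.edgeSet, ∃! p, p ∈ S ∧ e ∈ p.2) ∧
    (∀ v, (S.filter fun p => p.1 = v).card = m v)

section Hall

variable {V : Type*} [Fintype V] [DecidableEq V]

/-- An assignment of edges to slots `(v, i, j)`, with `v` an endpoint, gives a star decomposition. -/
lemma HasStarDecomp.of_bijective {G : SimpleGraph V} {k : ℕ} (hk : 0 < k) {m : V → ℕ}
    (f : G.edgeSet → Σ v : V, Fin (m v) × Fin k) (hf : Function.Bijective f)
    (hmem : ∀ e : G.edgeSet, (f e).1 ∈ (e : Sym2 V)) : HasStarDecomp G k m := by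
  classical
  let F := Equiv.ofBijective f hf
  let P : (Σ v : V, Fin (m v)) → V × Finset (Sym2 V) := fun c =>
    (c.1, Finset.univ.image fun j : Fin k => (F.symm ⟨c.1, c.2, j⟩ : Sym2 V))
  have hP : ∀ c e, e ∈ (P c).2 ↔ ∃ j, (F.symm ⟨c.1, c.2, j⟩ : Sym2 V) = e := by
    intro c e; simp [P]
  have hPF : ∀ c (e : G.edgeSet), (e : Sym2 V) ∈ (P c).2 ↔ c = ⟨(F e).1, (F e).2.1⟩ := by
    intro c e
    rw [hP]
    constructor
    · rintro ⟨j, hj⟩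
      rw [← Subtype.ext hj, Equiv.apply_symm_apply]
    · rintro rfl
      exact ⟨(F e).2.2, by simp⟩
  have hinj : Function.Injective P := by
    intro c c' h
    have := (hPF c (F.symm ⟨c.1, c.2, ⟨0, hk⟩⟩)).2 (by rw [Equiv.apply_symm_apply])
    rw [h, hPF, Equiv.apply_symm_apply] at this
    exact this.symm
  refine ⟨Finset.univ.image P, ?_, ?_, ?_⟩
  · intro p hp
    obtain ⟨c, -, rfl⟩ := Finset.mem_image.1 hp
    refine ⟨?_, ?_, ?_⟩
    · rw [Finset.card_image_of_injective, Finset.card_fin]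
      intro j j' h
      have := F.symm.injective (Subtype.ext h)
      simpa using this
    · intro e he
      obtain ⟨j, rfl⟩ := (hP c e).1 he
      exact Subtype.property _
    · intro e he
      obtain ⟨j, rfl⟩ := (hP c e).1 he
      have := hmem (F.symm ⟨c.1, c.2, j⟩)
      have h2 : f (F.symm ⟨c.1, c.2, j⟩) = ⟨c.1, c.2, j⟩ := F.apply_symm_apply _
      rwa [h2] at this
  · intro e he
    refine ⟨P ⟨(F ⟨e, he⟩).1, (F ⟨e, he⟩).2.1⟩, ⟨Finset.mem_image_of_mem _ (Finset.mem_univ _),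
      (hPF _ ⟨e, he⟩).2 rfl⟩, ?_⟩
    rintro p ⟨hp, hep⟩
    obtain ⟨c, -, rfl⟩ := Finset.mem_image.1 hp
    rw [(hPF c ⟨e, he⟩).1 hep]
  · intro v
    have : (Finset.univ.image P).filter (fun p => p.1 = v) =
        Finset.univ.image fun i : Fin (m v) => P ⟨v, i⟩ := by
      ext p
      simp only [Finset.mem_filter, Finset.mem_image, Finset.mem_univ, true_and]
      constructor
      · rintro ⟨⟨⟨v', i⟩, rfl⟩, rfl⟩
        exact ⟨i, rfl⟩
      · rintro ⟨i, rfl⟩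
        exact ⟨⟨_, rfl⟩, rfl⟩
    rw [this, Finset.card_image_of_injective, Finset.card_fin]
    intro i j h
    simpa using hinj h

/-- Hall's condition for the existence of a star decomposition with prescribed centers. -/
lemma HasStarDecomp.of_card_le {G : SimpleGraph V} [DecidableRel G.Adj] {k : ℕ} (hk : 0 < k)
    {m : V → ℕ} (hE : G.edgeFinset.card = ∑ v, k * m v)
    (h : ∀ T : Finset V, (G.edgeFinset.filter fun e => ∀ v ∈ e, v ∈ T).card ≤ ∑ v ∈ T, k * m v) :
    HasStarDecomp G k m := by
  classical
  let t : G.edgeSet → Finset (Σ v : V, Fin (m v) × Fin k) := fun e =>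
    Finset.univ.filter fun σ => σ.1 ∈ (e : Sym2 V)
  have hcard : ∀ T : Finset V,
      (Finset.univ.filter fun σ : Σ v : V, Fin (m v) × Fin k => σ.1 ∈ T).card =
        ∑ v ∈ T, k * m v := by
    intro T
    have : (Finset.univ.filter fun σ : Σ v : V, Fin (m v) × Fin k => σ.1 ∈ T) =
        T.sigma fun v => Finset.univ := by
      ext; simp
    rw [this, Finset.card_sigma]
    simp [mul_comm]
  have hall : ∀ X : Finset G.edgeSet, X.card ≤ (X.biUnion t).card := by
    intro X
    let T : Finset V := Finset.univ.filter fun v => ∃ e ∈ X, v ∈ (e : Sym2 V)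
    have h1 : X.biUnion t = Finset.univ.filter fun σ => σ.1 ∈ T := by
      ext σ; simp [t, T]
    rw [h1, hcard]
    refine le_trans ?_ (h T)
    rw [← Finset.card_map (Function.Embedding.subtype _)]
    refine Finset.card_le_card fun e he => ?_
    simp only [Finset.mem_map, Function.Embedding.subtype_apply] at he
    obtain ⟨e, he, rfl⟩ := he
    simp only [Finset.mem_filter, SimpleGraph.mem_edgeFinset, T, Finset.mem_univ, true_and]
    exact ⟨e.2, fun v hv => ⟨e, he, hv⟩⟩
  obtain ⟨f, hf, hft⟩ := (Finset.all_card_le_biUnion_card_iff_exists_injective t).1 hall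
  refine HasStarDecomp.of_bijective hk f ?_ fun e => by simpa [t] using hft e
  rw [Fintype.bijective_iff_injective_and_card]
  refine ⟨hf, ?_⟩
  rw [← SimpleGraph.edgeFinset_card, hE, ← hcard Finset.univ]
  simp

end Hall

section Configurations

variable {ι V : Type*}

/-- The edge joining the two values of `g` at the half-edges of `i`. -/
def link (g : ι × Bool → V) (i : ι) : Sym2 V := s(g (i, false), g (i, true))

lemma mem_link {g : ι × Bool → V} {i : ι} {v : V} : v ∈ link g i ↔ ∃ b, g (i, b) = v := by
  simp [link, eq_comm]

/-- The configuration `g` enumerates the edges of `G`. -/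
def Represents (g : ι × Bool → V) (G : SimpleGraph V) : Prop :=
  Function.Injective (link g) ∧ Set.range (link g) = G.edgeSet

/-- The configuration has neither loops nor repeated edges. -/
def IsSimpleConfig (g : ι × Bool → V) : Prop :=
  Function.Injective (link g) ∧ ∀ i, g (i, false) ≠ g (i, true)

lemma IsSimpleConfig.represents {g : ι × Bool → V} (h : IsSimpleConfig g) :
    Represents g (SimpleGraph.fromEdgeSet (Set.range (link g))) := by
  refine ⟨h.1, ?_⟩
  rw [SimpleGraph.edgeSet_fromEdgeSet, eq_comm, sdiff_eq_left, Set.disjoint_left]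
  rintro _ ⟨i, rfl⟩ hi
  exact h.2 i (by simpa [link] using hi)

lemma Represents.eq {g : ι × Bool → V} {G G' : SimpleGraph V} (h : Represents g G)
    (h' : Represents g G') : G = G' :=
  SimpleGraph.edgeSet_injective (h.2.symm.trans h'.2)

lemma Represents.ne {g : ι × Bool → V} {G : SimpleGraph V} (h : Represents g G) (i : ι) :
    g (i, false) ≠ g (i, true) := by
  have : link g i ∈ G.edgeSet := h.2 ▸ Set.mem_range_self i
  exact SimpleGraph.Adj.ne this

variable [Fintype ι] [DecidableEq V]

/-- All maps from half-edges to vertices taking every value exactly `d` times. -/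
def configs (ι V : Type*) [Fintype ι] [DecidableEq ι] [Fintype V] [DecidableEq V] (d : ℕ) :
    Finset (ι × Bool → V) :=
  Finset.univ.filter fun g => ∀ v, (Finset.univ.filter fun σ => g σ = v).card = d

/-- The number of indices whose half-edges are both mapped into `S`. -/
def innerCount (g : ι × Bool → V) (S : Finset V) : ℕ :=
  (Finset.univ.filter fun i => g (i, false) ∈ S ∧ g (i, true) ∈ S).card

lemma Represents.card_fiber [Fintype V] {g : ι × Bool → V} {G : SimpleGraph V}
    (h : Represents g G) (v : V) :
    (Finset.univ.filter fun σ => g σ = v).card = (G.neighborSet v).ncard := by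
  classical
  rw [Set.ncard_eq_toFinset_card', ← SimpleGraph.neighborFinset_def,
    SimpleGraph.card_neighborFinset_eq_degree, ← SimpleGraph.card_incidenceFinset_eq_degree]
  refine Finset.card_bij (fun σ _ => link g σ.1) ?_ ?_ ?_
  · rintro ⟨i, b⟩ hσ
    rw [SimpleGraph.mem_incidenceFinset]
    exact ⟨h.2 ▸ Set.mem_range_self i, mem_link.2 ⟨b, (Finset.mem_filter.1 hσ).2⟩⟩
  · rintro ⟨i, b⟩ hσ ⟨i', b'⟩ hσ' hl
    obtain rfl : i = i' := h.1 hl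
    have h1 := (Finset.mem_filter.1 hσ).2
    have h2 := (Finset.mem_filter.1 hσ').2
    have := h.ne i
    cases b <;> cases b' <;> simp_all
  · intro e he
    rw [SimpleGraph.mem_incidenceFinset] at he
    obtain ⟨i, rfl⟩ : e ∈ Set.range (link g) := h.2 ▸ he.1
    obtain ⟨b, hb⟩ := mem_link.1 he.2
    exact ⟨(i, b), by simpa using hb, rfl⟩

lemma Represents.innerCount_eq [Fintype V] {g : ι × Bool → V} {G : SimpleGraph V}
    [DecidableRel G.Adj] (h : Represents g G) (T : Finset V) :
    innerCount g T = (G.edgeFinset.filter fun e => ∀ v ∈ e, v ∈ T).card := by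
  have hmem : ∀ i, (∀ v ∈ link g i, v ∈ T) ↔ g (i, false) ∈ T ∧ g (i, true) ∈ T := by
    intro i; simp [link]
  refine Finset.card_bij (fun i _ => link g i) ?_ (fun _ _ _ _ hl => h.1 hl) ?_
  · intro i hi
    rw [Finset.mem_filter, SimpleGraph.mem_edgeFinset, hmem]
    exact ⟨h.2 ▸ Set.mem_range_self i, (Finset.mem_filter.1 hi).2⟩
  · intro e he
    rw [Finset.mem_filter, SimpleGraph.mem_edgeFinset] at he
    obtain ⟨i, rfl⟩ : e ∈ Set.range (link g) := h.2 ▸ he.1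
    exact ⟨i, by simpa using (hmem i).1 he.2, rfl⟩

lemma natCard_represents [Fintype V] {G : SimpleGraph V}
    (hG : Nat.card G.edgeSet = Fintype.card ι) :
    Nat.card {g : ι × Bool → V // Represents g G} =
      (Fintype.card ι).factorial * 2 ^ Fintype.card ι := by
  classical
  obtain ⟨e₀⟩ : Nonempty (ι ≃ G.edgeSet) := by
    rw [← Fintype.card_eq, ← hG, Nat.card_eq_fintype_card]
  let Φ : (ι ≃ G.edgeSet) × (ι → Bool) → ι × Bool → V := fun p σ =>
    if σ.2 = p.2 σ.1 then (Quot.out (p.1 σ.1 : Sym2 V)).1 else (Quot.out (p.1 σ.1 : Sym2 V)).2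
  have hout : ∀ e : Sym2 V, s((Quot.out e).1, (Quot.out e).2) = e := fun e => Quot.out_eq e
  have hlink : ∀ p i, link (Φ p) i = p.1 i := by
    intro p i
    rw [← hout (p.1 i : Sym2 V)]
    cases h : p.2 i
    · simp [link, Φ, h]
    · simp only [link, Φ, h]; exact Sym2.eq_swap
  have hrep : ∀ p, Represents (Φ p) G := by
    intro p
    have : link (Φ p) = Subtype.val ∘ p.1 := funext (hlink p)
    refine ⟨?_, ?_⟩
    · rw [this]; exact Subtype.val_injective.comp p.1.injective
    · rw [this, Set.range_comp, p.1.surjective.range_eq]; simp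
  have hinj : Function.Injective Φ := by
    intro p p' h
    have h1 : p.1 = p'.1 := by
      ext i
      rw [← hlink, ← hlink, h]
    refine Prod.ext h1 (funext fun i => ?_)
    have h2 := congrFun h (i, true)
    have h3 : (Quot.out (p'.1 i : Sym2 V)).1 ≠ (Quot.out (p'.1 i : Sym2 V)).2 := by
      have := (p'.1 i).2
      rw [← hout (p'.1 i : Sym2 V)] at this
      exact SimpleGraph.Adj.ne this
    simp only [Φ, h1] at h2
    cases hp : p.2 i <;> cases hp' : p'.2 i <;> simp_all
  have hsurj : ∀ g, Represents g G → ∃ p, Φ p = g := by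
    intro g hg
    have hm : ∀ i, link g i ∈ G.edgeSet := fun i => hg.2 ▸ Set.mem_range_self i
    let e : ι ≃ G.edgeSet := Equiv.ofBijective (fun i => ⟨link g i, hm i⟩)
      ⟨fun i j h => hg.1 (congrArg Subtype.val h), fun x => by
        obtain ⟨i, hi⟩ : (x : Sym2 V) ∈ Set.range (link g) := by rw [hg.2]; exact x.2
        exact ⟨i, Subtype.ext hi⟩⟩
    refine ⟨(e, fun i => decide ((Quot.out (link g i)).1 = g (i, true))), ?_⟩
    funext ⟨i, b⟩
    have h1 : s((Quot.out (link g i)).1, (Quot.out (link g i)).2) = s(g (i, false), g (i, true)) :=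
      hout _
    have h2 := hg.ne i
    have he : (e i : Sym2 V) = link g i := rfl
    simp only [Φ, he]
    rw [Sym2.eq_iff] at h1
    rcases h1 with ⟨h3, h4⟩ | ⟨h3, h4⟩ <;> cases b <;> simp [h3, h4, h2]
  have hbij : Function.Bijective (fun p => (⟨Φ p, hrep p⟩ : {g // Represents g G})) := by
    refine ⟨fun p p' h => hinj (congrArg Subtype.val h), fun ⟨g, hg⟩ => ?_⟩
    obtain ⟨p, hp⟩ := hsurj g hg
    exact ⟨p, Subtype.ext hp⟩
  rw [← Nat.card_congr (Equiv.ofBijective _ hbij), Nat.card_eq_fintype_card, Fintype.card_prod,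
    Fintype.card_equiv e₀]
  simp

lemma IsRegularGraph.natCard_edgeSet [Fintype V] {G : SimpleGraph V} {d : ℕ}
    (hG : IsRegularGraph G d) : 2 * Nat.card G.edgeSet = Fintype.card V * d := by
  classical
  rw [Nat.card_eq_fintype_card, ← SimpleGraph.edgeFinset_card,
    ← SimpleGraph.sum_degrees_eq_twice_card_edges]
  have : ∀ v, G.degree v = d := by
    intro v
    rw [← hG v, Set.ncard_eq_toFinset_card', ← SimpleGraph.neighborFinset_def,
      SimpleGraph.card_neighborFinset_eq_degree]
  simp [this]

variable [DecidableEq ι] [Fintype V] {d : ℕ}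

lemma natCard_sigma_represents {P : SimpleGraph V → Prop}
    (hc : 2 * Fintype.card ι = Fintype.card V * d) :
    Nat.card (Σ G : {G : SimpleGraph V // IsRegularGraph G d ∧ P G},
      {g : ι × Bool → V // Represents g G.1}) =
      (Fintype.card ι).factorial * 2 ^ Fintype.card ι *
        Nat.card {G : SimpleGraph V // IsRegularGraph G d ∧ P G} := by
  classical
  have := Fintype.ofFinite {G : SimpleGraph V // IsRegularGraph G d ∧ P G}
  have hE : ∀ G : {G : SimpleGraph V // IsRegularGraph G d ∧ P G},
      Nat.card G.1.edgeSet = Fintype.card ι := fun G => by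
    have := G.2.1.natCard_edgeSet
    omega
  rw [Nat.card_sigma, Finset.sum_congr rfl fun G _ => natCard_represents (ι := ι) (hE G)]
  simp [mul_comm]

lemma mul_natCard_regular_le {P : SimpleGraph V → Prop} {Q : (ι × Bool → V) → Prop}
    [DecidablePred Q] (hc : 2 * Fintype.card ι = Fintype.card V * d)
    (hPQ : ∀ g G, IsRegularGraph G d → P G → Represents g G → Q g) :
    (Fintype.card ι).factorial * 2 ^ Fintype.card ι *
        Nat.card {G : SimpleGraph V // IsRegularGraph G d ∧ P G} ≤
      ((configs ι V d).filter Q).card := by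
  classical
  rw [← natCard_sigma_represents hc, ← Fintype.card_coe, ← Nat.card_eq_fintype_card]
  refine Nat.card_le_card_of_injective (fun x => ⟨x.2.1, ?_⟩) ?_
  · rw [Finset.mem_filter, configs, Finset.mem_filter]
    exact ⟨⟨Finset.mem_univ _, fun v => (x.2.2.card_fiber v).trans (x.1.2.1 v)⟩,
      hPQ _ _ x.1.2.1 x.1.2.2 x.2.2⟩
  · rintro ⟨⟨G, hG⟩, g, hg⟩ ⟨⟨G', hG'⟩, g', hg'⟩ h
    obtain rfl : g = g' := congrArg Subtype.val h
    obtain rfl := hg.eq hg'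
    rfl

lemma card_simple_le_mul_natCard_regular [DecidablePred (IsSimpleConfig (ι := ι) (V := V))]
    (hc : 2 * Fintype.card ι = Fintype.card V * d) :
    ((configs ι V d).filter IsSimpleConfig).card ≤ (Fintype.card ι).factorial * 2 ^ Fintype.card ι *
        Nat.card {G : SimpleGraph V // IsRegularGraph G d} := by
  classical
  have h := natCard_sigma_represents (ι := ι) (V := V) (P := fun _ => True) hc
  rw [Nat.card_congr (Equiv.subtypeEquivRight (q := fun G => IsRegularGraph G d)
    fun _ => and_iff_left trivial)] at h
  rw [← h, ← Fintype.card_coe, ← Nat.card_eq_fintype_card]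
  have key : ∀ x : ((configs ι V d).filter IsSimpleConfig : Finset (ι × Bool → V)),
      IsSimpleConfig x.1 ∧
      IsRegularGraph (SimpleGraph.fromEdgeSet (Set.range (link x.1))) d := by
    intro x
    have hx := Finset.mem_filter.1 x.2
    refine ⟨hx.2, fun v => ?_⟩
    rw [← hx.2.represents.card_fiber]
    exact (Finset.mem_filter.1 hx.1).2 v
  refine Nat.card_le_card_of_injective
    (fun x => ⟨⟨_, (key x).2, trivial⟩, x.1, (key x).1.represents⟩) fun x y hxy => ?_
  simp only [Sigma.mk.injEq, Subtype.mk.injEq] at hxy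
  have : ∀ {G G' : SimpleGraph V} (hG : G = G') {g g' : ι × Bool → V} (hg : Represents g G)
      (hg' : Represents g' G'), (⟨g, hg⟩ : {g // Represents g G}) ≍
        (⟨g', hg'⟩ : {g // Represents g G'}) → g = g' := by
    rintro G _ rfl g g' hg hg' h
    exact congrArg Subtype.val (eq_of_heq h)
  exact Subtype.ext (this hxy.1 _ _ hxy.2)

end Configurations

section Switching

variable {ι V : Type*} [DecidableEq ι]

/-- Exchange the second half-edges of the indices `i` and `j`. -/
def switch (p : ι × ι) (g : ι × Bool → V) : ι × Bool → V :=
  fun σ => if σ.2 then g (Equiv.swap p.1 p.2 σ.1, true) else g σ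

lemma switch_switch (p : ι × ι) (g : ι × Bool → V) : switch p (switch p g) = g := by
  funext ⟨l, b⟩
  cases b <;> simp [switch]

@[simp] lemma switch_false (p : ι × ι) (g : ι × Bool → V) (l : ι) :
    switch p g (l, false) = g (l, false) := by
  simp [switch]

@[simp] lemma switch_left (i j : ι) (g : ι × Bool → V) : switch (i, j) g (i, true) = g (j, true) := by
  simp [switch]

@[simp] lemma switch_right (i j : ι) (g : ι × Bool → V) :
    switch (i, j) g (j, true) = g (i, true) := by
  simp [switch]

lemma link_switch_of_ne {i j l : ι} (g : ι × Bool → V) (hi : l ≠ i) (hj : l ≠ j) :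
    link (switch (i, j) g) l = link g l := by
  simp [link, switch, Equiv.swap_apply_of_ne_of_ne hi hj]

/-- The index `i` carries a loop or a repeated edge. -/
def Redundant (g : ι × Bool → V) (i : ι) : Prop :=
  g (i, false) = g (i, true) ∨ ∃ j ≠ i, link g j = link g i

/-- Neither edge produced by the switching is a loop or an edge already present. -/
def Switchable (g : ι × Bool → V) (p : ι × ι) : Prop :=
  (g (p.1, false) ≠ g (p.2, true) ∧ s(g (p.1, false), g (p.2, true)) ∉ Set.range (link g)) ∧
  (g (p.2, false) ≠ g (p.1, true) ∧ s(g (p.2, false), g (p.1, true)) ∉ Set.range (link g))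

variable [Fintype ι] [DecidableEq V]

/-- The non-loop edges of a configuration. -/
def properEdges (g : ι × Bool → V) : Finset (Sym2 V) :=
  (Finset.univ.image (link g)).filter fun e => ¬ e.IsDiag

/-- The number of edges lost to loops and repetitions. -/
def defect (g : ι × Bool → V) : ℕ := Fintype.card ι - (properEdges g).card

lemma mem_properEdges {g : ι × Bool → V} {e : Sym2 V} :
    e ∈ properEdges g ↔ (∃ i, link g i = e) ∧ ¬ e.IsDiag := by
  simp [properEdges]

lemma isSimpleConfig_of_defect_eq_zero {g : ι × Bool → V} (h : defect g = 0) :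
    IsSimpleConfig g := by
  have h1 := Nat.sub_eq_zero_iff_le.1 h
  have h2 : (Finset.univ.image (link g)).card = (Finset.univ : Finset ι).card :=
    le_antisymm Finset.card_image_le (h1.trans (Finset.card_filter_le _ _))
  have h3 : properEdges g = Finset.univ.image (link g) :=
    Finset.eq_of_subset_of_card_le (Finset.filter_subset _ _) (h2.le.trans h1)
  refine ⟨by simpa using Finset.card_image_iff.1 h2, fun i => ?_⟩
  have : link g i ∈ properEdges g := by
    rw [h3]; exact Finset.mem_image_of_mem _ (Finset.mem_univ i)
  simpa [link] using (mem_properEdges.1 this).2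

lemma card_properEdges_switch {g : ι × Bool → V} {i j : ι} (hi : Redundant g i)
    (h : Switchable g (i, j)) : (properEdges g).card + 1 ≤ (properEdges (switch (i, j) g)).card := by
  obtain ⟨⟨h1, h2⟩, h3, h4⟩ := h
  simp only at h1 h2 h3 h4
  have hij : i ≠ j := by
    rintro rfl
    exact h2 ⟨i, rfl⟩
  have hn1 : s(g (i, false), g (j, true)) ∈ properEdges (switch (i, j) g) :=
    mem_properEdges.2 ⟨⟨i, by simp [link]⟩, by simpa using h1⟩
  have hn2 : s(g (j, false), g (i, true)) ∈ properEdges (switch (i, j) g) :=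
    mem_properEdges.2 ⟨⟨j, by simp [link]⟩, by simpa using h3⟩
  have hold : (properEdges g).erase (link g j) ⊆ properEdges (switch (i, j) g) := by
    intro e he
    obtain ⟨hej, he⟩ := Finset.mem_erase.1 he
    obtain ⟨⟨l, hl⟩, hd⟩ := mem_properEdges.1 he
    have : ∃ l, l ≠ i ∧ link g l = e := by
      by_cases hli : l = i
      · subst hli
        rcases hi with hi | ⟨l', hl', hll'⟩
        · exact absurd (by rw [← hl]; simpa [link] using hi) hd
        · exact ⟨l', hl', hll'.trans hl⟩
      · exact ⟨l, hli, hl⟩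
    obtain ⟨l, hli, rfl⟩ := this
    have hlj : l ≠ j := by rintro rfl; exact hej rfl
    exact mem_properEdges.2 ⟨⟨l, link_switch_of_ne g hli hlj⟩, hd⟩
  have hni1 : s(g (i, false), g (j, true)) ∉ properEdges g := fun h => h2 (mem_properEdges.1 h).1
  have hni2 : s(g (j, false), g (i, true)) ∉ properEdges g := fun h => h4 (mem_properEdges.1 h).1
  by_cases heq : s(g (i, false), g (j, true)) = s(g (j, false), g (i, true))
  · have hloop : g (j, false) = g (j, true) := by
      rcases Sym2.eq_iff.1 heq with ⟨h5, h6⟩ | ⟨h5, h6⟩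
      · exact absurd ⟨i, by simp [link, h6]⟩ h2
      · exact h6.symm
    have hj : link g j ∉ properEdges g := fun h => (mem_properEdges.1 h).2 (by simpa [link] using hloop)
    rw [Finset.erase_eq_of_notMem hj] at hold
    rw [← Finset.card_insert_of_notMem hni1]
    exact Finset.card_le_card (Finset.insert_subset hn1 hold)
  · have h5 : insert s(g (i, false), g (j, true)) (insert s(g (j, false), g (i, true))
        ((properEdges g).erase (link g j))) ⊆ properEdges (switch (i, j) g) :=
      Finset.insert_subset hn1 (Finset.insert_subset hn2 hold)
    have h6 := Finset.card_le_card h5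
    rw [Finset.card_insert_of_notMem, Finset.card_insert_of_notMem] at h6
    · have := Finset.pred_card_le_card_erase (s := properEdges g) (a := link g j)
      omega
    · exact fun h => hni2 (Finset.mem_of_mem_erase h)
    · rw [Finset.mem_insert]
      rintro (h | h)
      · exact heq h
      · exact hni1 (Finset.mem_of_mem_erase h)

open Classical in
lemma defect_le_card_redundant (g : ι × Bool → V) :
    defect g ≤ (Finset.univ.filter (Redundant g)).card := by
  have h : (Finset.univ.filter fun i => ¬ Redundant g i).card ≤ (properEdges g).card := by
    refine Finset.card_le_card_of_injOn (link g) ?_ ?_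
    · intro i hi
      have hi := (Finset.mem_filter.1 hi).2
      exact mem_properEdges.2 ⟨⟨i, rfl⟩, fun hd => hi (Or.inl (by simpa [link] using hd))⟩
    · intro i hi j hj hij
      by_contra hne
      exact (Finset.mem_filter.1 hj).2 (Or.inr ⟨i, hne, hij⟩)
  have h2 := Finset.card_filter_add_card_filter_not (s := (Finset.univ : Finset ι)) (Redundant g)
  rw [Finset.card_univ] at h2
  unfold defect
  omega

variable [Fintype V] {d : ℕ}

lemma card_fiber_of_mem {g : ι × Bool → V} (hg : g ∈ configs ι V d) (v : V) :
    (Finset.univ.filter fun σ => g σ = v).card = d :=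
  (Finset.mem_filter.1 hg).2 v

lemma card_filter_mem_le {g : ι × Bool → V} (hg : g ∈ configs ι V d) (b : Bool) (W : Finset V) :
    (Finset.univ.filter fun i => g (i, b) ∈ W).card ≤ d * W.card := by
  have h : (Finset.univ.filter fun i => g (i, b) ∈ W).card ≤
      (W.biUnion fun v => Finset.univ.filter fun σ => g σ = v).card := by
    refine Finset.card_le_card_of_injOn (fun i => (i, b)) ?_ fun i _ j _ h => (Prod.ext_iff.1 h).1
    intro i hi
    simpa using hi
  refine h.trans (Finset.card_biUnion_le.trans ?_)
  simp [card_fiber_of_mem hg, mul_comm]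

/-- The vertices joined to `v`. -/
def linked (g : ι × Bool → V) (v : V) : Finset V :=
  (Finset.univ.filter fun σ => g σ = v).image fun σ => g (σ.1, !σ.2)

lemma mem_linked {g : ι × Bool → V} {v u : V} (h : s(v, u) ∈ Set.range (link g)) :
    u ∈ linked g v := by
  obtain ⟨i, hi⟩ := h
  rw [linked, Finset.mem_image]
  rcases Sym2.eq_iff.1 hi with ⟨h1, h2⟩ | ⟨h1, h2⟩
  · exact ⟨(i, false), by simpa using h1, h2⟩
  · exact ⟨(i, true), by simpa using h2, h1⟩

lemma card_insert_linked_le {g : ι × Bool → V} (hg : g ∈ configs ι V d) (v : V) :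
    (insert v (linked g v)).card ≤ d + 1 :=
  (Finset.card_insert_le _ _).trans
    (Nat.succ_le_succ (Finset.card_image_le.trans (card_fiber_of_mem hg v).le))

open Classical in
lemma card_not_switchable_le {g : ι × Bool → V} (hg : g ∈ configs ι V d) (i : ι) :
    (Finset.univ.filter fun j => ¬ Switchable g (i, j)).card ≤ 2 * (d * (d + 1)) := by
  have hsub : (Finset.univ.filter fun j => ¬ Switchable g (i, j)) ⊆
      (Finset.univ.filter fun j => g (j, true) ∈ insert (g (i, false)) (linked g (g (i, false)))) ∪
      Finset.univ.filter fun j => g (j, false) ∈ insert (g (i, true)) (linked g (g (i, true))) := by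
    intro j hj
    by_contra hn
    simp only [Finset.mem_union, Finset.mem_filter, Finset.mem_univ, true_and, not_or,
      Finset.mem_insert] at hn hj
    refine hj ⟨⟨Ne.symm hn.1.1, fun h => hn.1.2 (mem_linked h)⟩, hn.2.1, fun h => hn.2.2 ?_⟩
    rw [Sym2.eq_swap] at h
    exact mem_linked h
  refine (Finset.card_le_card hsub).trans ((Finset.card_union_le _ _).trans ?_)
  have h1 := (card_filter_mem_le hg true (insert (g (i, false)) (linked g (g (i, false))))).trans
    (Nat.mul_le_mul_left d (card_insert_linked_le hg _))
  have h2 := (card_filter_mem_le hg false (insert (g (i, true)) (linked g (g (i, true))))).trans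
    (Nat.mul_le_mul_left d (card_insert_linked_le hg _))
  omega

open Classical in
lemma defect_mul_le {g : ι × Bool → V} (hg : g ∈ configs ι V d) :
    defect g * (Fintype.card ι - 2 * (d * (d + 1))) ≤
      (Finset.univ.filter fun p : ι × ι => Redundant g p.1 ∧ Switchable g p).card := by
  have h : (Finset.univ.filter fun p : ι × ι => Redundant g p.1 ∧ Switchable g p) =
      ((Finset.univ.filter (Redundant g)).sigma fun i => Finset.univ.filter fun j =>
        Switchable g (i, j)).map (Equiv.sigmaEquivProd ι ι).toEmbedding := by
    ext ⟨i, j⟩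
    simp
  rw [h, Finset.card_map, Finset.card_sigma]
  refine (Nat.mul_le_mul_right _ (defect_le_card_redundant g)).trans ?_
  rw [← smul_eq_mul]
  refine Finset.card_nsmul_le_sum _ _ _ fun i _ => ?_
  have h1 := card_not_switchable_le hg i
  have h2 := Finset.card_filter_add_card_filter_not (s := (Finset.univ : Finset ι))
    fun j => Switchable g (i, j)
  rw [Finset.card_univ] at h2
  omega

open Classical in
lemma card_switch_preimage_le {g : ι × Bool → V} (hg : g ∈ configs ι V d) :
    (Finset.univ.filter fun p : ι × ι => Redundant (switch p g) p.1 ∧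
      Switchable (switch p g) p).card ≤ Fintype.card ι * (d * (d + 2)) := by
  have h : (Finset.univ.filter fun p : ι × ι => Redundant (switch p g) p.1 ∧
      Switchable (switch p g) p) ⊆
      (Finset.univ.sigma fun i => (Finset.univ.filter fun j => g (j, true) ∈
        insert (g (i, false)) (linked g (g (i, false)))) ∪
        Finset.univ.filter fun j => g (j, false) ∈ ({g (i, false)} : Finset V)).map
      (Equiv.sigmaEquivProd ι ι).toEmbedding := by
    rintro ⟨i, j⟩ hp
    obtain ⟨hr, ⟨h1, -⟩, -⟩ := (Finset.mem_filter.1 hp).2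
    simp only [switch_false, switch_right] at h1
    simp only [Finset.mem_map_equiv, Finset.mem_sigma, Finset.mem_univ, true_and, Finset.mem_union,
      Finset.mem_filter, Finset.mem_insert, Finset.mem_singleton, Equiv.sigmaEquivProd_symm_apply]
    rcases hr with hr | ⟨l, hli, hl⟩
    · simp only [switch_false, switch_left] at hr
      exact Or.inl (Or.inl hr.symm)
    · by_cases hlj : l = j
      · subst hlj
        simp only [link, switch_false, switch_left, switch_right] at hl
        rcases Sym2.eq_iff.1 hl with ⟨h5, h6⟩ | ⟨h5, h6⟩
        · exact Or.inr h5
        · exact absurd h6.symm h1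
      · rw [link_switch_of_ne g hli hlj] at hl
        refine Or.inl (Or.inr (mem_linked ⟨l, hl.trans ?_⟩))
        simp [link]
  refine (Finset.card_le_card h).trans ?_
  rw [Finset.card_map, Finset.card_sigma, ← smul_eq_mul, ← Finset.card_univ]
  refine Finset.sum_le_card_nsmul _ _ _ fun i _ => (Finset.card_union_le _ _).trans ?_
  have h1 := (card_filter_mem_le hg true (insert (g (i, false)) (linked g (g (i, false))))).trans
    (Nat.mul_le_mul_left d (card_insert_linked_le hg _))
  have h2 := card_filter_mem_le hg false {g (i, false)}
  rw [Finset.card_singleton] at h2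
  nlinarith

lemma switch_mem_configs {g : ι × Bool → V} (hg : g ∈ configs ι V d) (p : ι × ι) :
    switch p g ∈ configs ι V d := by
  refine Finset.mem_filter.2 ⟨Finset.mem_univ _, fun v => ?_⟩
  rw [← card_fiber_of_mem hg v]
  let f : ι × Bool → ι × Bool := fun σ => if σ.2 then (Equiv.swap p.1 p.2 σ.1, true) else σ
  have hf : ∀ σ, switch p g σ = g (f σ) := by
    rintro ⟨l, b⟩; cases b <;> simp [switch, f]
  have hff : ∀ σ, f (f σ) = σ := by
    rintro ⟨l, b⟩; cases b <;> simp [f]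
  refine Finset.card_bij' (fun σ _ => f σ) (fun σ _ => f σ) ?_ ?_ (fun σ _ => hff σ) fun σ _ => hff σ
  · intro σ hσ; simpa [hf] using hσ
  · intro σ hσ; simpa [hf, hff] using hσ

lemma sum_defect_mul_le {X Y : Finset (ι × Bool → V)} (hX : X ⊆ configs ι V d)
    (hY : Y ⊆ configs ι V d)
    (hXY : ∀ g ∈ X, ∀ p : ι × ι, Redundant g p.1 → Switchable g p → switch p g ∈ Y) :
    (∑ g ∈ X, defect g) * (Fintype.card ι - 2 * (d * (d + 1))) ≤
      Y.card * (Fintype.card ι * (d * (d + 2))) := by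
  classical
  let R : (ι × Bool → V) → ι × ι → Prop := fun g p => Redundant g p.1 ∧ Switchable g p
  calc (∑ g ∈ X, defect g) * (Fintype.card ι - 2 * (d * (d + 1)))
      ≤ ∑ g ∈ X, (Finset.univ.filter fun p => R g p).card := by
        rw [Finset.sum_mul]
        exact Finset.sum_le_sum fun g hg => defect_mul_le (hX hg)
    _ = ∑ p, (X.filter fun g => R g p).card :=
        Finset.sum_card_bipartiteAbove_eq_sum_card_bipartiteBelow R
    _ ≤ ∑ p, (Y.filter fun g => R (switch p g) p).card := by
        refine Finset.sum_le_sum fun p _ => Finset.card_le_card_of_injOn (switch p) ?_ ?_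
        · intro g hg
          obtain ⟨hg, hR⟩ := Finset.mem_filter.1 hg
          exact Finset.mem_filter.2 ⟨hXY g hg p hR.1 hR.2, by rwa [switch_switch]⟩
        · intro g _ g' _ h
          rw [← switch_switch p g, h, switch_switch]
    _ = ∑ g ∈ Y, (Finset.univ.filter fun p => R (switch p g) p).card :=
        (Finset.sum_card_bipartiteAbove_eq_sum_card_bipartiteBelow
          (fun g p => R (switch p g) p)).symm
    _ ≤ Y.card * (Fintype.card ι * (d * (d + 2))) := by
        rw [← smul_eq_mul]
        exact Finset.sum_le_card_nsmul _ _ _ fun g hg => card_switch_preimage_le (hY hg)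

/-- A positive proportion of all configurations is simple. -/
lemma card_configs_le_mul_card_simple [DecidablePred (IsSimpleConfig (ι := ι) (V := V))]
    (hM : 4 * (d * (d + 1)) < Fintype.card ι) :
    (configs ι V d).card ≤ 2 * (1 + 2 * (d * (d + 2))) ^ (4 * (d * (d + 2))) *
      ((configs ι V d).filter IsSimpleConfig).card := by
  set C := d * (d + 2)
  have hstep : ∀ X Y : Finset (ι × Bool → V), X ⊆ configs ι V d → Y ⊆ configs ι V d →
      (∀ g ∈ X, ∀ p : ι × ι, Redundant g p.1 → Switchable g p → switch p g ∈ Y) →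
      ∑ g ∈ X, defect g ≤ 2 * C * Y.card := by
    intro X Y hX hY hXY
    have h := sum_defect_mul_le hX hY hXY
    set M := Fintype.card ι
    have h1 : M ≤ 2 * (M - 2 * (d * (d + 1))) := by omega
    have h2 : (∑ g ∈ X, defect g) * M ≤ (2 * C * Y.card) * M := by
      calc (∑ g ∈ X, defect g) * M ≤ (∑ g ∈ X, defect g) * (2 * (M - 2 * (d * (d + 1)))) :=
            Nat.mul_le_mul_left _ h1
        _ = 2 * ((∑ g ∈ X, defect g) * (M - 2 * (d * (d + 1)))) := by ring
        _ ≤ 2 * (Y.card * (M * C)) := Nat.mul_le_mul_left _ h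
        _ = (2 * C * Y.card) * M := by ring
    exact Nat.le_of_mul_le_mul_right h2 (by omega)
  let Z : ℕ → Finset (ι × Bool → V) := fun b => (configs ι V d).filter fun g => defect g ≤ b
  have hZ : ∀ b, (Z (b + 1)).card ≤ (1 + 2 * C) * (Z b).card := by
    intro b
    let X := (configs ι V d).filter fun g => defect g = b + 1
    have h1 : Z (b + 1) ⊆ Z b ∪ X := by
      intro g hg
      simp only [Z, X, Finset.mem_union, Finset.mem_filter] at hg ⊢
      have : defect g ≤ b ∨ defect g = b + 1 := by omega
      tauto
    have h2 := hstep X (Z b) (Finset.filter_subset _ _) (Finset.filter_subset _ _) (by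
      rintro g hg ⟨i, j⟩ hr hs
      obtain ⟨hg, hb⟩ := Finset.mem_filter.1 hg
      refine Finset.mem_filter.2 ⟨switch_mem_configs hg _, ?_⟩
      have : (properEdges g).card + 1 ≤ (properEdges (switch (i, j) g)).card :=
        card_properEdges_switch hr hs
      unfold defect at hb ⊢
      omega)
    have h3 : X.card ≤ ∑ g ∈ X, defect g := by
      rw [Finset.card_eq_sum_ones]
      refine Finset.sum_le_sum fun g hg => ?_
      rw [(Finset.mem_filter.1 hg).2]; omega
    have h4 := (Finset.card_le_card h1).trans (Finset.card_union_le _ _)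
    nlinarith
  have hpow : ∀ b, (Z b).card ≤ (1 + 2 * C) ^ b * (Z 0).card := by
    intro b
    induction b with
    | zero => simp
    | succ b ih =>
      calc (Z (b + 1)).card ≤ (1 + 2 * C) * (Z b).card := hZ b
        _ ≤ (1 + 2 * C) * ((1 + 2 * C) ^ b * (Z 0).card) := Nat.mul_le_mul_left _ ih
        _ = _ := by ring
  have hmark : (configs ι V d).card ≤ 2 * (Z (4 * C)).card := by
    have h1 := hstep _ _ (Finset.Subset.refl (configs ι V d)) (Finset.Subset.refl _)
      fun g hg p _ _ => switch_mem_configs hg p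
    have h2 : ((configs ι V d).filter fun g => ¬ defect g ≤ 4 * C).card * (4 * C + 1) ≤
        ∑ g ∈ configs ι V d, defect g := by
      rw [← smul_eq_mul]
      refine (Finset.card_nsmul_le_sum _ _ _ fun g hg => ?_).trans
        (Finset.sum_le_sum_of_subset (Finset.filter_subset _ _))
      have := (Finset.mem_filter.1 hg).2
      omega
    have h3 := Finset.card_filter_add_card_filter_not (s := configs ι V d)
      fun g => defect g ≤ 4 * C
    simp only [Z]
    by_contra hcon
    nlinarith
  have hsub : (Z 0).card ≤ ((configs ι V d).filter IsSimpleConfig).card := by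
    refine Finset.card_le_card fun g hg => ?_
    obtain ⟨hg, h0⟩ := Finset.mem_filter.1 hg
    exact Finset.mem_filter.2 ⟨hg, isSimpleConfig_of_defect_eq_zero (Nat.le_zero.1 h0)⟩
  calc (configs ι V d).card ≤ 2 * (Z (4 * C)).card := hmark
    _ ≤ 2 * ((1 + 2 * C) ^ (4 * C) * (Z 0).card) := Nat.mul_le_mul_left _ (hpow _)
    _ ≤ 2 * ((1 + 2 * C) ^ (4 * C) * ((configs ι V d).filter IsSimpleConfig).card) :=
        Nat.mul_le_mul_left _ (Nat.mul_le_mul_left _ hsub)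
    _ = _ := by ring

end Switching

open Real

/-- The certificate `c * log q` is stored as the pair `(c, q)`; this is the value of a list of such. -/
noncomputable def logSum (l : List (ℚ × ℚ)) : ℝ := (l.map fun p => (p.1 : ℝ) * log (p.2 : ℝ)).sum

/-- The exponent `t * c` of `q` in `exp (t * c * log q)`, rounded to an integer in the direction
that increases the result. -/
def roundedExponent (t : ℕ) (p : ℚ × ℚ) : ℤ :=
  if p.2.den ≤ p.2.num then ⌈p.1 * (t : ℚ)⌉ else ⌊p.1 * (t : ℚ)⌋

/-- Integer version of `exp (t * logSum l) < 1` with exponents rounded to integers. -/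
def logSumCheck (t : ℕ) (l : List (ℚ × ℚ)) : Bool :=
  l.all (fun p => 0 < p.2.num) &&
  decide ((l.map fun p => p.2.num.toNat ^ (roundedExponent t p).toNat *
      p.2.den ^ (-roundedExponent t p).toNat).prod <
    (l.map fun p => p.2.num.toNat ^ (-roundedExponent t p).toNat *
      p.2.den ^ (roundedExponent t p).toNat).prod)

lemma mul_log_le_roundedExponent_mul_log (t : ℕ) {p : ℚ × ℚ} (hp : 0 < p.2) :
    (t : ℝ) * (p.1 * log p.2) ≤ roundedExponent t p * log p.2 := by
  have hp' : (0 : ℝ) < p.2 := by exact_mod_cast hp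
  rw [roundedExponent]
  split_ifs with h
  · have h1 : (1 : ℚ) ≤ p.2 := by
      rw [← Rat.num_div_den p.2, one_le_div (by exact_mod_cast p.2.den_pos)]
      exact_mod_cast h
    have h2 : (p.1 : ℝ) * t ≤ (⌈p.1 * (t : ℚ)⌉ : ℤ) := by exact_mod_cast Int.le_ceil (p.1 * (t : ℚ))
    have h3 : 0 ≤ log (p.2 : ℝ) := log_nonneg (by exact_mod_cast h1)
    nlinarith
  · have h1 : p.2 ≤ (1 : ℚ) := by
      rw [← Rat.num_div_den p.2, div_le_one (by exact_mod_cast p.2.den_pos)]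
      exact_mod_cast (not_le.1 h).le
    have h2 : ((⌊p.1 * (t : ℚ)⌋ : ℤ) : ℝ) ≤ p.1 * t := by exact_mod_cast Int.floor_le (p.1 * (t : ℚ))
    have h3 : log (p.2 : ℝ) ≤ 0 := log_nonpos hp'.le (by exact_mod_cast h1)
    nlinarith

lemma logSum_neg_of_check {t : ℕ} (ht : 0 < t) {l : List (ℚ × ℚ)} (h : logSumCheck t l = true) :
    logSum l < 0 := by
  simp only [logSumCheck, Bool.and_eq_true, List.all_eq_true, decide_eq_true_eq] at h
  obtain ⟨hpos, hlt⟩ := h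
  set P : ℚ × ℚ → ℕ := fun p =>
    p.2.num.toNat ^ (roundedExponent t p).toNat * p.2.den ^ (-roundedExponent t p).toNat
  set Q : ℚ × ℚ → ℕ := fun p =>
    p.2.num.toNat ^ (-roundedExponent t p).toNat * p.2.den ^ (roundedExponent t p).toNat
  have hterm : ∀ p : ℚ × ℚ, 0 < p.2.num → 0 < P p ∧ 0 < Q p ∧
      (t : ℝ) * (p.1 * log p.2) ≤ log (P p) - log (Q p) := by
    intro p hp
    have hn : 0 < p.2.num.toNat := by omega
    have hd : 0 < p.2.den := p.2.den_pos
    refine ⟨by positivity, by positivity, ?_⟩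
    have hq : log (p.2 : ℝ) = log (p.2.num.toNat : ℝ) - log (p.2.den : ℝ) := by
      rw [← log_div (by positivity) (by positivity)]
      congr 1
      have h1 : ((p.2.num.toNat : ℕ) : ℝ) = (p.2.num : ℝ) := by
        exact_mod_cast congrArg (Int.cast (R := ℝ)) (Int.toNat_of_nonneg hp.le)
      rw [h1]
      exact_mod_cast congrArg (Rat.cast (K := ℝ)) (Rat.num_div_den p.2).symm
    have hr : (roundedExponent t p : ℝ) =
        ((roundedExponent t p).toNat : ℝ) - ((-roundedExponent t p).toNat : ℝ) := by
      exact_mod_cast (Int.toNat_sub_toNat_neg (roundedExponent t p)).symm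
    refine (mul_log_le_roundedExponent_mul_log t (Rat.num_pos.1 hp)).trans (le_of_eq ?_)
    simp only [P, Q, Nat.cast_mul, Nat.cast_pow]
    rw [log_mul (by positivity) (by positivity), log_mul (by positivity) (by positivity), log_pow,
      log_pow, log_pow, log_pow, hq, hr]
    ring
  clear_value P Q
  have key : ∀ l : List (ℚ × ℚ), (∀ p ∈ l, 0 < p.2.num) →
      0 < (l.map P).prod ∧ 0 < (l.map Q).prod ∧
      (t : ℝ) * logSum l ≤ log ((l.map P).prod : ℕ) - log ((l.map Q).prod : ℕ) := by
    intro l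
    induction l with
    | nil => intro _; simp [logSum]
    | cons a l ih =>
      intro hl
      obtain ⟨i1, i2, i3⟩ := ih fun p hp => hl p (List.mem_cons_of_mem _ hp)
      obtain ⟨j1, j2, j3⟩ := hterm a (hl a List.mem_cons_self)
      simp only [List.map_cons, List.prod_cons]
      refine ⟨by positivity, by positivity, ?_⟩
      have : logSum (a :: l) = a.1 * log a.2 + logSum l := by simp [logSum]
      rw [this, Nat.cast_mul, Nat.cast_mul, log_mul (by positivity) (by positivity),
        log_mul (by positivity) (by positivity)]
      linarith
  obtain ⟨i1, i2, i3⟩ := key l fun p hp => by simpa using hpos p hp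
  have : log ((l.map P).prod : ℕ) < log ((l.map Q).prod : ℕ) :=
    log_lt_log (by exact_mod_cast i1) (by exact_mod_cast hlt)
  have ht' : (0 : ℝ) < t := by exact_mod_cast ht
  nlinarith

lemma binEntropy_eq' (p : ℝ) : binEntropy p = -(p * log p) - (1 - p) * log (1 - p) := by
  simp only [binEntropy, log_inv]; ring

lemma binEntropy_add_mul_log_le {p u : ℝ} (hp : 0 ≤ p) (hp1 : p ≤ 1) (hu : 0 < u) :
    binEntropy p + p * log u ≤ log (1 + u) := by
  have hu1 : 0 < 1 + u := by linarith
  rcases hp.eq_or_lt with rfl | hp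
  · simpa using log_nonneg (by linarith : 1 ≤ 1 + u)
  rcases hp1.eq_or_lt with rfl | hp1
  · simpa using log_le_log hu (by linarith)
  have hq : 0 < 1 - p := by linarith
  have h1 := log_le_sub_one_of_pos (x := u / (p * (1 + u))) (by positivity)
  have h2 := log_le_sub_one_of_pos (x := 1 / ((1 - p) * (1 + u))) (by positivity)
  rw [log_div (by positivity) (by positivity), log_mul (by positivity) (by positivity)] at h1 h2
  rw [log_one] at h2
  have h3 := mul_le_mul_of_nonneg_left h1 hp.le
  have h4 := mul_le_mul_of_nonneg_left h2 hq.le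
  have e1 : p * (u / (p * (1 + u)) - 1) = u / (1 + u) - p := by field_simp
  have e2 : (1 - p) * (1 / ((1 - p) * (1 + u)) - 1) = 1 / (1 + u) - (1 - p) := by field_simp
  have e3 : u / (1 + u) + 1 / (1 + u) = 1 := by field_simp; ring
  rw [e1] at h3
  rw [e2] at h4
  rw [binEntropy_eq']
  linarith

lemma binEntropy_le_mul_log_inv_add {z : ℝ} (hz1 : z < 1) :
    binEntropy z ≤ z * log z⁻¹ + z := by
  have h1 := log_le_sub_one_of_pos (x := (1 - z)⁻¹) (by simp; linarith)
  have h2 := mul_le_mul_of_nonneg_left h1 (by linarith : 0 ≤ 1 - z)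
  have : (1 - z) * ((1 - z)⁻¹ - 1) = z := by
    have : 1 - z ≠ 0 := by linarith
    field_simp; ring
  rw [binEntropy]; linarith

lemma binEntropy_concave {a b p q : ℝ} (ha : 0 ≤ a) (hb : 0 ≤ b) (hab : a + b = 1)
    (hp : 0 ≤ p) (hp1 : p ≤ 1) (hq : 0 ≤ q) (hq1 : q ≤ 1) :
    a * binEntropy p + b * binEntropy q ≤ binEntropy (a * p + b * q) := by
  simpa using strictConcave_binEntropy.concaveOn.2 ⟨hp, hp1⟩ ⟨hq, hq1⟩ ha hb hab

/-- An affine function minus a nonnegative multiple of the entropy is negative on an interval as soon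
as it is negative at both endpoints. -/
lemma affine_sub_entropy_neg {a b c z z₁ z₂ : ℝ} (hc : 0 ≤ c) (h0 : 0 ≤ z₁) (h1 : z₂ ≤ 1)
    (hz1 : z₁ ≤ z) (hz2 : z ≤ z₂) (hF1 : a + b * z₁ - c * binEntropy z₁ < 0)
    (hF2 : a + b * z₂ - c * binEntropy z₂ < 0) : a + b * z - c * binEntropy z < 0 := by
  rcases (hz1.trans hz2).eq_or_lt with h | h
  · obtain rfl : z = z₁ := by linarith
    exact hF1
  set t := (z - z₁) / (z₂ - z₁)
  have ht0 : 0 ≤ t := div_nonneg (by linarith) (by linarith)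
  have ht1 : t ≤ 1 := by rw [div_le_one] <;> linarith
  have hz : (1 - t) * z₁ + t * z₂ = z := by
    have : t * (z₂ - z₁) = z - z₁ := div_mul_cancel₀ _ (by linarith)
    linarith
  have := binEntropy_concave (a := 1 - t) (b := t) (p := z₁) (q := z₂) (by linarith) ht0 (by ring)
    h0 (by linarith) (by linarith) h1
  rw [hz] at this
  have h3 := mul_le_mul_of_nonneg_left this hc
  have h4 : (1 - t) * (a + b * z₁ - c * binEntropy z₁) + t * (a + b * z₂ - c * binEntropy z₂) < 0 := by
    rcases ht0.eq_or_lt with h | h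
    · rw [← h]; linarith
    · nlinarith
  rw [← hz] at h3 ⊢
  nlinarith

/-- Exponential rate, dual to the probability that a set of relative size `z` in a random
`2 * D`-regular multigraph spans more than `m` (times the number of vertices) edges. -/
noncomputable def dualRate (w x m z D : ℝ) : ℝ :=
  m * log w + 2 * D * z * log x - D * log (1 + 2 * x + w * x ^ 2) + 2 * D * binEntropy z

/-- Some choice of the dual variables `w`, `x` makes the rate exceed `H`. -/
def RateExceeds (H m z D : ℝ) : Prop := ∃ w x, 1 ≤ w ∧ 0 < x ∧ H < dualRate w x m z D

namespace RateExceeds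

variable {H m z D : ℝ}

lemma mono (h : RateExceeds H m z D) {H' m' : ℝ} (hH : H' ≤ H) (hm : m ≤ m') :
    RateExceeds H' m' z D := by
  obtain ⟨w, x, hw, hx, h⟩ := h
  refine ⟨w, x, hw, hx, ?_⟩
  have := mul_le_mul_of_nonneg_right hm (log_nonneg hw)
  unfold dualRate at *
  linarith

lemma flip (h : RateExceeds H m z D) : RateExceeds H (m + D * (1 - 2 * z)) (1 - z) D := by
  obtain ⟨w, x, hw, hx, h⟩ := h
  have hw0 : 0 < w := by linarith
  refine ⟨w, (w * x)⁻¹, hw, by positivity, ?_⟩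
  have e : 1 + 2 * (w * x)⁻¹ + w * ((w * x)⁻¹) ^ 2 = (1 + 2 * x + w * x ^ 2) / (w * x ^ 2) := by
    field_simp; ring
  have p1 : 1 + 2 * x + w * x ^ 2 ≠ 0 := by positivity
  unfold dualRate at *
  rw [e, log_div p1 (by positivity), log_inv, log_mul (by positivity) (by positivity),
    log_mul (by positivity) (by positivity), log_pow, binEntropy_one_sub]
  push_cast
  linarith

lemma mul (h : RateExceeds H m z D) (hH : 0 ≤ H) {c : ℝ} (hc : 1 ≤ c) :
    RateExceeds H (c * m) z (c * D) := by
  obtain ⟨w, x, hw, hx, h⟩ := h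
  refine ⟨w, x, hw, hx, ?_⟩
  have : dualRate w x (c * m) z (c * D) = c * dualRate w x m z D := by unfold dualRate; ring
  rw [this]
  nlinarith

lemma increase {c : ℝ} (h : RateExceeds H (D * z - c) z D) (hH : 0 ≤ H) (hc : 0 ≤ c) (hD : 0 < D)
    {D' : ℝ} (hD' : D ≤ D') : RateExceeds H (D' * z - c) z D' := by
  obtain ⟨w, x, hw, hx, h⟩ := h
  refine ⟨w, x, hw, hx, ?_⟩
  set X := z * log w + 2 * z * log x - log (1 + 2 * x + w * x ^ 2) + 2 * binEntropy z with hX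
  have e : ∀ D, dualRate w x (D * z - c) z D = D * X - c * log w := by
    intro D; unfold dualRate; rw [hX]; ring
  rw [e] at h ⊢
  have h1 := mul_nonneg hc (log_nonneg hw)
  have : 0 < X := by
    by_contra hneg
    nlinarith
  nlinarith

/-- The case of a set with at least the average number of edges. -/
lemma of_average (hz : 0 < z) (hz1 : z < 1) (hD : 1 < D) (hH : H ≤ binEntropy z)
    (hm : D * z ≤ m) : RateExceeds H m z D := by
  have hh := binEntropy_pos hz hz1
  have hz' : 0 < 1 - z := by linarith
  set o := z / (1 - z)
  have ho : 0 < o := div_pos hz hz'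
  set t := min 1 ((D - 1) * binEntropy z / (4 * D * √o))
  have hso : 0 < √o := sqrt_pos.2 ho
  have ht : 0 < t := lt_min one_pos (by have : 0 < D - 1 := by linarith
                                        positivity)
  have ht1 : t ≤ 1 := min_le_left _ _
  have ht2 : t ≤ (D - 1) * binEntropy z / (4 * D * √o) := min_le_right _ _
  refine RateExceeds.mono (H := binEntropy z) (m := D * z)
    ⟨(t ^ 2)⁻¹, √o * t, ?_, by positivity, ?_⟩ hH hm
  · rw [one_le_inv₀ (by positivity)]
    exact pow_le_one₀ ht.le ht1
  rw [le_div_iff₀ (by positivity)] at ht2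
  have e : 1 + 2 * (√o * t) + (t ^ 2)⁻¹ * (√o * t) ^ 2 = (1 + o) * (1 + 2 * (√o * t) / (1 + o)) := by
    rw [mul_pow, sq_sqrt ho.le]; field_simp; ring
  have h1 : log (1 + 2 * (√o * t) / (1 + o)) ≤ 2 * (√o * t) := by
    have h2 := log_le_sub_one_of_pos (x := 1 + 2 * (√o * t) / (1 + o)) (by positivity)
    have h3 : 2 * (√o * t) / (1 + o) ≤ 2 * (√o * t) :=
      div_le_self (by positivity) (by linarith)
    linarith
  have ho1 : 1 + o = (1 - z)⁻¹ := by simp only [o]; field_simp; ring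
  have hl : log (√o * t) = log o / 2 + log t := by
    rw [log_mul (by positivity) (by positivity), log_sqrt ho.le]
  have hlo : log o = log z - log (1 - z) := log_div hz.ne' hz'.ne'
  unfold dualRate
  rw [e, hl, log_mul (by positivity : (1 + o) ≠ 0) (by positivity), log_inv, log_pow,
    show log (1 + o) = -log (1 - z) by rw [ho1, log_inv], hlo]
  have hb := binEntropy_eq' z
  push_cast
  have h5 : D * log (1 + 2 * (√o * t) / (1 + o)) ≤ D * (2 * (√o * t)) := by gcongr
  have h6 : 0 < D - 1 := by linarith
  nlinarith [mul_pos h6 hh]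

end RateExceeds

/-- With probability parameters `p ≥ q` for the two classes of relative sizes `α` and `1 - α`. -/
def Favorable (α k D : ℝ) : Prop :=
  ∀ p q z, 0 ≤ q → q ≤ p → p ≤ 1 → z = α * p + (1 - α) * q → 0 < z → z < 1 →
    RateExceeds (α * binEntropy p + (1 - α) * binEntropy q) (D * z - k * (α * (p - z))) z D

lemma mix_nonneg {α p q : ℝ} (hα : 0 ≤ α) (hα1 : α ≤ 1) (hp : 0 ≤ p) (hp1 : p ≤ 1) (hq : 0 ≤ q)
    (hq1 : q ≤ 1) : 0 ≤ α * binEntropy p + (1 - α) * binEntropy q :=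
  add_nonneg (mul_nonneg hα (binEntropy_nonneg hp hp1))
    (mul_nonneg (by linarith) (binEntropy_nonneg hq hq1))

namespace Favorable

variable {α k D : ℝ}

lemma flip (h : Favorable α k D) : Favorable (1 - α) k D := by
  intro p q z hq hqp hp hz hz0 hz1
  have := (h (1 - q) (1 - p) (1 - z) (by linarith) (by linarith) (by linarith)
    (by rw [hz]; ring) (by linarith) (by linarith)).flip
  rw [binEntropy_one_sub, binEntropy_one_sub, sub_sub_cancel] at this
  refine this.mono (by linarith) (le_of_eq ?_)
  rw [hz]; ring

lemma mul (h : Favorable α k D) (hα : 0 ≤ α) (hα1 : α ≤ 1) {c : ℝ} (hc : 1 ≤ c) :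
    Favorable α (c * k) (c * D) := by
  intro p q z hq hqp hp hz hz0 hz1
  refine ((h p q z hq hqp hp hz hz0 hz1).mul
    (mix_nonneg hα hα1 (by linarith) hp hq (by linarith)) hc).mono le_rfl (le_of_eq ?_)
  ring

lemma increase (h : Favorable α k D) (hα : 0 ≤ α) (hα1 : α ≤ 1) (hk : 0 ≤ k) (hD : 0 < D) {D' : ℝ}
    (hD' : D ≤ D') : Favorable α k D' := by
  intro p q z hq hqp hp hz hz0 hz1
  refine (h p q z hq hqp hp hz hz0 hz1).increase
    (mix_nonneg hα hα1 (by linarith) hp hq (by linarith)) ?_ hD hD'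
  have : p - z = (1 - α) * (p - q) := by rw [hz]; ring
  rw [this]
  have : 0 ≤ p - q := by linarith
  have : 0 ≤ 1 - α := by linarith
  positivity

end Favorable

/-- The estimate that forgets the two-class structure, with deviation at most `z * (1 - z) / c`. -/
def CrudeBound (c D : ℝ) : Prop :=
  ∀ z, 0 < z → z < 1 → RateExceeds (binEntropy z) (D * (z - z * (1 - z) / c)) z D

lemma CrudeBound.rateExceeds {c D : ℝ} (h : CrudeBound c D) (hD : 0 < D) {z D' H m : ℝ}
    (hz0 : 0 < z) (hz1 : z < 1) (hD' : D ≤ D') (hH : H ≤ binEntropy z)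
    (hm : D' * (z - z * (1 - z) / c) ≤ m) : RateExceeds H m z D' := by
  have := (h z hz0 hz1).mul (binEntropy_nonneg hz0.le hz1.le) (c := D' / D) ((one_le_div hD).2 hD')
  rw [← mul_assoc, div_mul_cancel₀ _ hD.ne'] at this
  exact this.mono hH hm

lemma CrudeBound.favorable {c D : ℝ} (h : CrudeBound c D) (hD : 0 < D) (hc : 0 < c) {α k D' : ℝ}
    (hα : 0 ≤ α) (hα1 : α ≤ 1) (hk : 0 ≤ k) (hD' : D ≤ D') (hkD : c * k ≤ D') :
    Favorable α k D' := by
  intro p q z hq hqp hp hz hz0 hz1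
  have hH := binEntropy_concave hα (by linarith : 0 ≤ 1 - α) (by ring) (by linarith : 0 ≤ p) hp hq
    (by linarith : q ≤ 1)
  rw [← hz] at hH
  refine h.rateExceeds hD hz0 hz1 hD' hH ?_
  have hK : α * (p - z) ≤ z * (1 - z) := by
    have hαp : α * p ≤ z := by
      rw [hz]; linarith [mul_nonneg (by linarith : 0 ≤ 1 - α) hq]
    have hzp : z ≤ p := by rw [hz]; nlinarith
    have hp0 : 0 < p := by linarith
    refine le_of_mul_le_mul_left ?_ hp0
    have := mul_le_mul_of_nonneg_right hαp (by linarith : 0 ≤ p - z)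
    nlinarith [mul_nonneg hz0.le (mul_nonneg hz0.le (by linarith : 0 ≤ 1 - p))]
  have h1 : k * (α * (p - z)) ≤ k * (z * (1 - z)) := by gcongr
  have h2 : c * k * (z * (1 - z)) ≤ D' * (z * (1 - z)) := by
    have : 0 < z * (1 - z) := mul_pos hz0 (by linarith)
    gcongr
  have h3 : D' * (z - z * (1 - z) / c) = D' * z - D' * (z * (1 - z)) / c := by ring
  rw [h3]
  have : k * (z * (1 - z)) ≤ D' * (z * (1 - z)) / c := by
    rw [le_div_iff₀ hc]; linarith
  linarith

/-- The rate exceeds the entropy of a small set that spans at most `m ≥ g * z` edges. -/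
lemma RateExceeds.of_small {H m z D g : ℝ} (hz : 0 < z) (hz1 : z < 1) (hg : 1 < g) (hgD : g ≤ D)
    (hsmall : 1 + g + g * log (D / g) < (g - 1) * log z⁻¹) (hH : H ≤ binEntropy z)
    (hm : g * z ≤ m) : RateExceeds H m z D := by
  have hz' : 0 < 1 - z := by linarith
  have hD : 0 < D := by linarith
  have hDg : 0 ≤ log (D / g) := log_nonneg (by rwa [one_le_div (by linarith)])
  set w := g / (D * z)
  have hw0 : 0 < w := by positivity
  have hlw : log w = log z⁻¹ - log (D / g) := by
    rw [← log_div (by positivity) (by positivity)]; congr 1; simp only [w]; field_simp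
  have hw : 1 ≤ w := by
    rw [← log_nonneg_iff hw0, hlw]
    by_contra hneg
    nlinarith
  have e : 1 + 2 * (z / (1 - z)) + w * (z / (1 - z)) ^ 2 = (1 + (w - 1) * z ^ 2) / (1 - z) ^ 2 := by
    field_simp; ring
  have hw1 : 0 ≤ (w - 1) * z ^ 2 := mul_nonneg (by linarith) (by positivity)
  have h1 : log (1 + (w - 1) * z ^ 2) ≤ w * z ^ 2 := by
    have := log_le_sub_one_of_pos (x := 1 + (w - 1) * z ^ 2) (by linarith)
    nlinarith [sq_nonneg z]
  have h2 : D * log (1 + (w - 1) * z ^ 2) ≤ g * z := by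
    have : D * (w * z ^ 2) = g * z := by simp only [w]; field_simp
    nlinarith
  refine RateExceeds.mono (H := binEntropy z) (m := g * z) ⟨w, z / (1 - z), hw, by positivity, ?_⟩ hH hm
  have h3 := binEntropy_le_mul_log_inv_add hz1
  unfold dualRate
  rw [e, log_div (x := 1 + (w - 1) * z ^ 2) (by linarith) (by positivity), log_pow, log_div hz.ne' hz'.ne', hlw]
  have h4 := mul_lt_mul_of_pos_right hsmall hz
  have h5 := binEntropy_eq' z
  push_cast
  rw [h5] at h3 ⊢
  nlinarith

def smallSetList (g D z : ℚ) : List (ℚ × ℚ) :=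
  [((1 + g) * (10000 / 6931), 2), (g, D / g), (g - 1, z)]

lemma smallSetList_neg {t : ℕ} (ht : 0 < t) {g D z₀ : ℚ} (hg : 1 < g) (hz0 : 0 < z₀)
    (h : logSumCheck t (smallSetList g D z₀) = true) {z : ℝ} (hz : 0 < z) (hzz : z ≤ z₀) :
    1 + (g : ℝ) + g * log (D / g) < (g - 1) * log z⁻¹ := by
  have := logSum_neg_of_check ht h
  simp only [logSum, smallSetList, List.map_cons, List.map_nil, List.sum_cons, List.sum_nil] at this
  push_cast at this
  have h2 := log_two_gt_d9
  have h3 : log z ≤ log z₀ := log_le_log hz hzz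
  have hg' : (1 : ℝ) < g := by exact_mod_cast hg
  rw [log_inv]
  nlinarith

/-- `check` certifies consecutive intervals that cover `[a, b)`. -/
def covers {γ : Type*} (check : ℚ → ℚ → γ → Bool) : ℚ → ℚ → List (ℚ × γ) → Bool
  | a, b, [] => decide (b ≤ a)
  | a, b, (c, g) :: l => check a c g && covers check c b l

lemma exists_of_covers {γ : Type*} {check : ℚ → ℚ → γ → Bool} {b : ℚ} {z : ℝ} (hb : z < b) :
    ∀ {l : List (ℚ × γ)} {a : ℚ}, covers check a b l = true → (a : ℝ) ≤ z →
      ∃ a' c g, check a' c g = true ∧ (a' : ℝ) ≤ z ∧ z ≤ c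
  | [], a, h, ha => by
    have : (b : ℝ) ≤ a := by simpa [covers] using h
    linarith
  | (c, g) :: l, a, h, ha => by
    simp only [covers, Bool.and_eq_true] at h
    rcases le_total z c with hc | hc
    · exact ⟨a, c, g, h.1, ha, hc⟩
    · exact exists_of_covers hb h.2 hc

def crudeList (c D w x z₀ z : ℚ) : List (ℚ × ℚ) :=
  [((2 * D - 1) * z, z), ((2 * D - 1) * (1 - z), 1 - z),
    (-(D * (z - (z₀ ^ 2 + z * (1 - 2 * z₀)) / c)), w), (-(2 * D * z), x), (D, 1 + 2 * x + w * x ^ 2)]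

def crudeCheck (c D a b : ℚ) : ℚ × ℚ × ℚ → Bool
  | (w, x, z₀) => decide (0 < a ∧ b < 1 ∧ 1 ≤ w ∧ 0 < x) &&
      (logSumCheck 10000 (crudeList c D w x z₀ a) && logSumCheck 10000 (crudeList c D w x z₀ b))

lemma rateExceeds_of_crudeCheck {c D a b : ℚ} (hc : 0 < c) (hD : 1 ≤ D) {g : ℚ × ℚ × ℚ}
    (h : crudeCheck c D a b g = true) {z : ℝ} (ha : a ≤ z) (hb : z ≤ b) :
    RateExceeds (binEntropy z) (D * (z - z * (1 - z) / c)) z D := by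
  obtain ⟨w, x, z₀⟩ := g
  simp only [crudeCheck, Bool.and_eq_true, decide_eq_true_eq] at h
  obtain ⟨⟨ha0, hb1, hw, hx⟩, h1, h2⟩ := h
  have i1 := logSum_neg_of_check (by norm_num) h1
  have i2 := logSum_neg_of_check (by norm_num) h2
  simp only [logSum, crudeList, List.map_cons, List.map_nil, List.sum_cons, List.sum_nil] at i1 i2
  push_cast at i1 i2
  have hw' : (1 : ℝ) ≤ w := by exact_mod_cast hw
  have hx' : (0 : ℝ) < x := by exact_mod_cast hx
  have hc' : (0 : ℝ) < c := by exact_mod_cast hc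
  have hD' : (1 : ℝ) ≤ D := by exact_mod_cast hD
  refine ⟨w, x, hw', hx', ?_⟩
  have key := affine_sub_entropy_neg (z := z) (z₁ := a) (z₂ := b) (c := 2 * D - 1)
    (a := D * (z₀ ^ 2 / c) * log w + D * log (1 + 2 * x + w * x ^ 2))
    (b := -(D * (1 - (1 - 2 * z₀) / c)) * log w - 2 * D * log x) (by linarith)
    (by exact_mod_cast ha0.le) (by exact_mod_cast hb1.le) ha hb
    (by rw [binEntropy_eq']; refine lt_of_eq_of_lt ?_ i1; ring)
    (by rw [binEntropy_eq']; refine lt_of_eq_of_lt ?_ i2; ring)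
  have hv : D * (z₀ ^ 2 + z * (1 - 2 * z₀) - z * (1 - z)) / c * log w ≥ 0 := by
    have : z₀ ^ 2 + z * (1 - 2 * z₀) - z * (1 - z) = (z - z₀) ^ 2 := by ring
    rw [this]
    have := log_nonneg hw'
    positivity
  unfold dualRate
  have e : D * (z₀ ^ 2 + z * (1 - 2 * z₀) - z * (1 - z)) / c * log w =
    D * (z₀ ^ 2 / c) * log w + D * z * ((1 - 2 * z₀) / c) * log w - D * (z * (1 - z) / c) * log w := by
    ring
  linarith

lemma crudeBound_of_covers {c D z₀ : ℚ} {l : List (ℚ × ℚ × ℚ × ℚ)} (hc : 1 < c) (hD : 1 ≤ D)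
    (hz0 : 0 < z₀) (hg : 1 < D * (1 - 1 / c))
    (hs : logSumCheck 10000 (smallSetList (D * (1 - 1 / c)) D z₀) = true)
    (hl : covers (crudeCheck c D) z₀ (51 / 100) l = true) : CrudeBound c D := by
  have hc' : (1 : ℝ) < c := by exact_mod_cast hc
  have hD' : (1 : ℝ) ≤ D := by exact_mod_cast hD
  have half : ∀ z : ℝ, 0 < z → z ≤ 1 / 2 →
      RateExceeds (binEntropy z) (D * (z - z * (1 - z) / c)) z D := by
    intro z hz hz2
    rcases le_total z z₀ with h | h
    · have := smallSetList_neg (by norm_num) hg hz0 hs hz h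
      refine RateExceeds.of_small hz (by linarith) (by exact_mod_cast hg) ?_ this le_rfl ?_
      · push_cast
        have : (0 : ℝ) ≤ 1 / c := by positivity
        nlinarith
      · push_cast
        have : z * (1 - z) / c ≤ z / c := by gcongr; nlinarith
        have : D * (z * (1 - z) / c) ≤ D * (z / c) := by gcongr
        have e : (D : ℝ) * (1 - 1 / c) * z = D * z - D * (z / c) := by ring
        linarith
    · obtain ⟨a, b, g, h1, h2, h3⟩ := exists_of_covers (z := z) (by push_cast; linarith) hl h
      exact rateExceeds_of_crudeCheck (by linarith) hD h1 h2 h3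
  intro z hz hz1
  rcases le_total z (1 / 2) with h | h
  · exact half z hz h
  · have := (half (1 - z) (by linarith) (by linarith)).flip
    rw [sub_sub_cancel, binEntropy_one_sub] at this
    exact this.mono le_rfl (le_of_eq (by ring))

lemma crudeBound_nine_fifths : CrudeBound (9 / 5) (15 / 2) := by
  have := crudeBound_of_covers (c := 9 / 5) (D := 15 / 2) (z₀ := 49 / 1000)
    (l := [(123/1000, 211/10, 469/10000, 433/5000), (227/1000, 109/10, 27/250, 22/125),
      (337/1000, 807/100, 47/250, 57/200), (221/500, 188/25, 269/1000, 99/250),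
      (51/100, 677/100, 9/25, 477/1000)])
    (by norm_num) (by norm_num) (by norm_num) (by norm_num) (by decide +kernel) (by decide +kernel)
  norm_num at this
  exact this

lemma crudeBound_two : CrudeBound 2 (11 / 2) := by
  have := crudeBound_of_covers (c := 2) (D := 11 / 2) (z₀ := 39 / 1000)
    (l := [(49/500, 341/10, 167/5000, 647/10000), (97/500, 18, 77/1000, 151/1000),
      (73/250, 117/10, 141/1000, 247/1000), (19/50, 991/100, 41/200, 17/50),
      (57/125, 921/100, 133/500, 421/1000), (51/100, 9, 319/1000, 483/1000)])
    (by norm_num) (by norm_num) (by norm_num) (by norm_num) (by decide +kernel) (by decide +kernel)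
  norm_num at this
  exact this

lemma crudeBound_nine_fourths : CrudeBound (9 / 4) (9 / 2) := by
  have := crudeBound_of_covers (c := 9 / 4) (D := 9 / 2) (z₀ := 36 / 1000)
    (l := [(9/100, 262/5, 53/2000, 581/10000), (197/1000, 119/5, 339/5000, 143/1000),
      (313/1000, 157/10, 13/100, 259/1000), (211/500, 131/10, 197/1000, 371/1000),
      (51/100, 123/10, 131/500, 467/1000)])
    (by norm_num) (by norm_num) (by norm_num) (by norm_num) (by decide +kernel) (by decide +kernel)
  norm_num at this
  exact this

/-- Dual upper bound for the entropy minus the rate. -/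
lemma mix_sub_dualRate_le {α k D p q z w x Y : ℝ} (hα : 0 ≤ α) (hα1 : α ≤ 1) (hq : 0 ≤ q)
    (hqp : q ≤ p) (hp : p ≤ 1) (hz : z = α * p + (1 - α) * q) (hw : 0 < w) (hY : 0 < Y) :
    α * binEntropy p + (1 - α) * binEntropy q - dualRate w x (D * z - k * (α * (p - z))) z D ≤
      α * log (1 + Y) + (1 - α) * log (1 + Y * w ^ (-k)) - z * log Y -
        (D + k * α - k) * z * log w +
        D * (-2 * z * log x + log (1 + 2 * x + w * x ^ 2) - 2 * binEntropy z) := by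
  have h1 := mul_le_mul_of_nonneg_left
    (binEntropy_add_mul_log_le (p := p) (by linarith) hp hY) hα
  have h2 := mul_le_mul_of_nonneg_left
    (binEntropy_add_mul_log_le (p := q) (u := Y * w ^ (-k)) hq (by linarith) (by positivity))
    (by linarith : 0 ≤ 1 - α)
  rw [log_mul hY.ne' (by positivity), log_rpow hw] at h2
  unfold dualRate
  have e1 : (1 - α) * (binEntropy q + q * (log Y + -k * log w)) =
    (1 - α) * binEntropy q + (z - α * p) * (log Y - k * log w) := by rw [hz]; ring
  have e2 : α * (binEntropy p + p * log Y) = α * binEntropy p + α * p * log Y := by ring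
  rw [e1] at h2
  rw [e2] at h1
  linarith

def boxList (α α₀ D c : ℚ) (e : ℕ) (ω x Y z : ℚ) : List (ℚ × ℚ) :=
  [(α, 1 + Y), (1 - α₀, 1 + Y / ω ^ e), (-z, Y), (-(2 * c * z), ω), (-(2 * D * z), x),
    (D, 1 + 2 * x + ω ^ 2 * x ^ 2), (2 * D * z, z), (2 * D * (1 - z), 1 - z)]

def boxCheck (α α₀ D c : ℚ) (e : ℕ) (a b : ℚ) : ℚ × ℚ × ℚ → Bool
  | (ω, x, Y) => decide (0 < a ∧ b < 1 ∧ 1 ≤ ω ∧ 0 < x ∧ 0 < Y) &&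
      (logSumCheck 6000 (boxList α α₀ D c e ω x Y a) &&
        logSumCheck 6000 (boxList α α₀ D c e ω x Y b))

lemma neg_of_boxCheck {α α₀ D c a b ω x Y : ℚ} {e : ℕ} (hD : 0 ≤ D)
    (h : boxCheck α α₀ D c e a b (ω, x, Y) = true) {z : ℝ} (ha : a ≤ z) (hb : z ≤ b) :
    (1 : ℝ) ≤ ω ∧ (0 : ℝ) < x ∧ (0 : ℝ) < Y ∧
    α * log (1 + Y) + (1 - α₀) * log (1 + Y / (ω : ℝ) ^ e) - z * log Y -
        c * z * log ((ω : ℝ) ^ 2) +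
        D * (-2 * z * log x + log (1 + 2 * x + (ω : ℝ) ^ 2 * x ^ 2) - 2 * binEntropy z) < 0 := by
  simp only [boxCheck, Bool.and_eq_true, decide_eq_true_eq] at h
  obtain ⟨⟨ha0, hb1, hw, hx, hY⟩, h1, h2⟩ := h
  have i1 := logSum_neg_of_check (by norm_num) h1
  have i2 := logSum_neg_of_check (by norm_num) h2
  simp only [logSum, boxList, List.map_cons, List.map_nil, List.sum_cons, List.sum_nil] at i1 i2
  push_cast at i1 i2
  refine ⟨by exact_mod_cast hw, by exact_mod_cast hx, by exact_mod_cast hY, ?_⟩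
  have hD' : (0 : ℝ) ≤ D := by exact_mod_cast hD
  have key := affine_sub_entropy_neg (z := z) (z₁ := a) (z₂ := b) (c := 2 * D)
    (a := α * log (1 + Y) + (1 - α₀) * log (1 + Y / (ω : ℝ) ^ e) +
      D * log (1 + 2 * x + (ω : ℝ) ^ 2 * x ^ 2))
    (b := -log Y - 2 * c * log ω - 2 * D * log x) (by linarith)
    (by exact_mod_cast ha0.le) (by exact_mod_cast hb1.le) ha hb
    (by rw [binEntropy_eq']; refine lt_of_eq_of_lt ?_ i1; ring)
    (by rw [binEntropy_eq']; refine lt_of_eq_of_lt ?_ i2; ring)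
  rw [log_pow]
  push_cast
  linarith

lemma rpow_neg_half_sq {ω : ℝ} (hω : 0 < ω) {k : ℝ} {e : ℕ} (he : (e : ℝ) = 2 * k) :
    (ω ^ 2) ^ (-k) = (ω ^ e)⁻¹ := by
  rw [← rpow_natCast ω 2, ← rpow_mul hω.le, ← rpow_natCast ω e, ← rpow_neg hω.le, he]
  congr 1; push_cast; ring

/-- A single pair of class sizes. -/
lemma favorable_of_covers {α k D z₀ z₁ : ℚ} {l : List (ℚ × ℚ × ℚ × ℚ)} {e : ℕ}
    (hα : 0 < α) (hα1 : α < 1) (hk : 0 < k) (hkD : k + 1 < D + k * α) (he : (e : ℚ) = 2 * k)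
    (hkD' : k * α + 1 < D) (hz0 : 0 < z₀) (hz1 : z₁ < 1)
    (hs : logSumCheck 10000 (smallSetList (D + k * α - k) D z₀) = true)
    (hs' : logSumCheck 10000 (smallSetList (D - k * α) D (1 - z₁)) = true)
    (hl : covers (boxCheck α α D (D + k * α - k) e) z₀ z₁ l = true) : Favorable α k D := by
  intro p q z hq hqp hp hz hz0' hz1'
  have hα_ : (0 : ℝ) < α := by exact_mod_cast hα
  have hα1_ : (α : ℝ) < 1 := by exact_mod_cast hα1
  have hk_ : (0 : ℝ) < k := by exact_mod_cast hk
  have hkD_ : (k : ℝ) + 1 < D + k * α := by exact_mod_cast hkD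
  have hkD'_ : (k : ℝ) * α + 1 < D := by exact_mod_cast hkD'
  have hH := binEntropy_concave hα_.le (by linarith : (0 : ℝ) ≤ 1 - α) (by ring)
    (by linarith : 0 ≤ p) hp hq (by linarith : q ≤ 1)
  rw [← hz] at hH
  rcases le_total z z₀ with h | h
  · have hs2 := smallSetList_neg (by norm_num) (by linarith) hz0 hs hz0' h
    refine RateExceeds.of_small (g := (D + k * α - k : ℚ)) hz0' hz1' (by push_cast; linarith) ?_ hs2 hH ?_
    · push_cast; nlinarith
    · push_cast
      have : 0 ≤ k * ((1 - α) * q) := mul_nonneg hk_.le (mul_nonneg (by linarith) hq)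
      nlinarith
  rcases le_or_gt (z₁ : ℝ) z with h' | h'
  · have hs2 := smallSetList_neg (z := 1 - z) (by norm_num) (by linarith) (by linarith) hs' (by linarith)
      (by push_cast; linarith)
    have := RateExceeds.of_small (g := (D - k * α : ℚ)) (z := 1 - z) (D := D) (by linarith)
      (by linarith) (by push_cast; linarith) (by push_cast; nlinarith) hs2
      (H := α * binEntropy p + (1 - α) * binEntropy q) (by rw [binEntropy_one_sub]; exact hH) le_rfl
    have := this.flip
    rw [sub_sub_cancel] at this
    refine this.mono le_rfl ?_
    push_cast
    have : k * α * (1 - p) ≥ 0 := mul_nonneg (mul_nonneg hk_.le hα_.le) (by linarith)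
    nlinarith
  obtain ⟨a, b, ⟨ω, x, Y⟩, h1, h2, h3⟩ := exists_of_covers (z := z) h' hl h
  obtain ⟨hω, hx, hY, hneg⟩ := neg_of_boxCheck (by nlinarith) h1 h2 h3
  refine ⟨(ω : ℝ) ^ 2, x, one_le_pow₀ hω, hx, ?_⟩
  have := mix_sub_dualRate_le (k := k) (D := D) (x := x) hα_.le hα1_.le hq hqp hp hz
    (by positivity : (0 : ℝ) < (ω : ℝ) ^ 2) hY
  rw [rpow_neg_half_sq (e := e) (by linarith) (by exact_mod_cast he), ← div_eq_mul_inv] at this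
  push_cast at hneg
  linarith

def intervalCheck (k₁ k₂ : ℚ) (e : ℕ) (a b : ℚ) (g : ℚ × ℚ × ℚ) : Bool :=
  boxCheck (3 / (2 * k₁)) (3 / (2 * k₁)) (k₁ + 3 / 2) 3 e a b g &&
    boxCheck (3 / (2 * k₂)) (3 / (2 * k₁)) (k₂ + 3 / 2) 3 e a b g

lemma quadratic_neg_of_endpoints {P R C a b t : ℝ} (hP : 0 ≤ P) (hab : a < b) (ha : a ≤ t) (hb : t ≤ b)
    (h1 : P * a ^ 2 + R * a + C < 0) (h2 : P * b ^ 2 + R * b + C < 0) :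
    P * t ^ 2 + R * t + C < 0 := by
  have h3 : P * t ^ 2 ≤ P * ((a + b) * t - a * b) := by
    gcongr; nlinarith
  have h4 : (b - a) * (P * ((a + b) * t - a * b) + R * t + C) =
    (b - t) * (P * a ^ 2 + R * a + C) + (t - a) * (P * b ^ 2 + R * b + C) := by ring
  have h5 : (b - t) * (P * a ^ 2 + R * a + C) + (t - a) * (P * b ^ 2 + R * b + C) < 0 := by
    rcases ha.eq_or_lt with h | h
    · subst h; nlinarith
    · nlinarith
  rw [← h4] at h5
  have := neg_of_mul_neg_right h5 (by linarith : 0 ≤ b - a)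
  nlinarith

lemma favorable_one_of_interval {k₁ k₂ z₀ z₁ c D₀ : ℚ} {l : List (ℚ × ℚ × ℚ × ℚ)} {e : ℕ}
    (hc : CrudeBound c D₀) (hc0 : 0 < c) (hD₀ : 0 < D₀) (hD₀k : D₀ ≤ k₂ + 3 / 2)
    (hcz : 3 * c ≤ z₁ * (2 * k₂ + 3)) (hk2 : 3 ≤ k₂) (hk : k₂ < k₁) (he : (e : ℚ) = 2 * k₂)
    (hz0 : 0 < z₀) (hs : logSumCheck 10000 (smallSetList 3 (k₁ + 3 / 2) z₀) = true)
    (hl : covers (intervalCheck k₁ k₂ e) z₀ z₁ l = true) {α : ℝ} (h1 : 3 / (2 * k₁) ≤ α)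
    (h2 : α ≤ 3 / (2 * k₂)) : Favorable α (3 / (2 * α)) (3 / (2 * α) + 3 / 2) := by
  intro p q z hq hqp hp hz hz0' hz1'
  have hk2_ : (3 : ℝ) ≤ k₂ := by exact_mod_cast hk2
  have hk_ : (k₂ : ℝ) < k₁ := by exact_mod_cast hk
  have hα : 0 < α := lt_of_lt_of_le (div_pos (by norm_num) (by linarith)) h1
  have hα1 : α ≤ 1 / 2 := h2.trans (by rw [div_le_div_iff₀] <;> linarith)
  set k := 3 / (2 * α) with hkdef
  have hkα : k * α = 3 / 2 := by simp only [k]; field_simp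
  have hkk1 : k ≤ k₁ := by
    rw [hkdef, div_le_iff₀ (by linarith)]; rw [div_le_iff₀ (by linarith)] at h1; linarith
  have hkk2 : k₂ ≤ k := by
    rw [hkdef, le_div_iff₀ (by linarith)]; rw [le_div_iff₀ (by linarith)] at h2; linarith
  have hH := binEntropy_concave hα.le (by linarith : (0 : ℝ) ≤ 1 - α) (by ring)
    (by linarith : 0 ≤ p) hp hq (by linarith : q ≤ 1)
  rw [← hz] at hH
  have hpz : k * (α * (p - z)) = 3 / 2 * (p - z) := by rw [← mul_assoc, hkα]
  have hαp : α * p ≤ z := by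
    have := mul_nonneg (by linarith : 0 ≤ 1 - α) hq
    linarith
  rcases le_total z z₀ with h | h
  · have hs2 := smallSetList_neg (by norm_num) (by norm_num) hz0 hs hz0' h
    push_cast at hs2
    refine RateExceeds.of_small (g := 3) hz0' hz1' (by norm_num) (by linarith)
      (lt_of_le_of_lt ?_ hs2) hH ?_
    · have : log ((k + 3 / 2) / 3) ≤ log ((k₁ + 3 / 2) / 3) := by
        apply log_le_log <;> [linarith; linarith]
      linarith
    · have : k * (α * p) ≤ k * z := by gcongr
      rw [← mul_assoc, hkα] at this
      rw [hpz]; linarith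
  rcases le_or_gt (z₁ : ℝ) z with h' | h'
  · have hc0_ : (0 : ℝ) < c := by exact_mod_cast hc0
    have hcz_ : 3 * (c : ℝ) ≤ z₁ * (2 * k₂ + 3) := by exact_mod_cast hcz
    have hD₀k_ : (D₀ : ℝ) ≤ k₂ + 3 / 2 := by
      have : ((D₀ : ℚ) : ℝ) ≤ ((k₂ + 3 / 2 : ℚ) : ℝ) := Rat.cast_le.2 hD₀k
      push_cast at this; exact this
    refine hc.rateExceeds (by exact_mod_cast hD₀) hz0' hz1' (by linarith) hH ?_
    have h5 : 3 / 2 * (1 - z) * c ≤ (k + 3 / 2) * z * (1 - z) := by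
      have : 3 / 2 * c ≤ (k + 3 / 2) * z := by nlinarith
      nlinarith
    have h6 : 3 / 2 * (1 - z) ≤ (k + 3 / 2) * (z * (1 - z) / c) := by
      rw [← mul_div_assoc, le_div_iff₀ hc0_]; linarith
    rw [hpz]; linarith
  obtain ⟨a, b, ⟨ω, x, Y⟩, i1, i2, i3⟩ := exists_of_covers (z := z) h' hl h
  simp only [intervalCheck, Bool.and_eq_true] at i1
  obtain ⟨hω, hx, hY, n1⟩ := neg_of_boxCheck (by linarith) i1.1 i2 i3
  obtain ⟨-, -, -, n2⟩ := neg_of_boxCheck (by linarith) i1.2 i2 i3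
  refine ⟨(ω : ℝ) ^ 2, x, one_le_pow₀ hω, hx, ?_⟩
  have hω0 : (0 : ℝ) < ω := by linarith
  have := mix_sub_dualRate_le (k := k) (D := k + 3 / 2) (x := x) hα.le (by linarith) hq hqp hp hz
    (by positivity : (0 : ℝ) < (ω : ℝ) ^ 2) hY
  rw [hkα, show k + 3 / 2 + 3 / 2 - k = 3 by ring] at this
  push_cast at n1 n2
  set L := -2 * z * log x + log (1 + 2 * x + (ω : ℝ) ^ 2 * x ^ 2) - 2 * binEntropy z
  set P := log (1 + (Y : ℝ))
  set Q := log (1 + (Y : ℝ) / (ω : ℝ) ^ e)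
  set S := z * log Y + 3 * z * log ((ω : ℝ) ^ 2)
  have hP : 0 ≤ P := log_nonneg (by linarith)
  have hQ : 0 ≤ Q := log_nonneg (by have : (0 : ℝ) ≤ Y / (ω : ℝ) ^ e := by positivity
                                    linarith)
  have hQ' : log (1 + (Y : ℝ) * ((ω : ℝ) ^ 2) ^ (-k)) ≤ Q := by
    apply log_le_log
    · positivity
    · rw [div_eq_mul_inv, ← rpow_neg_half_sq (e := e) (k := k₂) hω0 (by exact_mod_cast he)]
      gcongr
      exact one_le_pow₀ hω
  have hQ'' : (1 - α) * log (1 + (Y : ℝ) * ((ω : ℝ) ^ 2) ^ (-k)) ≤ (1 - 3 / (2 * k₁)) * Q :=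
    (mul_le_mul_of_nonneg_left hQ' (by linarith)).trans (mul_le_mul_of_nonneg_right (by linarith) hQ)
  have key := quadratic_neg_of_endpoints (P := P) (R := (1 - 3 / (2 * k₁)) * Q - S + 3 / 2 * L)
    (C := 3 / 2 * L) (a := 3 / (2 * (k₁ : ℝ))) (b := 3 / (2 * (k₂ : ℝ))) hP
    (by gcongr) h1 h2 ?_ ?_
  · have e1 : P * α ^ 2 + ((1 - 3 / (2 * (k₁ : ℝ))) * Q - S + 3 / 2 * L) * α + 3 / 2 * L =
        α * (α * P + (1 - 3 / (2 * k₁)) * Q - S + (k + 3 / 2) * L) := by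
      have : α * ((k + 3 / 2) * L) = (k * α) * L + 3 / 2 * α * L := by ring
      rw [mul_add, this, hkα]; ring
    rw [e1] at key
    have := neg_of_mul_neg_right key hα.le
    linarith
  · have e1 : P * (3 / (2 * (k₁ : ℝ))) ^ 2 + ((1 - 3 / (2 * (k₁ : ℝ))) * Q - S + 3 / 2 * L) * (3 / (2 * (k₁ : ℝ))) + 3 / 2 * L =
        (3 / (2 * (k₁ : ℝ))) * ((3 / (2 * (k₁ : ℝ))) * P + (1 - 3 / (2 * k₁)) * Q - S + (k₁ + 3 / 2) * L) := by
      have : (k₁ : ℝ) ≠ 0 := by linarith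
      field_simp; ring
    rw [e1]
    exact mul_neg_of_pos_of_neg (by have : (0 : ℝ) < k₁ := by linarith
                                    positivity) (by linarith)
  · have e1 : P * (3 / (2 * (k₂ : ℝ))) ^ 2 + ((1 - 3 / (2 * (k₁ : ℝ))) * Q - S + 3 / 2 * L) * (3 / (2 * (k₂ : ℝ))) + 3 / 2 * L =
        (3 / (2 * (k₂ : ℝ))) * ((3 / (2 * (k₂ : ℝ))) * P + (1 - 3 / (2 * k₁)) * Q - S + (k₂ + 3 / 2) * L) := by
      have : (k₁ : ℝ) ≠ 0 := by linarith
      have : (k₂ : ℝ) ≠ 0 := by linarith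
      field_simp; ring
    rw [e1]
    exact mul_neg_of_pos_of_neg (by positivity) (by linarith)

def scaledList (w Y t : ℚ) : List (ℚ × ℚ) :=
  [(1, 1 + Y), ((20 / 3 * Y / w ^ 10 + 69 / 40 * (w - 1) * t ^ 2) * (10000 / 6931), 2), (-t, Y),
    (-(3 * t), w)]

def scaledCheck (a b : ℚ) : ℚ × ℚ → Bool
  | (w, Y) => decide (0 < a ∧ 2 ≤ w ∧ 0 < Y ∧ a < b) &&
      (logSumCheck 8000 (scaledList w Y a) && logSumCheck 8000 (scaledList w Y b))

/-- The bound for the entropy minus the rate, relative to `α`, at relative size `α * t`. -/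
noncomputable def scaledBound (w Y t : ℝ) : ℝ :=
  log (1 + Y) + 20 / 3 * Y / w ^ 10 + 69 / 40 * (w - 1) * t ^ 2 - t * log Y - 3 * t * log w

lemma scaledBound_neg_of_check {a b w Y : ℚ} (h : scaledCheck a b (w, Y) = true) {t : ℝ}
    (ha : a ≤ t) (hb : t ≤ b) : (2 : ℝ) ≤ w ∧ (0 : ℝ) < Y ∧ scaledBound w Y t < 0 := by
  simp only [scaledCheck, Bool.and_eq_true, decide_eq_true_eq] at h
  obtain ⟨⟨ha0, hw, hY, hab⟩, h1, h2⟩ := h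
  have i1 := logSum_neg_of_check (by norm_num) h1
  have i2 := logSum_neg_of_check (by norm_num) h2
  simp only [logSum, scaledList, List.map_cons, List.map_nil, List.sum_cons, List.sum_nil] at i1 i2
  push_cast at i1 i2
  have hw' : (2 : ℝ) ≤ w := by exact_mod_cast hw
  have hY' : (0 : ℝ) < Y := by exact_mod_cast hY
  refine ⟨hw', hY', ?_⟩
  have hl := log_two_gt_d9
  have hP : (0 : ℝ) ≤ 69 / 40 * ((w : ℝ) - 1) := by linarith
  have bd : ∀ s : ℝ, 20 / 3 * Y / (w : ℝ) ^ 10 + 69 / 40 * (w - 1) * s ^ 2 ≤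
      (20 / 3 * Y / (w : ℝ) ^ 10 + 69 / 40 * (w - 1) * s ^ 2) * (10000 / 6931) * log 2 := by
    intro s
    have : 0 ≤ 20 / 3 * Y / (w : ℝ) ^ 10 + 69 / 40 * (w - 1) * s ^ 2 := by positivity
    nlinarith
  have b1 := bd a
  have b2 := bd b
  have := quadratic_neg_of_endpoints (P := 69 / 40 * ((w : ℝ) - 1)) (R := -log Y - 3 * log w)
    (C := log (1 + Y) + 20 / 3 * Y / (w : ℝ) ^ 10) (a := a) (b := b) hP (by exact_mod_cast hab) ha hb
    (by linarith) (by linarith)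
  unfold scaledBound
  linarith

lemma scaledBound_neg_of_small {t : ℝ} (ht : 0 < t) (ht1 : t ≤ 1 / 4) :
    scaledBound (2 / t) t t < 0 := by
  unfold scaledBound
  have h1 := log_le_sub_one_of_pos (x := 1 + t) (by linarith)
  have h2 : 20 / 3 * t / (2 / t) ^ 10 ≤ t * (1 / 1000) := by
    have : 20 / 3 * t / (2 / t) ^ 10 = t * (20 / 3 * (t / 2) ^ 10) := by field_simp
    rw [this]
    have : (t / 2) ^ 10 ≤ (1 / 8) ^ 10 := pow_le_pow_left₀ (by positivity) (by linarith) _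
    gcongr
    norm_num at this ⊢
    linarith
  have h3 : 69 / 40 * (2 / t - 1) * t ^ 2 = 69 / 40 * (2 * t - t ^ 2) := by field_simp
  have h4 : log t ≤ -(2 * log 2) := by
    have := log_le_log ht ht1
    rwa [show (1 / 4 : ℝ) = (2 ^ 2)⁻¹ by norm_num, log_inv, log_pow, Nat.cast_ofNat] at this
  rw [log_div (by norm_num) ht.ne', h3]
  have h5 := log_two_gt_d9
  have h6 : t * log t ≤ t * (-(2 * log 2)) := by gcongr
  have h7 : t * 0.6931471803 ≤ t * log 2 := by gcongr
  nlinarith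

lemma mul_rpow_neg_le {w u : ℝ} (hw : 2 ≤ w) (hu : 20 / 3 ≤ u) :
    u * w ^ (-(3 / 2 * u)) ≤ 20 / 3 / w ^ 10 := by
  have hw0 : 0 < w := by linarith
  have hu0 : 0 < u := by linarith
  rw [← log_le_log_iff (by positivity) (by positivity), log_mul (by positivity) (by positivity),
    log_div (by positivity) (by positivity), log_rpow hw0, log_pow]
  have h1 := log_le_sub_one_of_pos (x := u / (20 / 3)) (by positivity)
  rw [log_div (by positivity) (by norm_num)] at h1
  have h2 : log 2 ≤ log w := log_le_log (by norm_num) hw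
  have h3 := log_two_gt_d9
  push_cast
  nlinarith

lemma rateExceeds_of_scaledBound {α p q z w Y : ℝ} (hα : 0 < α) (hα1 : α ≤ 3 / 20) (hq : 0 ≤ q)
    (hqp : q ≤ p) (hp : p ≤ 1) (hz : z = α * p + (1 - α) * q) (hz0 : 0 < z) (hz1 : z < 1)
    (hw : 2 ≤ w) (hY : 0 < Y) (h : scaledBound w Y (z / α) < 0) :
    RateExceeds (α * binEntropy p + (1 - α) * binEntropy q)
      ((3 / (2 * α) + 3 / 2) * z - 3 / (2 * α) * (α * (p - z))) z (3 / (2 * α) + 3 / 2) := by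
  have hw0 : 0 < w := by linarith
  have hz' : 0 < 1 - z := by linarith
  refine ⟨w, z / (1 - z), by linarith, by positivity, ?_⟩
  have := mix_sub_dualRate_le (k := 3 / (2 * α)) (D := 3 / (2 * α) + 3 / 2) (x := z / (1 - z)) hα.le
    (by linarith) hq hqp hp hz hw0 hY
  refine sub_neg.1 (this.trans_lt ?_)
  have e : 1 + 2 * (z / (1 - z)) + w * (z / (1 - z)) ^ 2 = (1 + (w - 1) * z ^ 2) / (1 - z) ^ 2 := by
    field_simp; ring
  have hw1 : 0 ≤ (w - 1) * z ^ 2 := mul_nonneg (by linarith) (by positivity)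
  have h1 := log_le_sub_one_of_pos (x := 1 + (w - 1) * z ^ 2) (by linarith)
  have h2 : -2 * z * log (z / (1 - z)) + log (1 + 2 * (z / (1 - z)) + w * (z / (1 - z)) ^ 2) -
      2 * binEntropy z ≤ (w - 1) * z ^ 2 := by
    rw [e, log_div (x := 1 + (w - 1) * z ^ 2) (by linarith) (by positivity), log_pow,
      log_div hz0.ne' hz'.ne', binEntropy_eq']
    push_cast
    linarith
  have h3 : (3 / (2 * α) + 3 / 2) * (-2 * z * log (z / (1 - z)) +
      log (1 + 2 * (z / (1 - z)) + w * (z / (1 - z)) ^ 2) - 2 * binEntropy z) ≤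
      α * (69 / 40 * (w - 1) * (z / α) ^ 2) := by
    refine (mul_le_mul_of_nonneg_left h2 (by positivity)).trans ?_
    have e2 : (3 / (2 * α) + 3 / 2) * ((w - 1) * z ^ 2) = (3 / 2 * (1 + α)) * ((w - 1) * z ^ 2) / α := by
      field_simp
    have e3 : α * (69 / 40 * (w - 1) * (z / α) ^ 2) = 69 / 40 * ((w - 1) * z ^ 2) / α := by
      field_simp
    rw [e2, e3]
    gcongr
    linarith
  have h4 : (1 - α) * log (1 + Y * w ^ (-(3 / (2 * α)))) ≤ α * (20 / 3 * Y / w ^ 10) := by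
    have g1 := log_le_sub_one_of_pos (x := 1 + Y * w ^ (-(3 / (2 * α)))) (by positivity)
    have g2 := mul_rpow_neg_le hw (u := 1 / α) (by rw [le_div_iff₀ hα]; linarith)
    rw [show -(3 / 2 * (1 / α)) = -(3 / (2 * α)) by field_simp] at g2
    have g3 : (1 - α) * log (1 + Y * w ^ (-(3 / (2 * α)))) ≤ 1 * (Y * w ^ (-(3 / (2 * α)))) := by
      refine mul_le_mul (by linarith) (by linarith) (log_nonneg ?_) (by norm_num)
      have : 0 < Y * w ^ (-(3 / (2 * α))) := by positivity
      linarith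
    refine g3.trans ?_
    have g4 := mul_le_mul_of_nonneg_left g2 (by positivity : 0 ≤ α * Y)
    have e4 : α * Y * (1 / α * w ^ (-(3 / (2 * α)))) = 1 * (Y * w ^ (-(3 / (2 * α)))) := by field_simp
    rw [e4] at g4
    refine g4.trans (le_of_eq (by ring))
  have h5 : α * scaledBound w Y (z / α) < 0 := mul_neg_of_pos_of_neg hα h
  have e5 : z * log Y = α * ((z / α) * log Y) := by field_simp
  have e6 : (3 / (2 * α) + 3 / 2 + 3 / (2 * α) * α - 3 / (2 * α)) * z * log w =
    α * (3 * (z / α) * log w) := by field_simp; ring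
  unfold scaledBound at h5
  rw [e5, e6]
  linarith

lemma favorable_one_of_small {α : ℝ} (hα : 0 < α) (hα1 : α ≤ 3 / 20) :
    Favorable α (3 / (2 * α)) (3 / (2 * α) + 3 / 2) := by
  intro p q z hq hqp hp hz hz0 hz1
  rcases le_or_gt (z / α) (1 / 4) with h | h
  · have h0 : 0 < z / α := by positivity
    exact rateExceeds_of_scaledBound hα hα1 hq hqp hp hz hz0 hz1
      (by rw [le_div_iff₀ h0]; linarith) h0 (scaledBound_neg_of_small h0 h)
  rcases le_or_gt (9 / 5) (z / α) with h' | h'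
  · rw [le_div_iff₀ hα] at h'
    have hH := binEntropy_concave hα.le (by linarith : (0 : ℝ) ≤ 1 - α) (by ring)
      (by linarith : 0 ≤ p) hp hq (by linarith : q ≤ 1)
    rw [← hz] at hH
    have hk : 10 ≤ 3 / (2 * α) := by rw [le_div_iff₀ (by positivity)]; linarith
    refine crudeBound_nine_fifths.rateExceeds (by norm_num) hz0 hz1 (by linarith) hH ?_
    have e : 3 / (2 * α) * (α * (p - z)) = 3 / 2 * (p - z) := by field_simp
    have e2 : 3 / (2 * α) * (9 / 5 * α) ≤ 3 / (2 * α) * z := by gcongr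
    have e3 : 3 / (2 * α) * (9 / 5 * α) = 27 / 10 := by field_simp; norm_num
    rw [e]
    rw [e3] at e2
    have : (3 / 2) * (1 - z) ≤ (3 / (2 * α) * z) * (1 - z) / (9 / 5) := by
      rw [le_div_iff₀ (by norm_num)]
      nlinarith
    have h6 : 0 ≤ z * (1 - z) := mul_nonneg hz0.le (by linarith)
    nlinarith
  · obtain ⟨a, b, ⟨w, Y⟩, h1, h2, h3⟩ := exists_of_covers (z := z / α) (check := scaledCheck)
      (a := 1 / 4) (b := 9 / 5) (by push_cast; exact h')
      (l := [(601/1000, 167/50, 417/500), (217/250, 239/100, 247/100), (9/5, 2, 25/2)])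
      (by decide +kernel) (by push_cast; exact h.le)
    obtain ⟨hw, hY, hneg⟩ := scaledBound_neg_of_check h1 h2 h3
    exact rateExceeds_of_scaledBound hα hα1 hq hqp hp hz hz0 hz1 hw hY hneg

lemma favorable_one {α : ℝ} (hα : 0 < α) (hα1 : α ≤ 1 / 2) :
    Favorable α (3 / (2 * α)) (3 / (2 * α) + 3 / 2) := by
  rcases le_total α (3 / 20) with h | h
  · exact favorable_one_of_small hα h
  rcases le_total α (3 / 16) with h' | h'
  · exact favorable_one_of_interval (k₁ := 10) (k₂ := 8) (e := 16) (z₀ := 7 / 400) (z₁ := 57 / 200)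
      (c := 9 / 5) (D₀ := 15 / 2) (by push_cast; exact crudeBound_nine_fifths)
      (by norm_num) (by norm_num) (by norm_num) (by norm_num) (by norm_num) (by norm_num)
      (by norm_num) (by norm_num) (by decide +kernel)
      (l := [(41/1000, 403/100, 217/10000, 229/1000), (73/1000, 11/4, 117/2500, 307/500),
        (109/1000, 21/10, 201/2500, 39/25), (149/1000, 91/50, 3/25, 31/10),
        (26/125, 33/20, 33/200, 141/10), (57/200, 39/20, 47/250, 1500)]) (by decide +kernel)
      (by norm_num; linarith) (by norm_num; linarith)
  clear h
  rcases le_total α (3 / 14) with h | h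
  · exact favorable_one_of_interval (k₁ := 8) (k₂ := 7) (e := 14) (z₀ := 47 / 2000) (z₁ := 159 / 500)
      (c := 9 / 5) (D₀ := 15 / 2) (by push_cast; exact crudeBound_nine_fifths)
      (by norm_num) (by norm_num) (by norm_num) (by norm_num) (by norm_num) (by norm_num)
      (by norm_num) (by norm_num) (by decide +kernel)
      (l := [(59/1000, 4, 18/625, 53/200), (107/1000, 263/100, 133/2000, 803/1000),
        (159/1000, 2, 117/1000, 47/20), (9/40, 87/50, 22/125, 813/100),
        (159/500, 193/100, 107/500, 360)]) (by decide +kernel)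
      (by norm_num; linarith) (by norm_num; linarith)
  clear h'
  rcases le_total α (3 / 12) with h' | h'
  · exact favorable_one_of_interval (k₁ := 7) (k₂ := 6) (e := 12) (z₀ := 7 / 250) (z₁ := 9 / 25)
      (c := 9 / 5) (D₀ := 15 / 2) (by push_cast; exact crudeBound_nine_fifths)
      (by norm_num) (by norm_num) (by norm_num) (by norm_num) (by norm_num) (by norm_num)
      (by norm_num) (by norm_num) (by decide +kernel)
      (l := [(7/100, 102/25, 327/10000, 279/1000), (129/1000, 53/20, 389/5000, 22/25),
        (191/1000, 101/50, 7/50, 257/100), (271/1000, 179/100, 21/100, 10),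
        (9/25, 101/50, 249/1000, 265)]) (by decide +kernel)
      (by norm_num; linarith) (by norm_num; linarith)
  clear h
  rcases le_total α (3 / 10) with h | h
  · exact favorable_one_of_interval (k₁ := 6) (k₂ := 5) (e := 10) (z₀ := 17 / 500) (z₁ := 231 / 500)
      (c := 2) (D₀ := 11 / 2) (by push_cast; exact crudeBound_two)
      (by norm_num) (by norm_num) (by norm_num) (by norm_num) (by norm_num) (by norm_num)
      (by norm_num) (by norm_num) (by decide +kernel)
      (l := [(17/200, 497/100, 353/10000, 129/500), (161/1000, 67/25, 233/2500, 99/100),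
        (241/1000, 51/25, 7/40, 149/50), (17/50, 187/100, 261/1000, 141/10),
        (231/500, 227/100, 309/1000, 507)]) (by decide +kernel)
      (by norm_num; linarith) (by norm_num; linarith)
  clear h'
  rcases le_total α (3 / 8) with h' | h'
  · exact favorable_one_of_interval (k₁ := 5) (k₂ := 4) (e := 8) (z₀ := 21 / 500) (z₁ := 273 / 500)
      (c := 2) (D₀ := 11 / 2) (by push_cast; exact crudeBound_two)
      (by norm_num) (by norm_num) (by norm_num) (by norm_num) (by norm_num) (by norm_num)
      (by norm_num) (by norm_num) (by decide +kernel)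
      (l := [(21/200, 113/25, 21/500, 151/500), (41/200, 14/5, 111/1000, 113/100),
        (153/500, 213/100, 219/1000, 69/20), (52/125, 201/100, 163/500, 77/5),
        (273/500, 117/50, 409/1000, 226)]) (by decide +kernel)
      (by norm_num; linarith) (by norm_num; linarith)
  clear h
  rcases le_total α (3 / 7) with h | h
  · exact favorable_one_of_interval (k₁ := 4) (k₂ := 7 / 2) (e := 7) (z₀ := 27 / 500) (z₁ := 27 / 40)
      (c := 9 / 4) (D₀ := 9 / 2) (by push_cast; exact crudeBound_nine_fourths)
      (by norm_num) (by norm_num) (by norm_num) (by norm_num) (by norm_num) (by norm_num)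
      (by norm_num) (by norm_num) (by decide +kernel)
      (l := [(27/200, 523/100, 453/10000, 67/200), (69/250, 74/25, 137/1000, 127/100),
        (413/1000, 221/100, 291/1000, 537/100), (567/1000, 229/100, 419/1000, 266/5),
        (27/40, 147/50, 119/250, 1280)]) (by decide +kernel)
      (by norm_num; linarith) (by norm_num; linarith)
  · exact favorable_one_of_interval (k₁ := 7 / 2) (k₂ := 3) (e := 6) (z₀ := 1 / 16) (z₁ := 3 / 4)
      (c := 9 / 4) (D₀ := 9 / 2) (by push_cast; exact crudeBound_nine_fourths)
      (by norm_num) (by norm_num) (by norm_num) (by norm_num) (by norm_num) (by norm_num)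
      (by norm_num) (by norm_num) (by decide +kernel)
      (l := [(157/1000, 561/100, 119/2500, 313/1000), (329/1000, 157/50, 153/1000, 139/100),
        (483/1000, 47/20, 339/1000, 633/100), (313/500, 61/25, 491/1000, 242/5),
        (741/1000, 281/100, 127/200, 444), (3/4, 71/25, 149/200, 682)]) (by decide +kernel)
      (by norm_num; linarith) (by norm_num; linarith)

lemma favorable_quarter : Favorable (1 / 4) 2 (7 / 2) := by
  have := favorable_of_covers (α := 1 / 4) (k := 2) (D := 7 / 2) (z₀ := 2 / 125) (z₁ := 9 / 10)
    (e := 4) (l := [(1/25, 59/5, 119/12500, 471/5000), (1/10, 137/20, 57/2000, 161/500),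
      (1/4, 102/25, 171/2000, 42/25), (563/1000, 433/100, 81/500, 313/5),
      (9/10, 56/5, 167/1000, 32100)])
    (by norm_num) (by norm_num) (by norm_num) (by norm_num) (by norm_num) (by norm_num)
    (by norm_num) (by norm_num) (by decide +kernel) (by decide +kernel) (by decide +kernel)
  norm_num at this
  norm_num
  exact this

lemma favorable_sixth : Favorable (1 / 6) 3 (11 / 2) := by
  have := favorable_of_covers (α := 1 / 6) (k := 3) (D := 11 / 2) (z₀ := 1 / 50) (z₁ := 9 / 10)
    (e := 6) (l := [(1/20, 51/5, 29/2500, 87/500), (1/8, 143/25, 23/625, 767/1000),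
      (313/1000, 94/25, 961/10000, 331/10), (783/1000, 51/5, 101/1000, 805000),
      (9/10, 313/10, 1/10, 6900000000)])
    (by norm_num) (by norm_num) (by norm_num) (by norm_num) (by norm_num) (by norm_num)
    (by norm_num) (by norm_num) (by decide +kernel) (by decide +kernel) (by decide +kernel)
  norm_num at this
  norm_num
  exact this

lemma favorable_third : Favorable (1 / 3) 3 5 := by
  have := favorable_of_covers (α := 1 / 3) (k := 3) (D := 5) (z₀ := 1 / 50) (z₁ := 9 / 10)
    (e := 6) (l := [(1/20, 61/5, 101/10000, 789/10000), (1/8, 167/25, 21/625, 291/1000),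
      (313/1000, 351/100, 61/500, 41/25), (5/8, 169/50, 61/250, 250),
      (9/10, 207/25, 1/4, 669000)])
    (by norm_num) (by norm_num) (by norm_num) (by norm_num) (by norm_num) (by norm_num)
    (by norm_num) (by norm_num) (by decide +kernel) (by decide +kernel) (by decide +kernel)
  norm_num at this
  norm_num
  exact this

lemma favorable_of_le {k r : ℝ} (hr : 3 ≤ r) (hrk : r ≤ k) :
    Favorable (r / (2 * k)) k (k + r / 2) := by
  have hk : 0 < k := by linarith
  have h1 : r / (2 * k) ≤ 1 / 2 := by rw [div_le_div_iff₀ (by positivity) (by norm_num)]; linarith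
  have h := (favorable_one (α := r / (2 * k)) (by positivity) h1).mul (by positivity) (by linarith)
    (c := r / 3) (by linarith)
  have e1 : r / 3 * (3 / (2 * (r / (2 * k)))) = k := by field_simp
  have e2 : r / 3 * (3 / (2 * (r / (2 * k))) + 3 / 2) = k + r / 2 := by field_simp
  rwa [e1, e2] at h

lemma favorable_of_lt_two_mul {k r : ℕ} (hk : 2 ≤ k) (hr : 0 < r) (hrk : r ≤ k) (h2 : r = 2 → k ≠ 2) :
    Favorable ((r : ℝ) / (2 * k)) k (2 * k - r / 2) := by
  have hk0 : (0 : ℝ) < k := by positivity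
  have hrk' : (r : ℝ) ≤ k := by exact_mod_cast hrk
  have h1 : (r : ℝ) / (2 * k) ≤ 1 := by rw [div_le_one (by positivity)]; linarith
  by_cases h3 : 3 ≤ r
  · have h3' : (3 : ℝ) ≤ r := by exact_mod_cast h3
    exact (favorable_of_le h3' hrk').increase (by positivity) h1 hk0.le (by positivity) (by linarith)
  obtain rfl | rfl : r = 1 ∨ r = 2 := by omega
  · obtain rfl | rfl | h4 : k = 2 ∨ k = 3 ∨ 4 ≤ k := by omega
    · convert favorable_quarter using 1 <;> norm_num
    · convert favorable_sixth using 1 <;> norm_num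
    · have h4' : (4 : ℝ) ≤ k := by exact_mod_cast h4
      refine crudeBound_nine_fifths.favorable (by norm_num) (by norm_num) (by positivity) h1
        hk0.le ?_ ?_ <;> push_cast <;> linarith
  · obtain rfl | rfl | h4 : k = 3 ∨ k = 4 ∨ 5 ≤ k := by have := h2 rfl; omega
    · convert favorable_third using 1 <;> norm_num
    · convert favorable_quarter.mul (by norm_num) (by norm_num) (c := 2) (by norm_num) using 1 <;>
        norm_num
    · have h4' : (5 : ℝ) ≤ k := by exact_mod_cast h4
      refine crudeBound_nine_fifths.favorable (by norm_num) (by norm_num) (by positivity) h1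
        hk0.le ?_ ?_ <;> push_cast <;> linarith

lemma favorable_of_remainder {k s r : ℕ} (hk : 2 ≤ k) (hs : 1 ≤ s) (hr : 0 < r) (hrk : r < 2 * k)
    (hd : 2 * k + 2 < 2 * k * s + r) : Favorable ((r : ℝ) / (2 * k)) k (k * s + r / 2) := by
  have hk0 : (0 : ℝ) < k := by positivity
  have hk2 : (2 : ℝ) ≤ k := by exact_mod_cast hk
  have hr1 : (1 : ℝ) ≤ r := by exact_mod_cast hr
  have hrk' : (r : ℝ) < 2 * k := by exact_mod_cast hrk
  have h1 : (r : ℝ) / (2 * k) ≤ 1 := by rw [div_le_one (by positivity)]; linarith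
  obtain rfl | hs2 : s = 1 ∨ 2 ≤ s := by omega
  · rcases le_or_gt r k with h | h
    · have h3 : 3 ≤ r := by omega
      have := favorable_of_le (k := k) (r := r) (by exact_mod_cast h3) (by exact_mod_cast h)
      simpa using this
    · have := (favorable_of_lt_two_mul (k := k) (r := 2 * k - r) hk (by omega) (by omega)
        (by omega)).flip
      rw [Nat.cast_sub hrk.le] at this
      convert this using 1
      · push_cast; field_simp; ring
      · push_cast; ring
  · have hs2' : (2 : ℝ) ≤ s := by exact_mod_cast hs2
    have h2k : (k : ℝ) * 2 ≤ k * s := by gcongr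
    by_cases hk3 : 3 ≤ k
    · have hk3' : (3 : ℝ) ≤ k := by exact_mod_cast hk3
      exact crudeBound_two.favorable (by norm_num) (by norm_num) (by positivity) h1 hk0.le
        (by linarith) (by linarith)
    · obtain rfl : k = 2 := by omega
      push_cast at *
      exact crudeBound_nine_fourths.favorable (by norm_num) (by norm_num) (by positivity) h1 hk0.le
        (by linarith) (by linarith)

/-- The exponential rate needed for the union bound over vertex sets. -/
lemma rateExceeds_of_remainder {k s r : ℕ} (hk : 2 ≤ k) (hs : 1 ≤ s) (hr : 0 < r) (hrk : r < 2 * k)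
    (hd : 2 * k + 2 < 2 * k * s + r) {α p q z : ℝ} (hα : α = (r : ℝ) / (2 * k)) (hp : 0 ≤ p)
    (hp1 : p ≤ 1) (hq : 0 ≤ q) (hq1 : q ≤ 1) (hz : z = α * p + (1 - α) * q) (hz0 : 0 < z)
    (hz1 : z < 1) :
    RateExceeds (α * binEntropy p + (1 - α) * binEntropy q) (k * s * z + k * α * p) z
      (k * s + r / 2) := by
  have hk0 : (0 : ℝ) < k := by positivity
  have hk2 : (2 : ℝ) ≤ k := by exact_mod_cast hk
  have hs1 : (1 : ℝ) ≤ s := by exact_mod_cast hs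
  have hr1 : (1 : ℝ) ≤ r := by exact_mod_cast hr
  have hrk' : (r : ℝ) < 2 * k := by exact_mod_cast hrk
  have hα0 : 0 ≤ α := by rw [hα]; positivity
  have hα1 : α ≤ 1 := by rw [hα, div_le_one (by positivity)]; linarith
  have hkα : (k : ℝ) * α = r / 2 := by rw [hα]; field_simp
  have hm : k * s * z + k * α * p = (k * s + r / 2) * z + k * (α * (p - z)) := by
    rw [← hkα]; ring
  rcases le_total q p with h | h
  · refine RateExceeds.of_average hz0 hz1 ?_ ?_ ?_
    · nlinarith
    · rw [hz]; exact binEntropy_concave hα0 (by linarith) (by ring) hp hp1 hq hq1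
    · rw [hm]
      have : 0 ≤ p - z := by rw [hz]; nlinarith
      have : 0 ≤ k * (α * (p - z)) := by positivity
      linarith
  · have hf := (favorable_of_remainder hk hs hr hrk hd).flip q p z hp h hq1
      (by rw [hz, hα]; ring) hz0 hz1
    refine hf.mono (le_of_eq ?_) (le_of_eq ?_)
    · rw [hα]; ring
    · rw [hm, ← hα, hz]; ring

section BinomialBounds

lemma choose_mul_pow_le_mode {n j : ℕ} (hj : j ≤ n) (hn : 0 < n) (i : ℕ) (hi : i ≤ n) :
    (n.choose i : ℝ) * (j / n) ^ i * (1 - j / n) ^ (n - i) ≤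
      (n.choose j : ℝ) * (j / n) ^ j * (1 - j / n) ^ (n - j) := by
  have hn' : (0 : ℝ) < n := by exact_mod_cast hn
  have hj' : (j : ℝ) ≤ n := by exact_mod_cast hj
  set p : ℝ := j / n with hp
  have hp0 : 0 ≤ p := by positivity
  have hq0 : 0 ≤ 1 - p := by rw [sub_nonneg, hp, div_le_one hn']; exact hj'
  have hjp : (j : ℝ) = n * p := by rw [hp]; field_simp
  have key : ∀ i, i + 1 ≤ n → ∃ c : ℝ, 0 ≤ c ∧
      (n.choose i : ℝ) * p ^ i * (1 - p) ^ (n - i) = c * ((i + 1) * (1 - p)) ∧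
      (n.choose (i + 1) : ℝ) * p ^ (i + 1) * (1 - p) ^ (n - (i + 1)) = c * ((n - i) * p) := by
    intro i hi
    have h1 : (n.choose (i + 1) : ℝ) * (i + 1) = n.choose i * (n - i) := by
      have := Nat.choose_succ_right_eq n i
      rw [← Nat.cast_sub (by omega)]
      exact_mod_cast this
    have h2 : n - i = n - (i + 1) + 1 := by omega
    refine ⟨(n.choose i : ℝ) * p ^ i * (1 - p) ^ (n - (i + 1)) / (i + 1), by positivity, ?_, ?_⟩
    · rw [h2, pow_succ]; field_simp
    · rw [pow_succ, div_mul_eq_mul_div, eq_div_iff (by positivity)]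
      linear_combination p ^ i * p * (1 - p) ^ (n - (i + 1)) * h1
  rcases le_total i j with hij | hij
  · refine Nat.le_induction (P := fun t _ => t ≤ j → (n.choose i : ℝ) * p ^ i * (1 - p) ^ (n - i) ≤
      (n.choose t : ℝ) * p ^ t * (1 - p) ^ (n - t)) (fun _ => le_rfl) ?_ j hij le_rfl
    intro t _ ih ht
    refine (ih (by omega)).trans ?_
    obtain ⟨c, hc, e1, e2⟩ := key t (by omega)
    rw [e1, e2]
    have : (t : ℝ) + 1 ≤ j := by exact_mod_cast ht
    refine mul_le_mul_of_nonneg_left ?_ hc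
    nlinarith
  · refine Nat.le_induction (P := fun t _ => t ≤ n → (n.choose t : ℝ) * p ^ t * (1 - p) ^ (n - t) ≤
      (n.choose j : ℝ) * p ^ j * (1 - p) ^ (n - j)) (fun _ => le_rfl) ?_ i hij hi
    intro t hjt ih ht
    refine le_trans ?_ (ih (by omega))
    obtain ⟨c, hc, e1, e2⟩ := key t (by omega)
    rw [e1, e2]
    have : (j : ℝ) ≤ t := by exact_mod_cast hjt
    refine mul_le_mul_of_nonneg_left ?_ hc
    nlinarith

lemma sum_choose_mul_pow (n : ℕ) (p : ℝ) :
    ∑ i ∈ Finset.range (n + 1), (n.choose i : ℝ) * p ^ i * (1 - p) ^ (n - i) = 1 := by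
  have := add_pow p (1 - p) n
  rw [add_sub_cancel, one_pow] at this
  refine Eq.trans ?_ this.symm
  exact Finset.sum_congr rfl fun i _ => by ring

lemma one_le_mul_choose_mul_pow {n j : ℕ} (hj : j ≤ n) (hn : 0 < n) :
    1 ≤ ((n : ℝ) + 1) * ((n.choose j : ℝ) * (j / n) ^ j * (1 - j / n) ^ (n - j)) := by
  refine (sum_choose_mul_pow n (j / n)).symm.le.trans ?_
  refine (Finset.sum_le_card_nsmul _ _ _ fun i hi =>
    choose_mul_pow_le_mode hj hn i (Nat.lt_succ_iff.1 (Finset.mem_range.1 hi))).trans ?_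
  simp

lemma pow_mul_pow_eq_exp {n j : ℕ} (hj : j ≤ n) (hn : 0 < n) :
    ((j : ℝ) / n) ^ j * (1 - (j : ℝ) / n) ^ (n - j) = exp (-(n * binEntropy (j / n))) := by
  have hn' : (0 : ℝ) < n := by exact_mod_cast hn
  rcases Nat.eq_zero_or_pos j with rfl | hj0
  · simp
  rcases hj.eq_or_lt with rfl | hjn
  · simp [hn'.ne']
  have hj' : (0 : ℝ) < j := by exact_mod_cast hj0
  have hp : (0 : ℝ) < j / n := by positivity
  have hq : (0 : ℝ) < 1 - j / n := by
    rw [sub_pos, div_lt_one hn']; exact_mod_cast hjn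
  rw [← exp_log (pow_pos hp j), ← exp_log (pow_pos hq (n - j)), ← exp_add, log_pow, log_pow,
    binEntropy_eq', Nat.cast_sub hj]
  congr 1
  field_simp
  ring

lemma choose_mul_exp_le {n j : ℕ} (hj : j ≤ n) :
    (n.choose j : ℝ) * exp (-(n * binEntropy (j / n))) ≤ 1 := by
  rcases Nat.eq_zero_or_pos n with rfl | hn
  · obtain rfl : j = 0 := by omega
    simp
  have hn' : (0 : ℝ) < n := by exact_mod_cast hn
  have hq : (0 : ℝ) ≤ 1 - j / n := by
    rw [sub_nonneg, div_le_one hn']; exact_mod_cast hj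
  rw [← pow_mul_pow_eq_exp hj hn, ← mul_assoc]
  refine le_trans ?_ (sum_choose_mul_pow n (j / n)).le
  exact Finset.single_le_sum (f := fun i => (n.choose i : ℝ) * (j / n) ^ i * (1 - j / n) ^ (n - i))
    (fun i _ => by positivity) (Finset.mem_range.2 (by omega))

end BinomialBounds

section Tail

variable {ι V : Type*} [Fintype ι] [DecidableEq ι]

/-- The number of indices both of whose half-edges lie in `U`. -/
def pairCount (U : Finset (ι × Bool)) : ℕ :=
  (Finset.univ.filter fun i => (i, false) ∈ U ∧ (i, true) ∈ U).card

lemma sum_pow_pairCount_le {w x : ℝ} (hw : 0 ≤ w) (hx : 0 ≤ x) :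
    ∑ U : Finset (ι × Bool), w ^ pairCount U * x ^ U.card ≤
      (1 + 2 * x + w * x ^ 2) ^ Fintype.card ι := by
  let f : Bool × Bool → ℝ := fun b =>
    (if b.1 ∧ b.2 then w else 1) * ((if b.2 then x else 1) * (if b.1 then x else 1))
  let φ : Finset (ι × Bool) → ι → Bool × Bool := fun U i =>
    (decide ((i, false) ∈ U), decide ((i, true) ∈ U))
  have hφ : Function.Injective φ := by
    intro U U' h
    ext ⟨i, b⟩
    have := congrFun h i
    simp only [φ, Prod.mk.injEq, decide_eq_decide] at this
    cases b <;> tauto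
  have h1 : (1 + 2 * x + w * x ^ 2) ^ Fintype.card ι = ∑ p : ι → Bool × Bool, ∏ i, f (p i) := by
    have h2 : ∏ i : ι, ∑ b : Bool × Bool, f b = ∑ p : ι → Bool × Bool, ∏ i, f (p i) := by
      rw [Finset.prod_univ_sum]
      simp [Fintype.piFinset_univ]
    rw [← h2, Finset.prod_const, Finset.card_univ]
    congr 1
    simp [f, Fintype.sum_prod_type]
    ring
  have h3 : ∀ U, w ^ pairCount U * x ^ U.card = ∏ i, f (φ U i) := by
    intro U
    have h4 : x ^ U.card = ∏ σ : ι × Bool, if σ ∈ U then x else 1 := by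
      rw [Finset.prod_ite_mem]; simp
    rw [Finset.prod_mul_distrib, h4, Fintype.prod_prod_type, pairCount, ← Finset.prod_const,
      Finset.prod_filter]
    simp [φ]
  rw [h1, Finset.sum_congr rfl fun U _ => h3 U, ← Finset.sum_image (g := φ)
    (f := fun p => ∏ i, f (p i)) hφ.injOn]
  refine Finset.sum_le_sum_of_subset_of_nonneg (Finset.subset_univ _) fun p _ _ =>
    Finset.prod_nonneg fun i _ => ?_
  simp only [f]
  positivity

variable [Fintype V] [DecidableEq V] {d : ℕ}

/-- The half-edges mapped into `S`. -/
def halfEdgesIn (S : Finset V) (g : ι × Bool → V) : Finset (ι × Bool) :=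
  Finset.univ.filter fun σ => g σ ∈ S

lemma pairCount_halfEdgesIn (S : Finset V) (g : ι × Bool → V) :
    pairCount (halfEdgesIn S g) = innerCount g S := by
  simp [pairCount, halfEdgesIn, innerCount]

lemma card_halfEdgesIn {g : ι × Bool → V} (hg : g ∈ configs ι V d) (S : Finset V) :
    (halfEdgesIn S g).card = d * S.card := by
  rw [halfEdgesIn, Finset.card_eq_sum_card_fiberwise (f := g) (t := S) fun σ hσ => by simpa using hσ,
    mul_comm, ← smul_eq_mul, ← Finset.sum_const]
  refine Finset.sum_congr rfl fun v hv => ?_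
  rw [← card_fiber_of_mem hg v, Finset.filter_filter]
  congr 1
  ext σ
  simp only [Finset.mem_filter, Finset.mem_univ, true_and]
  exact ⟨fun h => h.2, fun h => ⟨h ▸ hv, h⟩⟩

lemma card_filter_halfEdgesIn_eq (S : Finset V) {U U' : Finset (ι × Bool)}
    (h : U.card = U'.card) :
    ((configs ι V d).filter fun g => halfEdgesIn S g = U).card ≤
      ((configs ι V d).filter fun g => halfEdgesIn S g = U').card := by
  obtain ⟨e⟩ : Nonempty (U' ≃ U) := by
    rw [← Fintype.card_eq]; simpa using h.symm
  let τ : Equiv.Perm (ι × Bool) := e.extendSubtype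
  have hτ : ∀ σ, τ σ ∈ U ↔ σ ∈ U' := by
    intro σ
    by_cases hσ : σ ∈ U'
    · exact iff_of_true (e.extendSubtype_mem σ hσ) hσ
    · exact iff_of_false (e.extendSubtype_not_mem σ hσ) hσ
  refine Finset.card_le_card_of_injOn (fun g => g ∘ τ) ?_ ?_
  · intro g hg
    obtain ⟨hg, hU⟩ := Finset.mem_filter.1 hg
    refine Finset.mem_filter.2 ⟨Finset.mem_filter.2 ⟨Finset.mem_univ _, fun v => ?_⟩, ?_⟩
    · rw [← card_fiber_of_mem hg v]
      refine Finset.card_bij' (fun σ _ => τ σ) (fun σ _ => τ.symm σ) ?_ ?_ ?_ ?_ <;> simp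
    · ext σ
      rw [← hτ, ← hU]
      simp [halfEdgesIn]
  · intro g _ g' _ h
    exact τ.surjective.injective_comp_right h

/-- Exponential tail bound for the number of edges inside a set. -/
lemma card_innerCount_ge_mul_le {w x : ℝ} (hw : 1 ≤ w) (hx : 0 < x) (S : Finset V) (m : ℕ) :
    (((configs ι V d).filter fun g => m ≤ innerCount g S).card : ℝ) *
      ((2 * Fintype.card ι).choose (d * S.card) * (w ^ m * x ^ (d * S.card))) ≤
      (configs ι V d).card * (1 + 2 * x + w * x ^ 2) ^ Fintype.card ι := by
  let c : Finset (ι × Bool) → ℕ := fun U =>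
    ((configs ι V d).filter fun g => halfEdgesIn S g = U).card
  let P := Finset.powersetCard (d * S.card) (Finset.univ : Finset (ι × Bool))
  obtain ⟨c₀, hc₀⟩ : ∃ c₀, ∀ U ∈ P, c U = c₀ := by
    rcases P.eq_empty_or_nonempty with h | ⟨U₀, hU₀⟩
    · exact ⟨0, by simp [h]⟩
    · refine ⟨c U₀, fun U hU => ?_⟩
      have h : U.card = U₀.card :=
        (Finset.mem_powersetCard.1 hU).2.trans (Finset.mem_powersetCard.1 hU₀).2.symm
      exact le_antisymm (card_filter_halfEdgesIn_eq S h) (card_filter_halfEdgesIn_eq S h.symm)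
  have hmem : ∀ g ∈ configs ι V d, halfEdgesIn S g ∈ P := fun g hg =>
    Finset.mem_powersetCard.2 ⟨Finset.subset_univ _, card_halfEdgesIn hg S⟩
  have h1 : (configs ι V d).card = (2 * Fintype.card ι).choose (d * S.card) * c₀ := by
    rw [Finset.card_eq_sum_card_fiberwise hmem, Finset.sum_congr rfl hc₀, Finset.sum_const,
      Finset.card_powersetCard, smul_eq_mul, Finset.card_univ, Fintype.card_prod, Fintype.card_bool,
      mul_comm 2]
  have h2 : ((configs ι V d).filter fun g => m ≤ innerCount g S).card ≤
      (P.filter fun U => m ≤ pairCount U).card * c₀ := by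
    rw [Finset.card_eq_sum_card_fiberwise (f := halfEdgesIn S)
      (t := P.filter fun U => m ≤ pairCount U), ← smul_eq_mul]
    · refine Finset.sum_le_card_nsmul _ _ _ fun U hU => ?_
      rw [← hc₀ U (Finset.mem_filter.1 hU).1]
      exact Finset.card_le_card (Finset.filter_subset_filter _ (Finset.filter_subset _ _))
    · intro g hg
      obtain ⟨hg, hm⟩ := Finset.mem_filter.1 hg
      exact Finset.mem_filter.2 ⟨hmem g hg, by rwa [pairCount_halfEdgesIn]⟩
  have h3 : ((P.filter fun U => m ≤ pairCount U).card : ℝ) * (w ^ m * x ^ (d * S.card)) ≤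
      (1 + 2 * x + w * x ^ 2) ^ Fintype.card ι := by
    refine le_trans ?_ (sum_pow_pairCount_le (ι := ι) (by linarith : 0 ≤ w) hx.le)
    rw [← nsmul_eq_mul]
    refine (Finset.card_nsmul_le_sum _ (fun U => w ^ pairCount U * x ^ U.card) _
      fun U hU => ?_).trans (Finset.sum_le_sum_of_subset_of_nonneg (Finset.subset_univ _)
      fun U _ _ => by positivity)
    obtain ⟨hU, hm⟩ := Finset.mem_filter.1 hU
    rw [(Finset.mem_powersetCard.1 hU).2]
    gcongr
  rw [h1]
  push_cast
  calc _ ≤ (((P.filter fun U => m ≤ pairCount U).card * c₀ : ℕ) : ℝ) *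
        ((2 * Fintype.card ι).choose (d * S.card) * (w ^ m * x ^ (d * S.card))) := by
        gcongr
    _ = (2 * Fintype.card ι).choose (d * S.card) * c₀ *
        ((P.filter fun U => m ≤ pairCount U).card * (w ^ m * x ^ (d * S.card))) := by
        push_cast; ring
    _ ≤ _ := by gcongr

/-- The tail bound with the binomial coefficient replaced by its entropy estimate. -/
lemma card_innerCount_ge_le_exp {w x z : ℝ} (hw : 1 ≤ w) (hx : 0 < x)
    (hc : 2 * Fintype.card ι = Fintype.card V * d) (hpos : 0 < Fintype.card ι) (S : Finset V)
    (hz : z = (S.card : ℝ) / Fintype.card V) (m : ℕ) :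
    (((configs ι V d).filter fun g => m ≤ innerCount g S).card : ℝ) ≤ (configs ι V d).card *
      ((Fintype.card V * d + 1) * exp (-(Fintype.card V *
        dualRate w x (m / Fintype.card V) z (d / 2)))) := by
  have hNd : 0 < Fintype.card V * d := by omega
  have hN : 0 < Fintype.card V := Nat.pos_of_mul_pos_right hNd
  have hd : 0 < d := Nat.pos_of_mul_pos_left hNd
  have hS : S.card ≤ Fintype.card V := Finset.card_le_univ S
  have hN' : (0 : ℝ) < Fintype.card V := by exact_mod_cast hN
  have hd' : (0 : ℝ) < d := by exact_mod_cast hd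
  have h := card_innerCount_ge_mul_le (ι := ι) (d := d) hw hx S m
  have hle : d * S.card ≤ Fintype.card V * d := by rw [mul_comm]; gcongr
  have hb := one_le_mul_choose_mul_pow hle hNd
  rw [mul_assoc, pow_mul_pow_eq_exp hle hNd] at hb
  have hzz : ((d * S.card : ℕ) : ℝ) / (Fintype.card V * d : ℕ) = z := by
    rw [hz]; push_cast; field_simp
  rw [hzz] at hb
  rw [hc] at h
  have hM : (Fintype.card ι : ℝ) = Fintype.card V * d / 2 := by
    have : (2 * Fintype.card ι : ℝ) = Fintype.card V * d := by exact_mod_cast hc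
    linarith
  set C : ℝ := ((Fintype.card V * d).choose (d * S.card) : ℝ)
  set P : ℝ := (((configs ι V d).filter fun g => m ≤ innerCount g S).card : ℝ)
  set Q : ℝ := 1 + 2 * x + w * x ^ 2
  have hQ : 0 < Q := by positivity
  have hw0 : 0 < w := by linarith
  set E := exp (-((Fintype.card V * d : ℕ) * binEntropy z))
  have hx' : w ^ m * x ^ (d * S.card) = exp (m * log w + (d * S.card) * log x) := by
    rw [exp_add, mul_comm (m : ℝ), ← rpow_def_of_pos hw0, rpow_natCast, mul_comm (d * S.card : ℝ),
      ← rpow_def_of_pos hx]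
    norm_cast
  have hQ' : Q ^ Fintype.card ι = exp (Fintype.card V * d / 2 * log Q) := by
    rw [← hM, mul_comm, ← rpow_def_of_pos hQ, rpow_natCast]
  have hP : 0 ≤ P := Nat.cast_nonneg _
  have h5 : P * (w ^ m * x ^ (d * S.card)) ≤ (configs ι V d).card * Q ^ Fintype.card ι *
      ((Fintype.card V * d + 1) * E) := by
    calc P * (w ^ m * x ^ (d * S.card))
        ≤ P * (w ^ m * x ^ (d * S.card)) * ((((Fintype.card V * d : ℕ) : ℝ) + 1) * (C * E)) :=
          le_mul_of_one_le_right (by positivity) hb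
      _ = P * (C * (w ^ m * x ^ (d * S.card))) * ((Fintype.card V * d + 1) * E) := by
          push_cast; ring
      _ ≤ _ := by gcongr
  rw [hx', hQ', ← le_div_iff₀ (exp_pos _)] at h5
  refine h5.trans (le_of_eq ?_)
  rw [div_eq_mul_inv, ← exp_neg]
  have : exp (-(Fintype.card V * dualRate w x (m / Fintype.card V) z (d / 2))) =
      exp (Fintype.card V * d / 2 * log Q) * E * exp (-(m * log w + d * S.card * log x)) := by
    rw [← exp_add, ← exp_add]
    congr 1
    have hS' : (S.card : ℝ) = z * Fintype.card V := by rw [hz]; field_simp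
    rw [hS', dualRate, show 1 + 2 * x + w * x ^ 2 = Q from rfl]
    push_cast
    field_simp
    ring
  rw [this]
  ring

end Tail

section SmallSets

variable {ι V : Type*} [Fintype ι] [DecidableEq ι] [Fintype V] [DecidableEq V] {d : ℕ}

lemma mul_dualRate_small_ge {N d z : ℝ} (m : ℝ) (hN : 0 < N) (hd : 0 < d) (hz : 0 < z)
    (hz1 : z < 1) (hdz : d * z ≤ 4) :
    m * log (4 / (d * z)) - 2 * (z * N) ≤
      N * dualRate (4 / (d * z)) (z / (1 - z)) (m / N) z (d / 2) := by
  have hz' : 0 < 1 - z := by linarith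
  set w := 4 / (d * z) with hw
  have hw1 : 1 ≤ w := (one_le_div (by positivity)).2 hdz
  have hwz : w * z ^ 2 = 4 * z / d := by rw [hw]; field_simp
  have hR : 0 < 1 + (w - 1) * z ^ 2 := by nlinarith [sq_nonneg z]
  have hQ : 1 + 2 * (z / (1 - z)) + w * (z / (1 - z)) ^ 2 =
      (1 + (w - 1) * z ^ 2) / (1 - z) ^ 2 := by
    field_simp; ring
  have hlog := log_le_sub_one_of_pos hR
  rw [dualRate, hQ, log_div hR.ne' (by positivity), log_div hz.ne' hz'.ne', log_pow, binEntropy_eq']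
  have h1 : log (1 + (w - 1) * z ^ 2) ≤ 4 * z / d := by nlinarith [sq_nonneg z]
  have h2 : d / 2 * log (1 + (w - 1) * z ^ 2) ≤ d / 2 * (4 * z / d) := by gcongr
  have h3 : d / 2 * (4 * z / d) = 2 * z := by field_simp; norm_num
  have h4 : N * (m / N * log w) = m * log w := by field_simp
  push_cast
  nlinarith

lemma choose_le_exp_mul_pow {N n : ℕ} (hn : 0 < n) (hN : 0 < N) :
    (N.choose n : ℝ) ≤ exp n * ((n : ℝ) / N)⁻¹ ^ n := by
  have hn' : (0 : ℝ) < n := by exact_mod_cast hn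
  have hN' : (0 : ℝ) < N := by exact_mod_cast hN
  have h1 := pow_div_factorial_le_exp (n : ℝ) hn'.le n
  have hf : (0 : ℝ) < n.factorial := by exact_mod_cast n.factorial_pos
  calc (N.choose n : ℝ) ≤ N ^ n / n.factorial := Nat.choose_le_pow_div n N
    _ = (n ^ n / n.factorial) * ((n : ℝ) / N)⁻¹ ^ n := by
        rw [inv_div, div_pow]; field_simp
    _ ≤ _ := by gcongr

lemma choose_mul_small_le {N d n : ℕ} (hn : 0 < n) (hN : 0 < N) (hd : 0 < d)
    (hsmall : (d : ℝ) ^ 2 * exp 3 * ((n : ℝ) / N) ≤ 1) :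
    (N.choose n : ℝ) * ((N * d + 1) * exp (-((2 * n + 1 : ℕ) * log (4 / (d * ((n : ℝ) / N))) - 2 * n)))
      ≤ d ^ 4 * exp 3 / (2 * N) * (1 / 2) ^ n := by
  have hn' : (0 : ℝ) < n := by exact_mod_cast hn
  have hN' : (0 : ℝ) < N := by exact_mod_cast hN
  have hd' : (0 : ℝ) < d := by exact_mod_cast hd
  set z : ℝ := (n : ℝ) / N with hz
  have hz0 : 0 < z := by positivity
  have hnz : (n : ℝ) = z * N := by rw [hz]; field_simp
  have e1 : exp (-((2 * n + 1 : ℕ) * log (4 / (d * z)) - 2 * n)) =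
      (d * z / 4) ^ (2 * n + 1) * exp 2 ^ n := by
    have : log (4 / (d * z)) = -log (d * z / 4) := by rw [← log_inv, inv_div]
    rw [this, ← exp_nat_mul 2, mul_comm (n : ℝ) 2]
    rw [show -(((2 * n + 1 : ℕ) : ℝ) * -log (d * z / 4) - 2 * n) =
      log (d * z / 4) * (2 * n + 1 : ℕ) + 2 * n by ring, exp_add,
      ← rpow_def_of_pos (by positivity), rpow_natCast]
  rw [e1]
  have e3 : exp (n : ℝ) = exp 1 ^ n := by rw [← exp_nat_mul, mul_one]
  have e4 : exp 3 = exp 1 * exp 2 := by rw [← exp_add]; norm_num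
  have hc := choose_le_exp_mul_pow hn hN
  rw [e3] at hc
  set y : ℝ := d ^ 2 * exp 3 * z with hy
  have hy0 : 0 < y := by positivity
  have h16 : (y / 16) ^ n ≤ y * (1 / 16) ^ n := by
    rw [div_eq_mul_one_div, mul_pow]
    gcongr
    exact pow_le_of_le_one hy0.le hsmall hn.ne'
  have hN1 : (N : ℝ) * d + 1 ≤ 2 * N * d := by
    have : (1 : ℝ) ≤ N * d := by exact_mod_cast Nat.mul_pos hN hd
    linarith
  have hn4 : (n : ℝ) ^ 2 * (1 / 16) ^ n ≤ (1 / 2) ^ n := by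
    have h2 : (n : ℝ) ≤ 2 ^ n := by exact_mod_cast Nat.lt_two_pow_self.le
    have h3 : (n : ℝ) ^ 2 ≤ 8 ^ n := by
      calc (n : ℝ) ^ 2 ≤ (2 ^ n) ^ 2 := by gcongr
        _ = (2 ^ 2) ^ n := by rw [← pow_mul, ← pow_mul, mul_comm]
        _ ≤ 8 ^ n := by gcongr; norm_num
    calc (n : ℝ) ^ 2 * (1 / 16) ^ n ≤ 8 ^ n * (1 / 16) ^ n := by gcongr
      _ = (1 / 2) ^ n := by rw [← mul_pow]; norm_num
  calc (N.choose n : ℝ) * ((N * d + 1) * ((d * z / 4) ^ (2 * n + 1) * exp 2 ^ n))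
      ≤ (exp 1 ^ n * z⁻¹ ^ n) * ((2 * N * d) * ((d * z / 4) ^ (2 * n + 1) * exp 2 ^ n)) := by
        gcongr
    _ = d ^ 2 * n / 2 * (y / 16) ^ n := by
        have : y / 16 = exp 1 * z⁻¹ * ((d * z / 4) ^ 2 * exp 2) := by
          rw [hy, e4]; field_simp; norm_num
        rw [this, mul_pow, mul_pow, mul_pow, ← pow_mul, pow_succ, hnz]
        ring
    _ ≤ d ^ 2 * n / 2 * (y * (1 / 16) ^ n) := by gcongr
    _ = d ^ 4 * exp 3 / (2 * N) * (n ^ 2 * (1 / 16) ^ n) := by rw [hy, hz]; field_simp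
    _ ≤ _ := by gcongr

open Classical in
/-- Few configurations have a small set of vertices spanning more than two edges per vertex. -/
lemma card_exists_small_le {ε : ℝ} (hε : (d : ℝ) ^ 2 * exp 3 * ε ≤ 1) (hε1 : ε < 1)
    (hc : 2 * Fintype.card ι = Fintype.card V * d) (hpos : 0 < Fintype.card ι) :
    (((configs ι V d).filter fun g => ∃ S : Finset V, S.Nonempty ∧
      (S.card : ℝ) ≤ ε * Fintype.card V ∧ 2 * S.card + 1 ≤ innerCount g S).card : ℝ) ≤
      (configs ι V d).card * (d ^ 4 * exp 3 / Fintype.card V) := by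
  have hNd : 0 < Fintype.card V * d := by omega
  have hN : 0 < Fintype.card V := Nat.pos_of_mul_pos_right hNd
  have hd : 0 < d := Nat.pos_of_mul_pos_left hNd
  have hN' : (0 : ℝ) < Fintype.card V := by exact_mod_cast hN
  have hd' : (1 : ℝ) ≤ d := by exact_mod_cast hd
  set N := Fintype.card V with hNdef
  set Ω := configs ι V d
  let B : ℕ → ℝ := fun n =>
    (N * d + 1) * exp (-((2 * n + 1 : ℕ) * log (4 / (d * ((n : ℝ) / N))) - 2 * n))
  let F : ℕ → ℝ := fun n => if 0 < n ∧ (n : ℝ) ≤ ε * N then B n else 0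
  have hF : ∀ n, 0 ≤ F n := fun n => by
    simp only [F, B]; split_ifs <;> positivity
  let T : Finset (Finset V) :=
    Finset.univ.filter fun S => S.Nonempty ∧ (S.card : ℝ) ≤ ε * N
  have hsm : ∀ n : ℕ, (n : ℝ) ≤ ε * N → (d : ℝ) ^ 2 * exp 3 * ((n : ℝ) / N) ≤ 1 := by
    intro n hn
    refine le_trans ?_ hε
    gcongr
    rwa [div_le_iff₀ hN']
  have h1 : ∀ S ∈ T, ((Ω.filter fun g => 2 * S.card + 1 ≤ innerCount g S).card : ℝ) ≤
      Ω.card * F S.card := by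
    intro S hS
    obtain ⟨hS0, hSε⟩ := (Finset.mem_filter.1 hS).2
    have hn : 0 < S.card := hS0.card_pos
    have hn' : (0 : ℝ) < S.card := by exact_mod_cast hn
    set z : ℝ := (S.card : ℝ) / N with hz
    have hz0 : 0 < z := by positivity
    have hzε : z ≤ ε := by rwa [hz, div_le_iff₀ hN']
    have hdz : d * z ≤ 4 := by
      have h2 := hsm _ hSε
      have h3 : d * z * (d * exp 3) ≤ 1 := by rw [← hz] at h2; linarith
      have h4 : (1 : ℝ) ≤ exp 3 := one_le_exp (by norm_num)
      have h5 : (1 : ℝ) ≤ d * exp 3 := by nlinarith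
      nlinarith [mul_pos (zero_lt_one.trans_le hd') hz0]
    have hd0 : (0 : ℝ) < d := by linarith
    have h := card_innerCount_ge_le_exp (ι := ι) (d := d) (w := 4 / (d * z)) (x := z / (1 - z))
      ((one_le_div (by positivity)).2 hdz) (div_pos hz0 (by linarith)) hc hpos S hz
      (2 * S.card + 1)
    refine h.trans ?_
    simp only [F, if_pos (And.intro hn hSε), B]
    gcongr
    have := mul_dualRate_small_ge ((2 * S.card + 1 : ℕ) : ℝ) hN' hd0 hz0 (by linarith) hdz
    have hzN : z * N = S.card := by rw [hz]; field_simp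
    rw [hzN] at this
    exact this
  have h2 : ((Ω.filter fun g => ∃ S : Finset V, S.Nonempty ∧
      (S.card : ℝ) ≤ ε * N ∧ 2 * S.card + 1 ≤ innerCount g S).card : ℝ) ≤
      ∑ S ∈ T, ((Ω.filter fun g => 2 * S.card + 1 ≤ innerCount g S).card : ℝ) := by
    rw [← Nat.cast_sum]
    refine Nat.cast_le.2 ((Finset.card_le_card fun g hg => ?_).trans Finset.card_biUnion_le)
    obtain ⟨hg, S, hS, hSε, hSi⟩ := Finset.mem_filter.1 hg
    exact Finset.mem_biUnion.2 ⟨S, Finset.mem_filter.2 ⟨Finset.mem_univ _, hS, hSε⟩,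
      Finset.mem_filter.2 ⟨hg, hSi⟩⟩
  refine h2.trans ((Finset.sum_le_sum h1).trans ?_)
  rw [← Finset.mul_sum]
  gcongr
  calc ∑ S ∈ T, F S.card ≤ ∑ S ∈ (Finset.univ : Finset V).powerset, F S.card :=
        Finset.sum_le_sum_of_subset_of_nonneg (fun S _ => by simp) fun S _ _ => hF _
    _ = ∑ n ∈ Finset.range (N + 1), N.choose n * F n := by
        rw [Finset.sum_powerset_apply_card]
        simp [hNdef]
    _ ≤ ∑ n ∈ Finset.range (N + 1), d ^ 4 * exp 3 / (2 * N) * (1 / 2) ^ n := by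
        refine Finset.sum_le_sum fun n _ => ?_
        by_cases hn : 0 < n ∧ (n : ℝ) ≤ ε * N
        · simp only [F, if_pos hn]
          exact choose_mul_small_le hn.1 hN hd (hsm n hn.2)
        · simp only [F, if_neg hn, mul_zero]
          positivity
    _ ≤ d ^ 4 * exp 3 / (2 * N) * 2 := by
        rw [← Finset.mul_sum]
        gcongr
        exact sum_geometric_two_le _
    _ = _ := by field_simp

end SmallSets

section Compactness

lemma exists_uniform_rate {α a b D ε : ℝ} (hε : 0 < ε)
    (h : ∀ p q z, 0 ≤ p → p ≤ 1 → 0 ≤ q → q ≤ 1 → z = α * p + (1 - α) * q → 0 < z → z < 1 →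
      RateExceeds (α * binEntropy p + (1 - α) * binEntropy q) (a * z + b * p) z D) :
    ∃ c > 0, ∀ p q z, 0 ≤ p → p ≤ 1 → 0 ≤ q → q ≤ 1 → z = α * p + (1 - α) * q → ε ≤ z →
      z ≤ 1 - ε →
      RateExceeds (α * binEntropy p + (1 - α) * binEntropy q + c) (a * z + b * p) z D := by
  let Z : ℝ × ℝ → ℝ := fun x => α * x.1 + (1 - α) * x.2
  have hZ : Continuous Z := by fun_prop
  let K : Set (ℝ × ℝ) := (Set.Icc 0 1 ×ˢ Set.Icc 0 1) ∩ Z ⁻¹' Set.Icc ε (1 - ε)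
  have hK : IsCompact K := (isCompact_Icc.prod isCompact_Icc).inter_right (isClosed_Icc.preimage hZ)
  let P : Set (ℝ × ℝ) → Prop := fun s => ∃ c > 0, ∀ x ∈ s,
    RateExceeds (α * binEntropy x.1 + (1 - α) * binEntropy x.2 + c) (a * Z x + b * x.1) (Z x) D
  have hP : P K := by
    refine hK.induction_on ⟨1, one_pos, by simp⟩ ?_ ?_ ?_
    · rintro s t hst ⟨c, hc, ht⟩
      exact ⟨c, hc, fun x hx => ht x (hst hx)⟩
    · rintro s t ⟨c, hc, hs⟩ ⟨c', hc', ht⟩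
      refine ⟨min c c', lt_min hc hc', ?_⟩
      rintro x (hx | hx)
      · exact (hs x hx).mono (by gcongr; exact min_le_left _ _) le_rfl
      · exact (ht x hx).mono (by gcongr; exact min_le_right _ _) le_rfl
    · rintro x ⟨⟨hp, hq⟩, hz⟩
      obtain ⟨w, y, hw, hy, hlt⟩ := h x.1 x.2 (Z x) hp.1 hp.2 hq.1 hq.2 rfl
        (hε.trans_le hz.1) (by linarith [hz.2])
      let f : ℝ × ℝ → ℝ := fun x => dualRate w y (a * Z x + b * x.1) (Z x) D -
        (α * binEntropy x.1 + (1 - α) * binEntropy x.2)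
      have hf : Continuous f := by
        simp only [f, dualRate]
        fun_prop
      have hfx : 0 < f x := sub_pos.2 hlt
      refine ⟨{x' | f x / 2 < f x'}, mem_nhdsWithin_of_mem_nhds
        ((isOpen_lt continuous_const hf).mem_nhds (half_lt_self hfx)), f x / 2, half_pos hfx,
        fun x' hx' => ⟨w, y, hw, hy, ?_⟩⟩
      have : f x / 2 < dualRate w y (a * Z x' + b * x'.1) (Z x') D -
        (α * binEntropy x'.1 + (1 - α) * binEntropy x'.2) := hx'
      linarith
  obtain ⟨c, hc, hcK⟩ := hP
  refine ⟨c, hc, fun p q z hp hp1 hq hq1 hz hz0 hz1 => ?_⟩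
  subst hz
  exact hcK (p, q) ⟨⟨⟨hp, hp1⟩, hq, hq1⟩, hz0, hz1⟩

end Compactness

section MediumSets

variable {V : Type*} [Fintype V] [DecidableEq V]

lemma sum_card_inter_mul_le (A : Finset V) {F G : ℕ → ℝ} (hF : ∀ n, 0 ≤ F n) (hG : ∀ n, 0 ≤ G n) :
    ∑ S : Finset V, F (S ∩ A).card * G (S ∩ Aᶜ).card ≤
      (∑ X ∈ A.powerset, F X.card) * ∑ Y ∈ Aᶜ.powerset, G Y.card := by
  rw [Finset.sum_mul_sum, ← Finset.sum_product']
  let φ : Finset V → Finset V × Finset V := fun S => (S ∩ A, S ∩ Aᶜ)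
  have hφ : Function.Injective φ := by
    intro S S' h
    have h1 : S ∩ A = S' ∩ A := (Prod.ext_iff.1 h).1
    have h2 : S ∩ Aᶜ = S' ∩ Aᶜ := (Prod.ext_iff.1 h).2
    rw [← Finset.inter_univ S, ← Finset.inter_univ S', ← Finset.union_compl A,
      Finset.inter_union_distrib_left, Finset.inter_union_distrib_left, h1, h2]
  rw [← Finset.sum_image (g := φ) (f := fun x => F x.1.card * G x.2.card) hφ.injOn]
  refine Finset.sum_le_sum_of_subset_of_nonneg ?_ fun x _ _ => mul_nonneg (hF _) (hG _)
  intro x hx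
  obtain ⟨S, -, rfl⟩ := Finset.mem_image.1 hx
  simp [φ, Finset.inter_subset_right]

lemma sum_powerset_exp_neg_le (A : Finset V) :
    ∑ X ∈ A.powerset, exp (-(A.card * binEntropy (X.card / A.card))) ≤ A.card + 1 := by
  rw [Finset.sum_powerset_apply_card (fun n => exp (-(A.card * binEntropy ((n : ℝ) / A.card))))]
  refine (Finset.sum_le_card_nsmul _ _ 1 fun n hn => ?_).trans (by simp)
  rw [nsmul_eq_mul]
  exact choose_mul_exp_le (Nat.lt_succ_iff.1 (Finset.mem_range.1 hn))

variable {ι : Type*} [Fintype ι] [DecidableEq ι] {d : ℕ}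

open Classical in
/-- Union bound over the sets of vertices whose size is between `ε` and `1 - ε` times the total. -/
lemma card_exists_medium_le {α c ε : ℝ} {a b : ℕ} (hα : 0 < α) (hα1 : α < 1)
    (h : ∀ p q z, 0 ≤ p → p ≤ 1 → 0 ≤ q → q ≤ 1 → z = α * p + (1 - α) * q → ε ≤ z →
      z ≤ 1 - ε →
      RateExceeds (α * binEntropy p + (1 - α) * binEntropy q + c) (a * z + b * α * p) z (d / 2))
    (A : Finset V) (hA : (A.card : ℝ) = α * Fintype.card V)
    (hc : 2 * Fintype.card ι = Fintype.card V * d) (hpos : 0 < Fintype.card ι) :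
    (((configs ι V d).filter fun g => ∃ S : Finset V, ε * Fintype.card V ≤ S.card ∧
      (S.card : ℝ) ≤ (1 - ε) * Fintype.card V ∧
      a * S.card + b * (S ∩ A).card ≤ innerCount g S).card : ℝ) ≤
      (configs ι V d).card * ((Fintype.card V * d + 1) * (Fintype.card V + 1) ^ 2 *
        exp (-(Fintype.card V * c))) := by
  have hNd : 0 < Fintype.card V * d := by omega
  have hN : 0 < Fintype.card V := Nat.pos_of_mul_pos_right hNd
  have hN' : (0 : ℝ) < Fintype.card V := by exact_mod_cast hN
  have hAc : (Aᶜ.card : ℝ) = (1 - α) * Fintype.card V := by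
    rw [Finset.card_compl, Nat.cast_sub (Finset.card_le_univ A), hA]; ring
  set N := Fintype.card V with hNdef
  set Ω := configs ι V d
  have hA0 : (0 : ℝ) < A.card := by rw [hA]; positivity
  have hAc0 : (0 : ℝ) < Aᶜ.card := by rw [hAc]; exact mul_pos (by linarith) hN'
  let F : ℕ → ℝ := fun n => exp (-(A.card * binEntropy (n / A.card)))
  let G : ℕ → ℝ := fun n => exp (-(Aᶜ.card * binEntropy (n / Aᶜ.card)))
  let T : Finset (Finset V) := Finset.univ.filter fun S =>
    ε * N ≤ S.card ∧ (S.card : ℝ) ≤ (1 - ε) * N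
  have h1 : ∀ S ∈ T,
      ((Ω.filter fun g => a * S.card + b * (S ∩ A).card ≤ innerCount g S).card : ℝ) ≤
      Ω.card * ((N * d + 1) * exp (-(N * c))) * (F (S ∩ A).card * G (S ∩ Aᶜ).card) := by
    intro S hS
    obtain ⟨hS0, hS1⟩ := (Finset.mem_filter.1 hS).2
    set p : ℝ := (S ∩ A).card / A.card with hp
    set q : ℝ := (S ∩ Aᶜ).card / Aᶜ.card with hq
    have hp' : ((S ∩ A).card : ℝ) = α * p * N := by
      have : ((S ∩ A).card : ℝ) = p * A.card := (div_mul_cancel₀ _ hA0.ne').symm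
      rw [this, hA]; ring
    have hq' : ((S ∩ Aᶜ).card : ℝ) = (1 - α) * q * N := by
      have : ((S ∩ Aᶜ).card : ℝ) = q * Aᶜ.card := (div_mul_cancel₀ _ hAc0.ne').symm
      rw [this, hAc]; ring
    have hsum : (S.card : ℝ) = (S ∩ A).card + (S ∩ Aᶜ).card := by
      rw [← Finset.sdiff_eq_inter_compl]
      exact_mod_cast (Finset.card_inter_add_card_sdiff S A).symm
    have hz : (S.card : ℝ) / N = α * p + (1 - α) * q := by
      rw [div_eq_iff hN'.ne', hsum, hp', hq']; ring
    obtain ⟨w, x, hw, hx, hlt⟩ := h p q _ (div_nonneg (Nat.cast_nonneg _) hA0.le)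
      (div_le_one_of_le₀ (Nat.cast_le.2 (Finset.card_le_card Finset.inter_subset_right)) hA0.le)
      (div_nonneg (Nat.cast_nonneg _) hAc0.le)
      (div_le_one_of_le₀ (Nat.cast_le.2 (Finset.card_le_card Finset.inter_subset_right)) hAc0.le) hz
      (by rwa [le_div_iff₀ hN']) (by rwa [div_le_iff₀ hN'])
    have hb := card_innerCount_ge_le_exp (ι := ι) (d := d) hw hx hc hpos S rfl
      (a * S.card + b * (S ∩ A).card)
    have hm : ((a * S.card + b * (S ∩ A).card : ℕ) : ℝ) / N =
        a * ((S.card : ℝ) / N) + b * α * p := by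
      push_cast
      rw [hp', div_eq_iff hN'.ne', add_mul, mul_assoc (a : ℝ), div_mul_cancel₀ _ hN'.ne']
      ring
    rw [← hNdef, hm] at hb
    refine hb.trans ?_
    have hFG : exp (-(N * c)) * (F (S ∩ A).card * G (S ∩ Aᶜ).card) =
        exp (-(N * (α * binEntropy p + (1 - α) * binEntropy q + c))) := by
      simp only [F, G]
      rw [← exp_add, ← exp_add, ← hp, ← hq, hA, hAc]
      congr 1; ring
    rw [mul_assoc _ _ (F _ * G _), mul_assoc _ _ (F _ * G _), hFG]
    refine mul_le_mul_of_nonneg_left (mul_le_mul_of_nonneg_left ?_ (by positivity)) (Nat.cast_nonneg _)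
    exact exp_le_exp.2 (neg_le_neg (mul_le_mul_of_nonneg_left hlt.le hN'.le))
  have h2 : ((Ω.filter fun g => ∃ S : Finset V, ε * N ≤ S.card ∧
      (S.card : ℝ) ≤ (1 - ε) * N ∧
      a * S.card + b * (S ∩ A).card ≤ innerCount g S).card : ℝ) ≤
      ∑ S ∈ T, ((Ω.filter fun g =>
        a * S.card + b * (S ∩ A).card ≤ innerCount g S).card : ℝ) := by
    rw [← Nat.cast_sum]
    refine Nat.cast_le.2 ((Finset.card_le_card fun g hg => ?_).trans Finset.card_biUnion_le)
    obtain ⟨hg, S, hS0, hS1, hSi⟩ := Finset.mem_filter.1 hg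
    exact Finset.mem_biUnion.2 ⟨S, Finset.mem_filter.2 ⟨Finset.mem_univ _, hS0, hS1⟩,
      Finset.mem_filter.2 ⟨hg, hSi⟩⟩
  refine h2.trans ((Finset.sum_le_sum h1).trans ?_)
  have hFG : ∀ S : Finset V, 0 ≤ F (S ∩ A).card * G (S ∩ Aᶜ).card := fun S => by positivity
  have hAN : (A.card : ℝ) ≤ N := by exact_mod_cast Finset.card_le_univ A
  have hAcN : (Aᶜ.card : ℝ) ≤ N := by exact_mod_cast Finset.card_le_univ Aᶜ
  rw [← Finset.mul_sum]
  calc _ ≤ Ω.card * ((N * d + 1) * exp (-(N * c))) * ((N + 1) * (N + 1)) := by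
        refine mul_le_mul_of_nonneg_left ?_ (by positivity)
        calc _ ≤ ∑ S : Finset V, F (S ∩ A).card * G (S ∩ Aᶜ).card :=
              Finset.sum_le_sum_of_subset_of_nonneg (Finset.subset_univ _) fun S _ _ => hFG S
          _ ≤ _ := sum_card_inter_mul_le A (fun n => (exp_pos _).le) fun n => (exp_pos _).le
          _ ≤ (A.card + 1) * (Aᶜ.card + 1) :=
              mul_le_mul (sum_powerset_exp_neg_le A) (sum_powerset_exp_neg_le Aᶜ)
                (Finset.sum_nonneg fun _ _ => (exp_pos _).le) (by positivity)
          _ ≤ _ := by gcongr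
    _ = _ := by ring

end MediumSets

section Assembly

variable {ι V : Type*} [Fintype ι] [DecidableEq ι] [Fintype V] [DecidableEq V] {d k s : ℕ}

lemma card_halfEdgesIn_eq_sum (S : Finset V) (g : ι × Bool → V) :
    (halfEdgesIn S g).card =
      ∑ i, ((if g (i, false) ∈ S then 1 else 0) + if g (i, true) ∈ S then 1 else 0) := by
  rw [halfEdgesIn, Finset.card_filter, Fintype.sum_prod_type]
  exact Finset.sum_congr rfl fun i _ => by rw [Fintype.sum_bool, add_comm]

lemma two_mul_innerCount_le {g : ι × Bool → V} (hg : g ∈ configs ι V d) (S : Finset V) :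
    2 * innerCount g S ≤ d * S.card := by
  rw [← card_halfEdgesIn hg, card_halfEdgesIn_eq_sum, innerCount, Finset.card_filter,
    Finset.mul_sum]
  exact Finset.sum_le_sum fun i _ => by split_ifs <;> simp_all

lemma innerCount_add_mul_card_compl {g : ι × Bool → V} (hg : g ∈ configs ι V d) (S : Finset V) :
    innerCount g S + d * Sᶜ.card = Fintype.card ι + innerCount g Sᶜ := by
  rw [← card_halfEdgesIn hg, card_halfEdgesIn_eq_sum, innerCount, innerCount, Finset.card_filter,
    Finset.card_filter, ← Finset.card_univ, Finset.card_eq_sum_ones, ← Finset.sum_add_distrib,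
    ← Finset.sum_add_distrib]
  refine Finset.sum_congr rfl fun i _ => ?_
  simp only [Finset.mem_compl]
  split_ifs <;> simp_all

lemma Represents.mem_configs {g : ι × Bool → V} {G : SimpleGraph V} (h : Represents g G)
    (hG : IsRegularGraph G d) : g ∈ configs ι V d :=
  Finset.mem_filter.2 ⟨Finset.mem_univ _, fun v => (h.card_fiber v).trans (hG v)⟩

lemma sum_stars (A T : Finset V) :
    ∑ v ∈ T, k * (if v ∈ A then s + 1 else s) = k * s * T.card + k * (T ∩ A).card := by
  rw [← Finset.mul_sum, mul_assoc, ← mul_add]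
  congr 1
  rw [Finset.card_eq_sum_ones (T ∩ A), ← Finset.sum_ite_mem, ← smul_eq_mul s, smul_eq_mul,
    mul_comm, ← smul_eq_mul, ← Finset.sum_const, ← Finset.sum_add_distrib]
  exact Finset.sum_congr rfl fun v _ => by split_ifs <;> simp

/-- A regular graph without the prescribed star decomposition violates Hall's condition. -/
lemma Represents.exists_lt_innerCount {g : ι × Bool → V} {G : SimpleGraph V} (h : Represents g G)
    (hG : IsRegularGraph G d) (hc : 2 * Fintype.card ι = Fintype.card V * d) (hk : 0 < k)
    {A : Finset V} (hA : k * s * Fintype.card V + k * A.card = Fintype.card ι)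
    (hD : ¬ HasStarDecomp G k fun v => if v ∈ A then s + 1 else s) :
    ∃ T : Finset V, k * s * T.card + k * (T ∩ A).card < innerCount g T := by
  classical
  by_contra! hle
  refine hD (HasStarDecomp.of_card_le hk ?_ fun T => ?_)
  · have h2 := hG.natCard_edgeSet
    rw [sum_stars, Finset.univ_inter, Finset.card_univ, hA, SimpleGraph.edgeFinset_card,
      ← Nat.card_eq_fintype_card]
    omega
  · rw [sum_stars, ← h.innerCount_eq]
    exact hle T

/-- A violation of Hall's condition yields a small dense set of vertices, possibly after taking
complements, or a violation at a set of intermediate size. -/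
lemma exists_small_or_medium {g : ι × Bool → V} (hg : g ∈ configs ι V d) (hks : 2 ≤ k * s)
    (hd : k * s + k + 2 ≤ d) {A T : Finset V}
    (hA : k * s * Fintype.card V + k * A.card = Fintype.card ι)
    (hT : k * s * T.card + k * (T ∩ A).card < innerCount g T) (ε : ℝ) :
    (∃ S : Finset V, S.Nonempty ∧ (S.card : ℝ) ≤ ε * Fintype.card V ∧
      2 * S.card + 1 ≤ innerCount g S) ∨
    ∃ S : Finset V, ε * Fintype.card V ≤ S.card ∧ (S.card : ℝ) ≤ (1 - ε) * Fintype.card V ∧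
      k * s * S.card + k * (S ∩ A).card ≤ innerCount g S := by
  have hcompl := innerCount_add_mul_card_compl hg T
  rcases le_total (T.card : ℝ) (ε * Fintype.card V) with h1 | h1
  · refine Or.inl ⟨T, ?_, h1, ?_⟩
    · rw [Finset.nonempty_iff_ne_empty]
      rintro rfl
      simp [innerCount] at hT
    · nlinarith
  rcases le_total (T.card : ℝ) ((1 - ε) * Fintype.card V) with h2 | h2
  · exact Or.inr ⟨T, h1, h2, hT.le⟩
  have hTc : T.card + Tᶜ.card = Fintype.card V := Finset.card_add_card_compl T
  have hAc : (T ∩ A).card + (Tᶜ ∩ A).card = A.card := by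
    rw [← Finset.card_union_of_disjoint, ← Finset.union_inter_distrib_right, Finset.union_compl,
      Finset.univ_inter]
    exact disjoint_compl_right.mono Finset.inter_subset_left Finset.inter_subset_left
  have hle : (Tᶜ ∩ A).card ≤ Tᶜ.card := Finset.card_le_card Finset.inter_subset_left
  have hlt : 2 * Tᶜ.card + 1 ≤ innerCount g Tᶜ := by
    rw [← hTc, ← hAc] at hA
    nlinarith
  refine Or.inl ⟨Tᶜ, ?_, ?_, hlt⟩
  · rw [Finset.nonempty_iff_ne_empty]
    intro h0
    simp [h0, innerCount] at hlt
  · have : (T.card : ℝ) + Tᶜ.card = Fintype.card V := by exact_mod_cast hTc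
    linarith

/-- If a set of configurations contains all configurations representing regular graphs with a
property, then its proportion controls the proportion of those graphs. -/
lemma natCard_regular_le_of_card_configs_le {P : SimpleGraph V → Prop} {Q : (ι × Bool → V) → Prop}
    [DecidablePred Q] (hc : 2 * Fintype.card ι = Fintype.card V * d)
    (hM : 4 * (d * (d + 1)) < Fintype.card ι)
    (hPQ : ∀ g G, IsRegularGraph G d → P G → Represents g G → Q g) {η : ℝ} (hη : 0 ≤ η)
    (hQ : (((configs ι V d).filter Q).card : ℝ) ≤ (configs ι V d).card * η) :
    (Nat.card {G : SimpleGraph V // IsRegularGraph G d ∧ P G} : ℝ) ≤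
      2 * (1 + 2 * (d * (d + 2))) ^ (4 * (d * (d + 2))) * η *
        Nat.card {G : SimpleGraph V // IsRegularGraph G d} := by
  classical
  set K := (Fintype.card ι).factorial * 2 ^ Fintype.card ι
  have hK : 0 < K := by positivity
  have h1 : ((K * Nat.card {G : SimpleGraph V // IsRegularGraph G d ∧ P G} : ℕ) : ℝ) ≤ _ :=
    (Nat.cast_le.2 (mul_natCard_regular_le hc hPQ)).trans hQ
  have h2 : ((configs ι V d).card : ℝ) ≤
      ((2 * (1 + 2 * (d * (d + 2))) ^ (4 * (d * (d + 2))) *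
        (K * Nat.card {G : SimpleGraph V // IsRegularGraph G d}) : ℕ) : ℝ) :=
    Nat.cast_le.2 ((card_configs_le_mul_card_simple hM).trans
      (Nat.mul_le_mul_left _ (card_simple_le_mul_natCard_regular hc)))
  push_cast at h1 h2
  have hK' : (0 : ℝ) < K := by exact_mod_cast hK
  refine le_of_mul_le_mul_left (h1.trans ((mul_le_mul_of_nonneg_right h2 hη).trans
    (le_of_eq ?_))) hK'
  ring

lemma natCard_no_starDecomp_le {α c ε : ℝ} (hα : 0 < α) (hα1 : α < 1) (hk : 0 < k)
    (hks : 2 ≤ k * s) (hd : k * s + k + 2 ≤ d)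
    (h : ∀ p q z, 0 ≤ p → p ≤ 1 → 0 ≤ q → q ≤ 1 → z = α * p + (1 - α) * q → ε ≤ z →
      z ≤ 1 - ε →
      RateExceeds (α * binEntropy p + (1 - α) * binEntropy q + c)
        ((k * s : ℕ) * z + k * α * p) z (d / 2))
    (hε : (d : ℝ) ^ 2 * exp 3 * ε ≤ 1) (hε1 : ε < 1) {A : Finset V}
    (hA : (A.card : ℝ) = α * Fintype.card V)
    (hE : k * s * Fintype.card V + k * A.card = Fintype.card ι)
    (hc : 2 * Fintype.card ι = Fintype.card V * d) (hM : 4 * (d * (d + 1)) < Fintype.card ι) :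
    (Nat.card {G : SimpleGraph V // IsRegularGraph G d ∧
      ¬ HasStarDecomp G k fun v => if v ∈ A then s + 1 else s} : ℝ) ≤
      2 * (1 + 2 * (d * (d + 2))) ^ (4 * (d * (d + 2))) *
        (d ^ 4 * exp 3 / Fintype.card V +
          (Fintype.card V * d + 1) * (Fintype.card V + 1) ^ 2 * exp (-(Fintype.card V * c))) *
        Nat.card {G : SimpleGraph V // IsRegularGraph G d} := by
  classical
  have hpos : 0 < Fintype.card ι := by omega
  refine natCard_regular_le_of_card_configs_le hc hM
    (fun g G hG hD hg => (hg.exists_lt_innerCount hG hc hk hE hD).elim fun T hT =>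
      exists_small_or_medium (hg.mem_configs hG) hks hd hE hT ε) (by positivity) ?_
  rw [mul_add]
  refine le_trans ?_ (add_le_add (card_exists_small_le hε hε1 hc hpos)
    (card_exists_medium_le hα hα1 h A hA hc hpos))
  rw [Finset.filter_or]
  exact_mod_cast Finset.card_union_le _ _

lemma natCard_no_starDecomp_eq_zero (hk : 0 < k) (hd : d = 2 * (k * s))
    (hE : k * s * Fintype.card V = Fintype.card ι)
    (hc : 2 * Fintype.card ι = Fintype.card V * d) :
    Nat.card {G : SimpleGraph V // IsRegularGraph G d ∧
      ¬ HasStarDecomp G k fun v => if v ∈ (∅ : Finset V) then s + 1 else s} = 0 := by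
  have h := mul_natCard_regular_le (ι := ι) (V := V) (Q := fun _ => False) hc
    (P := fun G => ¬ HasStarDecomp G k fun v => if v ∈ (∅ : Finset V) then s + 1 else s)
    fun g G hG hD hg => by
      obtain ⟨T, hT⟩ := hg.exists_lt_innerCount hG hc hk (by simpa using hE) hD
      have := two_mul_innerCount_le (hg.mem_configs hG) T
      rw [hd, mul_assoc] at this
      omega
  rw [Finset.filter_false, Finset.card_empty, Nat.le_zero] at h
  exact (Nat.mul_eq_zero.1 h).resolve_left (by positivity)

lemma tendsto_error (C D E : ℝ) {c : ℝ} (hc : 0 < c) :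
    Filter.Tendsto (fun N : ℕ => C * (E / N + (N * D + 1) * (N + 1) ^ 2 * exp (-(N * c))))
      Filter.atTop (nhds 0) := by
  have hpow : ∀ n : ℕ, Filter.Tendsto (fun N : ℕ => (N : ℝ) ^ n * exp (-(N * c)))
      Filter.atTop (nhds 0) := fun n => by
    have := ((isLittleO_pow_exp_pos_mul_atTop (k := n) hc).tendsto_div_nhds_zero).comp
      (tendsto_natCast_atTop_atTop (R := ℝ))
    refine this.congr fun N => ?_
    simp [exp_neg, div_eq_mul_inv, mul_comm]
  have h := ((tendsto_const_div_atTop_nhds_zero_nat E).add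
    ((((hpow 3).const_mul D).add ((hpow 2).const_mul (2 * D + 1))).add
      (((hpow 1).const_mul (D + 2)).add (hpow 0)))).const_mul C
  simp only [mul_zero, add_zero] at h
  refine h.congr fun N => ?_
  ring

end Assembly

section Main

variable {V : Type*} [Finite V] {d : ℕ}

lemma natCard_regular_eq_add (P : SimpleGraph V → Prop) :
    Nat.card {G : SimpleGraph V // IsRegularGraph G d} =
      Nat.card {G : SimpleGraph V // IsRegularGraph G d ∧ P G} +
        Nat.card {G : SimpleGraph V // IsRegularGraph G d ∧ ¬ P G} := by
  classical
  rw [← Nat.card_sum]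
  refine Nat.card_congr ((Equiv.sumCompl fun G : {G : SimpleGraph V // IsRegularGraph G d} =>
    P G.1).symm.trans (Equiv.sumCongr ?_ ?_))
  · exact Equiv.subtypeSubtypeEquivSubtypeInter _ _
  · exact Equiv.subtypeSubtypeEquivSubtypeInter _ fun G => ¬ P G

end Main

theorem stmt_0 (d k : ℕ) (hk : 2 ≤ k) (hd : 2 * k + 2 < d) (δ : ℝ) (hδ : 0 < δ) :
    ∃ N₀ : ℕ, ∀ N : ℕ, N₀ ≤ N → 2 * k ∣ N * d →
      ∀ A : Finset (Fin N),
        (A.card : ℝ) = ((d : ℝ) / (2 * k) - (d / (2 * k) : ℕ)) * N →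
        (1 - δ) * (Nat.card {G : SimpleGraph (Fin N) // IsRegularGraph G d} : ℝ) ≤
          (Nat.card {G : SimpleGraph (Fin N) // IsRegularGraph G d ∧
            HasStarDecomp G k
              (fun v => if v ∈ A then d / (2 * k) + 1 else d / (2 * k))} : ℝ) := by
  suffices H : ∃ N₀ : ℕ, ∀ N : ℕ, N₀ ≤ N → 2 * k ∣ N * d → ∀ A : Finset (Fin N),
      (A.card : ℝ) = ((d : ℝ) / (2 * k) - (d / (2 * k) : ℕ)) * N →
      (Nat.card {G : SimpleGraph (Fin N) // IsRegularGraph G d ∧ ¬ HasStarDecomp G k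
        (fun v => if v ∈ A then d / (2 * k) + 1 else d / (2 * k))} : ℝ) ≤
      δ * Nat.card {G : SimpleGraph (Fin N) // IsRegularGraph G d} by
    obtain ⟨N₀, H⟩ := H
    refine ⟨N₀, fun N hN hdvd A hA => ?_⟩
    have h1 := H N hN hdvd A hA
    have h2 := natCard_regular_eq_add (d := d) fun G : SimpleGraph (Fin N) => HasStarDecomp G k
      (fun v => if v ∈ A then d / (2 * k) + 1 else d / (2 * k))
    have h3 := congrArg (Nat.cast (R := ℝ)) h2
    push_cast at h3
    linarith
  have hdr : 2 * k * (d / (2 * k)) + d % (2 * k) = d := Nat.div_add_mod d (2 * k)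
  have hrk : d % (2 * k) < 2 * k := Nat.mod_lt _ (by omega)
  have hs : 1 ≤ d / (2 * k) := (Nat.one_le_div_iff (by omega)).2 (by omega)
  generalize d / (2 * k) = s at *
  generalize d % (2 * k) = r at *
  have hdr' : (2 : ℝ) * k * s + r = d := by exact_mod_cast hdr
  have hk' : (0 : ℝ) < k := by exact_mod_cast (by omega : 0 < k)
  have hβ : (d : ℝ) / (2 * k) - s = r / (2 * k) := by
    rw [← hdr']; field_simp; ring
  simp only [hβ]
  have hE : ∀ {N M : ℕ} {A : Finset (Fin N)}, 2 * M = N * d → (A.card : ℝ) = r / (2 * k) * N →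
      k * s * N + k * A.card = M := by
    intro N M A hM hA
    have hM' : (2 : ℝ) * M = N * d := by exact_mod_cast hM
    have : (k : ℝ) * s * N + k * A.card = M := by
      have : (k : ℝ) * (r / (2 * k) * N) = r * N / 2 := by field_simp
      rw [hA, this]
      rw [← hdr'] at hM'
      linarith
    exact_mod_cast this
  have hhalf : ∀ {N : ℕ}, 2 * k ∣ N * d → ∃ M, 2 * M = N * d := fun h =>
    ((dvd_mul_right 2 k).trans h).imp fun _ h => h.symm
  rcases Nat.eq_zero_or_pos r with rfl | hr
  · refine ⟨0, fun N _ hdvd A hA => ?_⟩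
    obtain ⟨M, hM⟩ := hhalf hdvd
    have hA0 : A = ∅ := by simpa using hA
    have := hE hM hA
    subst hA0
    rw [natCard_no_starDecomp_eq_zero (ι := Fin M) (by omega) (by rw [← hdr]; ring)
      (by simpa using this) (by simpa using hM), Nat.cast_zero]
    positivity
  · have hα : (0 : ℝ) < r / (2 * k) := by positivity
    have hα1 : (r : ℝ) / (2 * k) < 1 := by
      rw [div_lt_one (by positivity)]; exact_mod_cast hrk
    have hks : 2 ≤ k * s := by nlinarith
    have hds : k * s + k + 2 ≤ d := by
      rcases hs.eq_or_lt with rfl | hs2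
      · omega
      · nlinarith
    have hd0 : (0 : ℝ) < d := by exact_mod_cast (by omega : 0 < d)
    obtain ⟨c, hc, hrate⟩ := exists_uniform_rate (a := k * s) (b := k * (r / (2 * k)))
      (D := k * s + r / 2) (ε := 1 / (d ^ 2 * exp 3)) (by positivity)
      fun p q z hp hp1 hq hq1 hz hz0 hz1 =>
        rateExceeds_of_remainder hk hs hr hrk (by rw [hdr]; exact hd) rfl hp hp1 hq hq1 hz hz0 hz1
    have hlim := tendsto_error (2 * (1 + 2 * (d * (d + 2))) ^ (4 * (d * (d + 2)))) d
      (d ^ 4 * exp 3) hc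
    obtain ⟨N₁, hN₁⟩ := Filter.eventually_atTop.1 (hlim.eventually_le_const hδ)
    refine ⟨max N₁ (8 * (d + 1) + 1), fun N hN hdvd A hA => ?_⟩
    obtain ⟨M, hM⟩ := hhalf hdvd
    refine (natCard_no_starDecomp_le (ι := Fin M) (V := Fin N) hα hα1 (by omega) hks hds
      (ε := 1 / (d ^ 2 * exp 3)) (c := c) ?_ ?_ ?_ (by simpa using hA)
      (by simpa using hE hM hA) (by simpa using hM) ?_).trans ?_
    · intro p q z hp hp1 hq hq1 hz hz0 hz1
      convert hrate p q z hp hp1 hq hq1 hz hz0 hz1 using 1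
      · push_cast; ring
      · rw [← hdr']; ring
    · rw [mul_one_div_cancel (by positivity)]
    · rw [div_lt_one (by positivity)]
      have : (1 : ℝ) < d := by exact_mod_cast (by omega : 1 < d)
      have := one_lt_exp_iff.2 (by norm_num : (0 : ℝ) < 3)
      nlinarith
    · have := (le_max_right _ _).trans hN
      rw [Fintype.card_fin]
      nlinarith
    · rw [Fintype.card_fin]
      exact mul_le_mul_of_nonneg_right (hN₁ N ((le_max_left _ _).trans hN)) (Nat.cast_nonneg _)
end

section
/- Let d and k be positive integers with 2k ∣ d. Then every finite d-regular simple graph G admits a k-star decomposition in which exactly d/(2k) stars are centered at each vertex of G. -/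
/-- If `G` has maximum degree at most `2 * m`, then the edges of any finite set are at most `m` times
as many as their endpoints. -/
theorem card_edges_le_mul_card_endpoints {V : Type*} [Fintype V] [DecidableEq V]
    (G : SimpleGraph V) [DecidableRel G.Adj] (m : ℕ) (hG : ∀ v, G.degree v ≤ 2 * m)
    (F : Finset G.edgeSet) :
    F.card ≤ (F.biUnion fun e => Finset.univ.filter (· ∈ (e : Sym2 V))).card * m := by
  have h := Finset.card_mul_le_card_mul (s := F)
    (t := F.biUnion fun e => Finset.univ.filter (· ∈ (e : Sym2 V)))
    (fun (e : G.edgeSet) v => v ∈ (e : Sym2 V)) (m := 2) (n := 2 * m) ?_ ?_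
  · nlinarith
  · rintro ⟨e, he⟩ heF
    induction e with | _ a b
    rw [← Finset.card_pair (SimpleGraph.ne_of_adj G he)]
    refine Finset.card_le_card fun v hv => ?_
    have hv' : v ∈ s(a, b) := by simpa using hv
    simp only [Finset.mem_bipartiteAbove, Finset.mem_biUnion, Finset.mem_filter]
    exact ⟨⟨_, heF, Finset.mem_univ _, hv'⟩, hv'⟩
  · intro v _
    refine le_trans ?_ (hG v)
    rw [← G.card_incidenceFinset_eq_degree v]
    refine Finset.card_le_card_of_injOn (fun e => (e : Sym2 V)) ?_
      Subtype.val_injective.injOn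
    intro e he
    have he' := ((Finset.mem_bipartiteBelow _).1 he).2
    simpa [SimpleGraph.mem_incidenceFinset, SimpleGraph.incidenceSet] using he'

/-- The edges of a `2 * m`-regular graph can be matched with `m` slots at each vertex, so that each
edge is matched with a slot at one of its endpoints. -/
theorem exists_slot_equiv_edgeSet {V : Type*} [Fintype V] [DecidableEq V]
    (G : SimpleGraph V) [DecidableRel G.Adj] (m : ℕ) (hG : G.IsRegularOfDegree (2 * m))
    (ι : Type*) [Fintype ι] (hι : Fintype.card ι = m) :
    ∃ f : V × ι ≃ G.edgeSet, ∀ p, p.1 ∈ (f p : Sym2 V) := by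
  classical
  obtain ⟨g, hg, hgmem⟩ := (Finset.all_card_le_biUnion_card_iff_exists_injective
    (fun e : G.edgeSet =>
      Finset.univ.filter (· ∈ (e : Sym2 V)) ×ˢ (Finset.univ : Finset ι))).1 (by
    intro F
    have hF := card_edges_le_mul_card_endpoints G m (fun v => (hG v).le) F
    rw [← hι, ← Finset.card_univ, ← Finset.card_product] at hF
    refine hF.trans (Finset.card_le_card fun p hp => ?_)
    simpa using hp)
  have hcard : Fintype.card G.edgeSet = Fintype.card (V × ι) := by
    have h := G.sum_degrees_eq_twice_card_edges
    simp only [hG.degree_eq, Finset.sum_const, Finset.card_univ, smul_eq_mul] at h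
    rw [Fintype.card_prod, hι, ← SimpleGraph.edgeFinset_card]
    nlinarith
  have hbij := (Fintype.bijective_iff_injective_and_card g).2 ⟨hg, hcard⟩
  refine ⟨(Equiv.ofBijective g hbij).symm, fun p => ?_⟩
  obtain ⟨e, rfl⟩ := hbij.2 p
  have he := hgmem e
  rw [Equiv.ofBijective_symm_apply_apply]
  simpa using he

theorem stmt_2 {V : Type*} [Fintype V] [DecidableEq V] (d k : ℕ) (hk : 0 < k)
    (hd : 0 < d) (hdvd : 2 * k ∣ d) (G : SimpleGraph V) (hreg : IsRegularGraph G d) :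
    HasStarDecomp G k (fun _ => d / (2 * k)) := by
  classical
  obtain ⟨q, rfl⟩ := hdvd
  rw [Nat.mul_div_cancel_left q (by omega)]
  have hG : G.IsRegularOfDegree (2 * (q * k)) := fun v => by
    rw [← G.card_neighborSet_eq_degree, ← Nat.card_eq_fintype_card, Nat.card_coe_set_eq, hreg v]
    ring
  obtain ⟨f, hf⟩ := exists_slot_equiv_edgeSet G (q * k) hG (Fin q × Fin k) (by simp)
  let star : V × Fin q → V × Finset (Sym2 V) := fun c =>
    (c.1, Finset.univ.image fun j => (f (c.1, c.2, j) : Sym2 V))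
  have mem_star (p : V × Fin q × Fin k) (c : V × Fin q) :
      (f p : Sym2 V) ∈ (star c).2 ↔ c = (p.1, p.2.1) := by
    obtain ⟨v, i, j⟩ := p
    obtain ⟨w, l⟩ := c
    simp only [star, Finset.mem_image, Finset.mem_univ, true_and, Subtype.val_inj,
      EmbeddingLike.apply_eq_iff_eq, Prod.mk.injEq]
    grind
  have star_inj : Function.Injective star := fun c c' h => by
    have hc := (mem_star (c.1, c.2, ⟨0, hk⟩) c).2 rfl
    rw [h, mem_star] at hc
    exact hc.symm
  refine ⟨Finset.univ.image star, ?_, ?_, fun v => ?_⟩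
  · intro p hp
    obtain ⟨c, -, rfl⟩ := Finset.mem_image.1 hp
    refine ⟨?_, ?_, ?_⟩
    · rw [Finset.card_image_of_injective, Finset.card_univ, Fintype.card_fin]
      intro j j' h
      simpa using f.injective (Subtype.val_injective h)
    · intro e he
      obtain ⟨j, -, rfl⟩ := Finset.mem_image.1 (Finset.mem_coe.1 he)
      exact (f _).2
    · intro e he
      obtain ⟨j, -, rfl⟩ := Finset.mem_image.1 he
      exact hf _
  · intro e he
    obtain ⟨p, hp⟩ := f.surjective ⟨e, he⟩
    obtain rfl : (f p : Sym2 V) = e := by rw [hp]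
    refine ⟨star (p.1, p.2.1), ⟨Finset.mem_image_of_mem _ (Finset.mem_univ _),
      (mem_star _ _).2 rfl⟩, ?_⟩
    rintro _ ⟨hs, hps⟩
    obtain ⟨c, -, rfl⟩ := Finset.mem_image.1 hs
    rw [(mem_star _ _).1 hps]
  · rw [Finset.filter_image, Finset.card_image_of_injective _ star_inj]
    have h : (Finset.univ.filter fun c : V × Fin q => (star c).1 = v) =
        {v} ×ˢ Finset.univ := by
      ext ⟨w, i⟩
      simp [star, eq_comm]
    rw [h, Finset.card_product, Finset.card_singleton, Finset.card_univ, Fintype.card_fin, one_mul]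
end

section
/- For every integer d ≥ 3 and every real number d̂ > 2 there exists ε > 0 such that the following holds: the proportion of perfect matchings M of the set {1,…,N}×{1,…,d} for which there exists a nonempty subset U ⊆ {1,…,N} with |U| ≤ ε·N such that the number of matched pairs of M both of whose elements have first coordinate in U is at least (d̂/2)·|U|, tends to 0 as N → ∞ along integers N with N·d even. -/
/-- `P` is a perfect matching of `α`: a set of non-diagonal unordered pairs such that
every element of `α` belongs to exactly one pair. -/
def IsPerfectMatching {α : Type*} (P : Set (Sym2 α)) : Prop :=
  (∀ e ∈ P, ¬ e.IsDiag) ∧ ∀ x : α, ∃! e, e ∈ P ∧ x ∈ e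

/-- The number of pairs of the matching `P` both of whose elements have first
coordinate in `U`. -/
noncomputable def pairsIn {α β : Type*} (P : Set (Sym2 (α × β))) (U : Set α) : ℕ :=
  {e ∈ P | ∀ x ∈ e, x.1 ∈ U}.ncard

open Finset Filter Topology

/-- The perfect matchings of `α` that contain all the pairs in `F`. -/
def matchingsContaining {α : Type*} (F : Finset (Sym2 α)) : Set (Set (Sym2 α)) :=
  {P | IsPerfectMatching P ∧ ↑F ⊆ P}

theorem IsPerfectMatching.image {α : Type*} {P : Set (Sym2 α)} (hP : IsPerfectMatching P)
    (σ : Equiv.Perm α) : IsPerfectMatching (Sym2.map σ '' P) := by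
  refine ⟨?_, fun x => ?_⟩
  · rintro _ ⟨e, he, rfl⟩ h
    exact hP.1 e he ((Sym2.isDiag_map σ.injective).1 h)
  · obtain ⟨e, ⟨he, hx⟩, huniq⟩ := hP.2 (σ.symm x)
    refine ⟨Sym2.map σ e, ⟨⟨e, he, rfl⟩, ?_⟩, ?_⟩
    · exact Sym2.mem_map.2 ⟨_, hx, by simp⟩
    · rintro _ ⟨⟨e', he', rfl⟩, hx'⟩
      obtain ⟨y, hy, hyx⟩ := Sym2.mem_map.1 hx'
      rw [huniq e' ⟨he', by rw [← hyx]; simpa using hy⟩]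

theorem IsPerfectMatching.eq_of_mem {α : Type*} {P : Set (Sym2 α)} (hP : IsPerfectMatching P)
    {x : α} {e e' : Sym2 α} (he : e ∈ P) (he' : e' ∈ P) (hx : x ∈ e) (hx' : x ∈ e') : e = e' :=
  (hP.2 x).unique ⟨he, hx⟩ ⟨he', hx'⟩

/-- Exchanging the partner `y` of `x` for another point `z` outside the prescribed pairs
embeds the matchings containing `s(x, y)` into those containing `s(x, z)`. -/
theorem ncard_matchingsContaining_insert_le {α : Type*} [Fintype α] [DecidableEq α]
    (F : Finset (Sym2 α)) {x y z : α} (hxy : x ≠ y) (hxz : x ≠ z)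
    (hy : ∀ e ∈ F, y ∉ e) (hz : ∀ e ∈ F, z ∉ e) :
    (matchingsContaining (insert s(x, y) F)).ncard ≤
      (matchingsContaining (insert s(x, z) F)).ncard := by
  refine Set.ncard_le_ncard_of_injOn (fun P => Sym2.map (Equiv.swap y z) '' P) ?_ ?_
    (Set.toFinite _)
  · rintro P ⟨hP, hF⟩
    refine ⟨hP.image _, fun e he => ?_⟩
    rcases Finset.mem_insert.1 (Finset.mem_coe.1 he) with rfl | heF
    · exact ⟨s(x, y), hF (by simp), by
        simp [Sym2.map_mk, Equiv.swap_apply_of_ne_of_ne hxy hxz]⟩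
    · refine ⟨e, hF (by simp [heF]), ?_⟩
      refine (Sym2.map_congr (g := id) fun w hw => ?_).trans (by simp)
      refine Equiv.swap_apply_of_ne_of_ne ?_ ?_
      · rintro rfl; exact hy e heF hw
      · rintro rfl; exact hz e heF hw
  · exact (Set.image_injective.2 (Sym2.map.injective (Equiv.injective _))).injOn

/-- The number of perfect matchings containing `k` prescribed pairs is at most a `D ^ k`-th of all
perfect matchings as long as `D` points remain outside the prescribed pairs. -/
theorem ncard_matchingsContaining_mul_pow_le {α : Type*} [Fintype α] [DecidableEq α] (D : ℕ)
    (F : Finset (Sym2 α)) (hD : D + 2 * F.card ≤ Fintype.card α) :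
    (matchingsContaining F).ncard * D ^ F.card ≤
      (matchingsContaining (∅ : Finset (Sym2 α))).ncard := by
  induction F using Finset.induction_on with
  | empty => simp
  | insert e F he ih =>
    rw [Finset.card_insert_of_notMem he] at hD ⊢
    refine le_trans ?_ (ih (by omega))
    rw [pow_succ', ← mul_assoc]
    refine Nat.mul_le_mul_right _ ?_
    rcases (matchingsContaining (insert e F)).eq_empty_or_nonempty with h0 | ⟨P, hP, hFP⟩
    · simp [h0]
    induction e using Sym2.ind with | _ x y =>
    have hxyP : s(x, y) ∈ P := hFP (by simp)
    have hxy : x ≠ y := fun h => hP.1 _ hxyP (by simpa using h)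
    have hout : ∀ w ∈ s(x, y), ∀ e ∈ F, w ∉ e := fun w hw e' he' hwe =>
      he (hP.eq_of_mem hxyP (hFP (by simp [he'])) hw hwe ▸ he')
    let V : Finset α := insert x (F.biUnion fun e => univ.filter (· ∈ e))
    have hV : V.card ≤ 2 * F.card + 1 := by
      refine (Finset.card_insert_le _ _).trans (Nat.add_le_add_right ?_ 1)
      rw [mul_comm]
      refine Finset.card_biUnion_le_card_mul _ _ _ fun e _ => ?_
      induction e using Sym2.ind with | _ a b =>
      refine (Finset.card_le_card (t := {a, b}) fun w hw => ?_).trans Finset.card_le_two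
      simpa using hw
    have hY : D ≤ (Vᶜ).card := by rw [Finset.card_compl]; omega
    calc (matchingsContaining (insert s(x, y) F)).ncard * D
        ≤ ∑ _z ∈ Vᶜ, (matchingsContaining (insert s(x, y) F)).ncard := by
          rw [Finset.sum_const, smul_eq_mul, mul_comm]; gcongr
      _ ≤ ∑ z ∈ Vᶜ, (matchingsContaining (insert s(x, z) F)).ncard := by
          refine Finset.sum_le_sum fun z hz => ?_
          simp only [V, Finset.mem_compl, Finset.mem_insert, Finset.mem_biUnion,
            Finset.mem_filter, Finset.mem_univ, true_and, not_or, not_exists, not_and] at hz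
          exact ncard_matchingsContaining_insert_le F hxy (Ne.symm hz.1)
            (hout y (by simp)) hz.2
      _ = (⋃ z ∈ Vᶜ, matchingsContaining (insert s(x, z) F)).ncard := by
          rw [← finsum_mem_coe_finset]
          refine ((Finset.finite_toSet Vᶜ).ncard_biUnion (fun _ _ => Set.toFinite _) ?_).symm
          refine fun z _ z' _ hzz' => Set.disjoint_left.2 fun Q hQ hQ' => hzz' ?_
          have hmem : s(x, z) ∈ Q := hQ.2 (by simp)
          have hmem' : s(x, z') ∈ Q := hQ'.2 (by simp)
          exact Sym2.congr_right.1 (hQ.1.eq_of_mem hmem hmem' (Sym2.mem_mk_left x z)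
            (Sym2.mem_mk_left x z'))
      _ ≤ (matchingsContaining F).ncard := by
          refine Set.ncard_le_ncard ?_ (Set.toFinite _)
          refine Set.iUnion₂_subset fun z _ Q hQ => ⟨hQ.1, fun e he => hQ.2 (by simp_all)⟩

theorem card_sym2_le_sq {α : Type*} [DecidableEq α] (s : Finset α) :
    s.sym2.card ≤ s.card ^ 2 := by
  rw [Finset.card_sym2, Nat.choose_two_right]
  rcases Nat.eq_zero_or_pos s.card with h | h
  · simp [h]
  · refine Nat.div_le_of_le_mul ?_
    simp only [Nat.add_sub_cancel]
    nlinarith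

theorem choose_le_exp_mul_div_pow (n k : ℕ) :
    (n.choose k : ℝ) ≤ (Real.exp 1 * n / k) ^ k := by
  rcases Nat.eq_zero_or_pos k with rfl | hk
  · simp
  have hk' : (0 : ℝ) < k := by exact_mod_cast hk
  have h1 := Nat.choose_le_pow_div (α := ℝ) k n
  have h2 := Real.pow_div_factorial_le_exp (k : ℝ) hk'.le k
  have hf : (0 : ℝ) < k.factorial := by exact_mod_cast Nat.factorial_pos k
  refine h1.trans ?_
  rw [div_pow, mul_pow, ← Real.exp_nat_mul, mul_one]
  rw [div_le_iff₀ hf] at h2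
  rw [div_le_div_iff₀ hf (by positivity)]
  nlinarith [pow_nonneg (Nat.cast_nonneg (α := ℝ) n) k]

/-- Union bound for the matchings in which some `U` with `u` elements spans at least `k` pairs. -/
theorem ncard_dense_mul_pow_le (N d u k : ℕ) (hd : 3 ≤ d) (hk : k ≤ N) :
    {P : Set (Sym2 (Fin N × Fin d)) | IsPerfectMatching P ∧
      ∃ U : Finset (Fin N), U.card = u ∧ k ≤ pairsIn P ↑U}.ncard * N ^ k ≤
    N.choose u * ((u * d) ^ 2).choose k *
      {P : Set (Sym2 (Fin N × Fin d)) | IsPerfectMatching P}.ncard := by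
  classical
  let I : Finset (Σ _ : Finset (Fin N), Finset (Sym2 (Fin N × Fin d))) :=
    (powersetCard u univ).sigma fun U => powersetCard k (U ×ˢ univ).sym2
  have hI : I.card ≤ N.choose u * ((u * d) ^ 2).choose k := by
    rw [Finset.card_sigma]
    refine (Finset.sum_le_card_nsmul _ _ (((u * d) ^ 2).choose k) fun U hU => ?_).trans ?_
    · rw [Finset.card_powersetCard]
      refine Nat.choose_le_choose _ ((card_sym2_le_sq _).trans ?_)
      simp [(Finset.mem_powersetCard.1 hU).2]
    · simp
  have hsub : {P : Set (Sym2 (Fin N × Fin d)) | IsPerfectMatching P ∧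
      ∃ U : Finset (Fin N), U.card = u ∧ k ≤ pairsIn P ↑U} ⊆
      ⋃ i ∈ I, matchingsContaining i.2 := by
    rintro P ⟨hP, U, hU, hkU⟩
    obtain ⟨F, hF, hFk⟩ := Set.exists_subset_card_eq hkU
    have hfin : F.Finite := Set.toFinite F
    refine Set.mem_iUnion₂.2 ⟨⟨U, hfin.toFinset⟩, ?_, hP, ?_⟩
    · simp only [I, Finset.mem_sigma, Finset.mem_powersetCard, Finset.subset_univ, true_and]
      refine ⟨hU, fun e he => ?_, ?_⟩
      · rw [Finset.mem_sym2_iff]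
        intro x hx
        simpa using (hF (hfin.mem_toFinset.1 he)).2 x hx
      · rw [← Set.ncard_eq_toFinset_card _ hfin, hFk]
    · intro e he
      exact (hF (by simpa using he)).1
  have hall : {P : Set (Sym2 (Fin N × Fin d)) | IsPerfectMatching P} =
      matchingsContaining (∅ : Finset (Sym2 (Fin N × Fin d))) := by
    simp [matchingsContaining]
  calc _ ≤ (∑ i ∈ I, (matchingsContaining i.2).ncard) * N ^ k := by
        gcongr
        exact (Set.ncard_le_ncard hsub (Set.toFinite _)).trans (Finset.set_ncard_biUnion_le _ _)
    _ = ∑ i ∈ I, (matchingsContaining i.2).ncard * N ^ k := Finset.sum_mul _ _ _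
    _ ≤ I.card • {P : Set (Sym2 (Fin N × Fin d)) | IsPerfectMatching P}.ncard := by
        refine Finset.sum_le_card_nsmul _ _ _ fun i hi => ?_
        have hc : i.2.card = k :=
          (Finset.mem_powersetCard.1 (Finset.mem_sigma.1 hi).2).2
        have := ncard_matchingsContaining_mul_pow_le N i.2 (by
          rw [hc, Fintype.card_prod, Fintype.card_fin, Fintype.card_fin]; nlinarith)
        rwa [hc, ← hall] at this
    _ ≤ _ := by rw [smul_eq_mul]; gcongr

/-- The union bound over sets of size `u` is at most
`(e B (B u / N) ^ a) ^ u`, where `B = e d²`, as soon as `k ≥ (1 + a) u`. -/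
theorem choose_mul_choose_div_pow_le {N d u k : ℕ} {a : ℝ} (hN : 0 < N) (hu : 0 < u)
    (hk : (1 + a) * u ≤ k) (ha : 0 < a)
    (hr : Real.exp 1 * d ^ 2 * u / N ≤ 1) (hd : 0 < d) :
    (N.choose u * ((u * d) ^ 2).choose k : ℝ) / N ^ k ≤
      (Real.exp 1 * (Real.exp 1 * d ^ 2) *
        (Real.exp 1 * d ^ 2 * u / N) ^ a) ^ u := by
  have hN' : (0 : ℝ) < N := by exact_mod_cast hN
  have hu' : (0 : ℝ) < u := by exact_mod_cast hu
  have hd' : (0 : ℝ) < d := by exact_mod_cast hd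
  have huk' : (u : ℝ) ≤ k := by nlinarith
  have huk : u ≤ k := by exact_mod_cast huk'
  have hk' : (0 : ℝ) < k := hu'.trans_le huk'
  have he := Real.exp_pos 1
  set r : ℝ := Real.exp 1 * d ^ 2 * u / N with hrdef
  have hr0 : 0 < r := by positivity
  have h2 : (((u * d) ^ 2).choose k : ℝ) ≤ (Real.exp 1 * d ^ 2 * u) ^ k := by
    refine (choose_le_exp_mul_div_pow _ _).trans (pow_le_pow_left₀ (by positivity) ?_ _)
    rw [div_le_iff₀ hk']
    push_cast
    calc Real.exp 1 * (u * d : ℝ) ^ 2 = Real.exp 1 * d ^ 2 * u * u := by ring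
      _ ≤ _ := by gcongr
  have h3 : r ^ (k - u) ≤ (r ^ a) ^ u := by
    rw [← Real.rpow_natCast r (k - u), ← Real.rpow_mul_natCast hr0.le]
    refine Real.rpow_le_rpow_of_exponent_ge hr0 hr ?_
    rw [Nat.cast_sub huk]; linarith
  calc (N.choose u * ((u * d) ^ 2).choose k : ℝ) / N ^ k
      ≤ (Real.exp 1 * N / u) ^ u * (Real.exp 1 * d ^ 2 * u) ^ k / N ^ k := by
        gcongr
        exact choose_le_exp_mul_div_pow _ _
    _ = (Real.exp 1 * N / u) ^ u * (r ^ u * r ^ (k - u)) := by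
        rw [← pow_add, Nat.add_sub_cancel' huk, hrdef, div_pow _ _ k, mul_div_assoc]
    _ = (Real.exp 1 * (Real.exp 1 * d ^ 2)) ^ u * r ^ (k - u) := by
        rw [← mul_assoc, ← mul_pow]
        congr 2
        rw [hrdef]; field_simp
    _ ≤ _ := by rw [mul_pow _ (r ^ a)]; gcongr

theorem stmt_8 (d : ℕ) (hd : 3 ≤ d) (dhat : ℝ) (hdhat : 2 < dhat) :
    ∃ ε : ℝ, 0 < ε ∧ ∀ δ : ℝ, 0 < δ → ∃ N₀ : ℕ, ∀ N : ℕ, N₀ ≤ N → Even (N * d) →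
      (Nat.card {P : Set (Sym2 (Fin N × Fin d)) // IsPerfectMatching P ∧
          ∃ U : Finset (Fin N), U.Nonempty ∧ (U.card : ℝ) ≤ ε * N ∧
            (dhat / 2) * U.card ≤ (pairsIn P ↑U : ℝ)} : ℝ) /
        (Nat.card {P : Set (Sym2 (Fin N × Fin d)) // IsPerfectMatching P} : ℝ) < δ := by
  obtain ⟨a, ha, rfl⟩ : ∃ a : ℝ, 0 < a ∧ dhat = 2 * (1 + a) :=
    ⟨dhat / 2 - 1, by linarith, by ring⟩
  have hd0 : (0 : ℝ) < d := by exact_mod_cast (by omega : 0 < d)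
  have he := Real.exp_pos 1
  set B : ℝ := Real.exp 1 * d ^ 2 with hB
  have hB0 : 0 < B := by positivity
  obtain ⟨ε, hε, hεB, hεk, hεh⟩ : ∃ ε : ℝ, 0 < ε ∧ B * ε ≤ 1 ∧ (2 + a) * ε ≤ 1 ∧
      Real.exp 1 * B * (B * ε) ^ a ≤ 1 / 2 := by
    have h1 : Tendsto (fun ε : ℝ => B * ε) (𝓝[>] 0) (𝓝 0) := by
      simpa using ((continuous_const_mul B).tendsto 0).mono_left nhdsWithin_le_nhds
    have h2 : Tendsto (fun ε : ℝ => (2 + a) * ε) (𝓝[>] 0) (𝓝 0) := by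
      simpa using ((continuous_const_mul (2 + a)).tendsto 0).mono_left nhdsWithin_le_nhds
    have h3 : Tendsto (fun ε : ℝ => Real.exp 1 * B * (B * ε) ^ a) (𝓝[>] 0) (𝓝 0) := by
      simpa [Real.zero_rpow ha.ne'] using
        (h1.rpow_const (p := a) (Or.inr ha.le)).const_mul (Real.exp 1 * B)
    obtain ⟨ε, ⟨⟨h1, h2⟩, h3⟩, h4⟩ := (((h1.eventually (ge_mem_nhds one_pos)).and
      (h2.eventually (ge_mem_nhds one_pos))).and
      (h3.eventually (ge_mem_nhds one_half_pos))).and self_mem_nhdsWithin |>.exists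
    exact ⟨ε, h4, h1, h2, h3⟩
  refine ⟨ε, hε, fun δ hδ => ?_⟩
  let f : ℕ → ℕ → ℝ := fun N u =>
    if 1 ≤ u ∧ (u : ℝ) ≤ ε * N then (Real.exp 1 * B * (B * u / N) ^ a) ^ u else 0
  have hf0 : ∀ N u, 0 ≤ f N u := fun N u => by
    simp only [f]; split_ifs <;> positivity
  have hfb : ∀ N u, f N u ≤ (1 / 2) ^ u := fun N u => by
    simp only [f]
    split_ifs with h
    · have hN : (0 : ℝ) < N := by
        have : (1 : ℝ) ≤ u := by exact_mod_cast h.1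
        by_contra! hn
        nlinarith
      refine pow_le_pow_left₀ (by positivity) (le_trans ?_ hεh) _
      gcongr
      rw [mul_div_assoc]
      gcongr
      rw [div_le_iff₀ hN]; exact h.2
    · positivity
  have hsum : Summable fun u : ℕ => ((1 : ℝ) / 2) ^ u :=
    summable_geometric_of_lt_one (by norm_num) (by norm_num)
  have hlim : Tendsto (fun N => ∑' u, f N u) atTop (𝓝 0) := by
    have := tendsto_tsum_of_dominated_convergence (f := f) (g := fun _ => (0 : ℝ))
      (𝓕 := atTop) hsum (fun u => ?_) (Eventually.of_forall fun N u => by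
        rw [Real.norm_of_nonneg (hf0 N u)]; exact hfb N u)
    · simpa using this
    · rcases Nat.eq_zero_or_pos u with rfl | hu
      · simp [f]
      have h1 : Tendsto (fun N : ℕ => (Real.exp 1 * B * (B * u / N) ^ a) ^ u) atTop (𝓝 0) := by
        have h := (((tendsto_const_div_atTop_nhds_zero_nat (B * u)).rpow_const
          (p := a) (Or.inr ha.le)).const_mul (Real.exp 1 * B)).pow u
        simpa [Real.zero_rpow ha.ne', hu.ne'] using h
      refine squeeze_zero (fun N => hf0 N u) (fun N => ?_) h1
      simp only [f]
      split_ifs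
      · exact le_rfl
      · positivity
  obtain ⟨N₀, hN₀⟩ := eventually_atTop.1 (hlim.eventually (gt_mem_nhds hδ))
  refine ⟨N₀, fun N hN _ => ?_⟩
  refine lt_of_le_of_lt ?_ (hN₀ N hN)
  refine div_le_of_le_mul₀ (Nat.cast_nonneg _) (tsum_nonneg (hf0 N)) ?_
  change (({P : Set (Sym2 (Fin N × Fin d)) | IsPerfectMatching P ∧
          ∃ U : Finset (Fin N), U.Nonempty ∧ (U.card : ℝ) ≤ ε * N ∧
            (2 * (1 + a) / 2) * U.card ≤ (pairsIn P ↑U : ℝ)}.ncard : ℕ) : ℝ) ≤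
      _ * (({P : Set (Sym2 (Fin N × Fin d)) | IsPerfectMatching P}.ncard : ℕ) : ℝ)
  let k : ℕ → ℕ := fun u => ⌈(1 + a) * u⌉₊
  let J : Finset ℕ := (range (N + 1)).filter fun u => 1 ≤ u ∧ (u : ℝ) ≤ ε * N
  let E : ℕ → Set (Set (Sym2 (Fin N × Fin d))) := fun u =>
    {P | IsPerfectMatching P ∧ ∃ U : Finset (Fin N), U.card = u ∧ k u ≤ pairsIn P ↑U}
  have hsub : {P : Set (Sym2 (Fin N × Fin d)) | IsPerfectMatching P ∧
          ∃ U : Finset (Fin N), U.Nonempty ∧ (U.card : ℝ) ≤ ε * N ∧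
            (2 * (1 + a) / 2) * U.card ≤ (pairsIn P ↑U : ℝ)} ⊆ ⋃ u ∈ J, E u := by
    rintro P ⟨hP, U, hU, hUε, hUd⟩
    refine Set.mem_iUnion₂.2 ⟨U.card, ?_, hP, U, rfl, ?_⟩
    · simp only [J, Finset.mem_filter, Finset.mem_range, Nat.lt_succ_iff]
      exact ⟨by simpa using U.card_le_univ, hU.card_pos, hUε⟩
    · refine Nat.ceil_le.2 (le_trans (le_of_eq ?_) hUd)
      ring
  have hE : ∀ u ∈ J, ((E u).ncard : ℝ) ≤
      f N u * ({P : Set (Sym2 (Fin N × Fin d)) | IsPerfectMatching P}.ncard : ℝ) := by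
    intro u hu
    obtain ⟨-, hu1, huε⟩ := Finset.mem_filter.1 hu
    have hu1' : (1 : ℝ) ≤ u := by exact_mod_cast hu1
    have hN' : (0 : ℝ) < N := by
      by_contra! hn
      nlinarith
    have hkN : k u ≤ N := by
      have h1 : (k u : ℝ) < (1 + a) * u + 1 := Nat.ceil_lt_add_one (by positivity)
      have h2 : (2 + a) * u ≤ (2 + a) * (ε * N) := by gcongr
      have h3 : (2 + a) * ε * N ≤ 1 * N := by gcongr
      have : (k u : ℝ) ≤ N := by nlinarith
      exact_mod_cast this
    have hr : B * u / N ≤ 1 := by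
      rw [div_le_one hN']
      calc B * u ≤ B * (ε * N) := by gcongr
        _ = B * ε * N := by ring
        _ ≤ 1 * N := by gcongr
        _ = N := one_mul _
    have h1 : ((E u).ncard : ℝ) * N ^ k u ≤ N.choose u * ((u * d) ^ 2).choose (k u) *
        ({P : Set (Sym2 (Fin N × Fin d)) | IsPerfectMatching P}.ncard : ℝ) := by
      exact_mod_cast ncard_dense_mul_pow_le N d u (k u) hd hkN
    have h2 := choose_mul_choose_div_pow_le (N := N) (d := d) (by exact_mod_cast hN') hu1
      (Nat.le_ceil ((1 + a) * (u : ℝ))) ha hr (by omega)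
    have hfu : f N u = (Real.exp 1 * B * (B * u / N) ^ a) ^ u := if_pos ⟨hu1, huε⟩
    rw [hfu]
    rw [← le_div_iff₀ (by positivity), mul_div_right_comm] at h1
    exact h1.trans (by gcongr)
  calc _ ≤ ((∑ u ∈ J, (E u).ncard : ℕ) : ℝ) := by
        exact_mod_cast (Set.ncard_le_ncard hsub (Set.toFinite _)).trans
          (Finset.set_ncard_biUnion_le _ _)
    _ ≤ ∑ u ∈ J, f N u *
        ({P : Set (Sym2 (Fin N × Fin d)) | IsPerfectMatching P}.ncard : ℝ) := by
        push_cast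
        exact Finset.sum_le_sum hE
    _ ≤ _ := by
        rw [← Finset.sum_mul]
        gcongr
        exact (Summable.of_nonneg_of_le (hf0 N) (hfb N) hsum).sum_le_tsum _ fun u _ => hf0 N u
end
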